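/- Let r, s be integers with r−1 ≤ s ≤ 2r−4 and let S ⊂ P^r be an irreducible, reduced, nondegenerate projective surface of degree s with general hyperplane section Σ. For each integer i set μ_i := Δh_S(i) − h_Σ(i). Then p_a(S) = −dim_ℂ M(Σ) + ∑_{i=1}^{∞} μ_i, where M(Σ) = ⊕_{i∈ℤ} H¹(P^{r−1}, I_Σ(i)) is the Hartshorne–Rao module of Σ. -/

import Mathlib

/-!
Let `I` be the prime ideal of the surface, `L` a general linear form and `J = sect I L` the ideal of
the curve `Σ`, and let `M`, `N` be two further general linear forms.  The Hilbert polynomial of `Σ`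
is `s t + 1 - π`, so summing `Δh_S(i) - h_Σ(i)` over `1 ≤ i ≤ T` for large `T` gives
`p_a + ∑ (s i + 1 - π - h_Σ(i))`.  The formula therefore says that `h¹(I_Σ(i))` is
`s i + 1 - π - h_Σ(i)` for `i ≥ 1` and `0` for `i ≤ 0`, that is: `h⁰(𝒪_Σ(i)) = s i + 1 - π` for
`i ≥ 1`, `h⁰(𝒪_Σ) = 1`, and `h⁰(𝒪_Σ(i)) = 0` for `i < 0` (`genus_of_good`).

Cohomology is avoided by regarding `R / J` as a graded lattice over `ℂ[M, N]` (`YLat`), which is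
torsion free for general `L` (`torsFree_sect`).  A twisted section is a vector over `ℂ[M, N]` that
lies in the lattice after multiplication by a power of `M` and after multiplication by a power of
`N` (`Glob`), and these vectors compute the graded homomorphisms `𝔪^k → R / J`
(`h0Nat_eq_finrank_Glob`).

* Vanishing in nonpositive degrees.  `Σ` is reduced because `V(L, M)` is (`Good.rad`), and a section
  of degree `0` is integral over `ℂ`, so that it is constant as soon as idempotents are
  (`Good.zero`).  An idempotent on `Σ` lifts to all infinitesimal neighbourhoods of `Σ` in the
  surface; a degree bound on its coordinates turns a sufficiently precise lift into an idempotent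
  in the function field of the surface, which is `0` or `1` (`Good.idem`).
* Positive degrees.  If every function on the finite scheme `V(I, L, M)` is induced by a quadric
  (`Quad`), the sections of degree `t + 3`, `t ≥ 0`, are combinations of `M` and `N` with
  coefficients of degree `t + 2`.  The syzygies of `M` and `N` are the trivial ones, so
  `h⁰(𝒪_Σ(t))` is linear in `t ≥ 1` (`Glob.recur`) and agrees there with the Hilbert polynomial.

It remains to prove `Quad` for general forms (`good_quad`).  With `A = R / I`, let `Ω` be the
fraction field of `A[U]` for a `3 × (r + 1)` matrix `U` of indeterminates, and `K` the subfield
generated over `ℂ` by the entries `Uᵢⱼ` and the three forms `wᵢ = ∑ⱼ Uᵢⱼ xⱼ`.  Then `Ω / K` is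
finite and is the function ring of the generic section.  The `K`-embeddings of `Ω`
into an algebraic closure other than the inclusion satisfy the same algebraic relations, because
they all induce embeddings of one ring `A[Uᵢⱼ : j ≠ j₀] ⊗ A` (`PsiJ_injective`).  An element fixed
by one of them is thus fixed by all; this is double transitivity of the monodromy, and it implies
that `Ω / K` has no proper intermediate fields (`primitive`).  For such extensions the
linear Cauchy–Davenport inequality `dim W² ≥ min([Ω : K], 2 dim W - 1)` holds
(`lin_cauchy_davenport`).  Applied to the span `W` of the coordinates, where `[Ω : K] ≤ s`
(`finrank_le_degree`) and `dim W ≥ r - 1` by nondegeneracy (`le_finrank_span`), the hypothesis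
`s ≤ 2 r - 4` gives `W² = Ω` (`quad_span`).  Finitely many relations over `K` express this equality,
and they specialise to general `L`, `M`, `N` (`sp_mem`, `table_spans`).
-/

open scoped BigOperators

noncomputable section

/-- The homogeneous coordinate ring of `ℙ^{n-1}` over `ℂ`: polynomials in `n` variables. -/
abbrev MPoly (n : ℕ) : Type := MvPolynomial (Fin n) ℂ

/-- An ideal is homogeneous if it contains all homogeneous components of its members. -/
def IsHomogIdeal {n : ℕ} (I : Ideal (MPoly n)) : Prop :=
  ∀ f ∈ I, ∀ k : ℕ, MvPolynomial.homogeneousComponent k f ∈ I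

/-- The degree-`k` graded piece of the homogeneous coordinate ring of the subscheme `V(I)`. -/
def degQ {n : ℕ} (I : Ideal (MPoly n)) (k : ℕ) : Submodule ℂ (MPoly n ⧸ I) :=
  (MvPolynomial.homogeneousSubmodule (Fin n) ℂ k).map (Ideal.Quotient.mkₐ ℂ I).toLinearMap

/-- The graded pieces, indexed by `ℤ` (zero in negative degrees). -/
def degQZ {n : ℕ} (I : Ideal (MPoly n)) (t : ℤ) : Submodule ℂ (MPoly n ⧸ I) :=
  if 0 ≤ t then degQ I t.toNat else ⊥

/-- The Hilbert function of the closed subscheme `V(I) ⊆ ℙ^{n-1}`. -/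
def hilbNat {n : ℕ} (I : Ideal (MPoly n)) (t : ℤ) : ℕ :=
  Module.finrank ℂ (degQZ I t)

/-- The Hilbert function, as an integer-valued function. -/
def hilbZ {n : ℕ} (I : Ideal (MPoly n)) (t : ℤ) : ℤ := (hilbNat I t : ℤ)

/-- The irrelevant maximal ideal `(x_0, …, x_{n-1})`. -/
def mId (n : ℕ) : Ideal (MPoly n) := Ideal.span (Set.range MvPolynomial.X)

/-- The space of degree-`t` graded module homomorphisms `m^k → R/I`. -/
def gradedHomSub {n : ℕ} (I : Ideal (MPoly n)) (k : ℕ) (t : ℤ) :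
    Submodule ℂ ((mId n ^ k : Ideal (MPoly n)) →ₗ[MPoly n] (MPoly n ⧸ I)) where
  carrier := {φ | ∀ (j : ℕ) (f : MPoly n) (hf : f ∈ mId n ^ k),
    f ∈ MvPolynomial.homogeneousSubmodule (Fin n) ℂ j → φ ⟨f, hf⟩ ∈ degQZ I ((j : ℤ) + t)}
  add_mem' := by
    intro a b ha hb j f hf hj
    simpa using Submodule.add_mem _ (ha j f hf hj) (hb j f hf hj)
  zero_mem' := by
    intro j f hf hj
    simpa using Submodule.zero_mem _
  smul_mem' := by
    intro c φ hφ j f hf hj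
    simpa using Submodule.smul_mem _ c (hφ j f hf hj)

/-- `h⁰(X, 𝒪_X(t))` for `X = V(I)`: the stable value of the dimensions of the graded Hom
modules `Hom(m^k, R/I)_t` (the Deligne formula for twisted global sections). -/
def h0Nat {n : ℕ} (I : Ideal (MPoly n)) (t : ℤ) : ℕ :=
  ⨆ k : ℕ, Module.finrank ℂ (gradedHomSub I k t)

/-- `h¹(ℙ^{n-1}, 𝓘_X(t)) = h⁰(X, 𝒪_X(t)) − h_X(t)` (valid for the saturated ideal of `X`). -/
def h1INat {n : ℕ} (I : Ideal (MPoly n)) (t : ℤ) : ℕ := h0Nat I t - hilbNat I t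

/-- The dimension over `ℂ` of the Hartshorne–Rao module `M(X) = ⊕_t H¹(ℙ, 𝓘_X(t))`. -/
def raoDim {n : ℕ} (I : Ideal (MPoly n)) : ℕ := ∑ᶠ t : ℤ, h1INat I t

/-- Arithmetically Cohen–Macaulay (for an integral curve): the Hartshorne–Rao module vanishes. -/
def IsACM {n : ℕ} (I : Ideal (MPoly n)) : Prop := ∀ t : ℤ, h0Nat I t = hilbNat I t

/-- Saturation of an ideal with respect to the irrelevant maximal ideal. -/
def satIdeal {n : ℕ} (I : Ideal (MPoly n)) : Ideal (MPoly n) where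
  carrier := {f | ∃ k : ℕ, ∀ j : Fin n, MvPolynomial.X j ^ k * f ∈ I}
  zero_mem' := ⟨0, fun j => by simpa using I.zero_mem⟩
  add_mem' := by
    rintro f g ⟨k, hk⟩ ⟨l, hl⟩
    refine ⟨k + l, fun j => ?_⟩
    have h1 : MvPolynomial.X (R := ℂ) j ^ (k + l) * (f + g)
        = MvPolynomial.X j ^ l * (MvPolynomial.X j ^ k * f)
          + MvPolynomial.X j ^ k * (MvPolynomial.X j ^ l * g) := by ring
    rw [h1]
    exact I.add_mem (I.mul_mem_left _ (hk j)) (I.mul_mem_left _ (hl j))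
  smul_mem' := by
    rintro c f ⟨k, hk⟩
    refine ⟨k, fun j => ?_⟩
    have h1 : MvPolynomial.X (R := ℂ) j ^ k * (c • f) = c * (MvPolynomial.X j ^ k * f) := by
      rw [smul_eq_mul]; ring
    rw [h1]
    exact I.mul_mem_left _ (hk j)

/-- The hyperplane section of `V(I)` by the hyperplane `{ℓ = 0}`, as a closed subscheme
(its saturated homogeneous ideal). -/
def sect {n : ℕ} (I : Ideal (MPoly n)) (ℓ : MPoly n) : Ideal (MPoly n) :=
  satIdeal (I ⊔ Ideal.span {ℓ})

/-- A property `P` holds for a *general* `k`-tuple of linear forms (hyperplanes): it holds on a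
nonempty Zariski-open subset of the space of coefficients. -/
def GenericForms (n k : ℕ) (P : (Fin k → MPoly n) → Prop) : Prop :=
  ∃ Q : MvPolynomial (Fin k × Fin n) ℂ, Q ≠ 0 ∧
    ∀ c : Fin k → Fin n → ℂ, MvPolynomial.eval (fun p => c p.1 p.2) Q ≠ 0 →
      P fun t => ∑ j : Fin n, MvPolynomial.C (c t j) * MvPolynomial.X j

/-- `V(I) ⊆ ℙ^{n-1}` is nondegenerate: contained in no hyperplane. -/
def Nondeg {n : ℕ} (I : Ideal (MPoly n)) : Prop :=
  ∀ f ∈ MvPolynomial.homogeneousSubmodule (Fin n) ℂ 1, f ∈ I → f = 0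

/-- `V(I)` is an integral curve: `I` homogeneous prime, with cone of Krull dimension 2. -/
def IsCurve {n : ℕ} (I : Ideal (MPoly n)) : Prop :=
  IsHomogIdeal I ∧ I.IsPrime ∧ ringKrullDim (MPoly n ⧸ I) = 2

/-- `V(I)` is an integral surface: `I` homogeneous prime, with cone of Krull dimension 3. -/
def IsSurface {n : ℕ} (I : Ideal (MPoly n)) : Prop :=
  IsHomogIdeal I ∧ I.IsPrime ∧ ringKrullDim (MPoly n ⧸ I) = 3

/-- The curve `V(I)` has degree `d` and arithmetic genus `g`: its Hilbert polynomial is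
`d·t + 1 − g`. -/
def CurveInv {n : ℕ} (I : Ideal (MPoly n)) (d g : ℤ) : Prop :=
  ∃ N : ℤ, ∀ t : ℤ, N ≤ t → hilbZ I t = d * t + 1 - g

/-- The surface `V(I)` has degree `s`, sectional genus `π` and arithmetic genus `pa`:
its Hilbert polynomial is `s·choose(t+1, 2) + (1 − π)·t + 1 + pa`. -/
def SurfInv {n : ℕ} (I : Ideal (MPoly n)) (s π pa : ℤ) : Prop :=
  ∃ N : ℤ, ∀ t : ℤ, N ≤ t → hilbZ I t = s * (t * (t + 1) / 2) + (1 - π) * t + 1 + pa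

/-- `V(IC)` is not contained in any integral surface of degree `< s`. -/
def NotInSurfDegLT {n : ℕ} (IC : Ideal (MPoly n)) (s : ℤ) : Prop :=
  ∀ (T : Ideal (MPoly n)) (s' π' pa' : ℤ), IsSurface T → SurfInv T s' π' pa' → s' < s →
    ¬ T ≤ IC

/-- `V(IC)` is not contained in any integral surface of degree `s` with sectional genus `> π`. -/
def NotInSurfSecGT {n : ℕ} (IC : Ideal (MPoly n)) (s π : ℤ) : Prop :=
  ∀ (T : Ideal (MPoly n)) (π' pa' : ℤ), IsSurface T → SurfInv T s π' pa' → π < π' →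
    ¬ T ≤ IC

/-- `V(IC)` is not contained in any integral surface of degree `s` with arithmetic genus `< p`. -/
def NotInSurfGenLT {n : ℕ} (IC : Ideal (MPoly n)) (s p : ℤ) : Prop :=
  ∀ (T : Ideal (MPoly n)) (π' pa' : ℤ), IsSurface T → SurfInv T s π' pa' → pa' < p →
    ¬ T ≤ IC

/-- `binom2 z = z.choose 2` for integers. -/
def binom2 (z : ℤ) : ℤ := z * (z - 1) / 2

/-- The bound `G*(r,d,s,π,p)` of Di Gennaro–Franco, with `m = (d-1)/s`, `ε = (d-1) % s`. -/
def Gstar (r d s π p : ℤ) : ℤ :=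
  binom2 ((d - 1) / s) * s + ((d - 1) / s) * ((d - 1) % s + π) - p
    + max 0 ((2 * π - (s - 1 - (d - 1) % s)) / 2)

/-- The numerical function `h_{r,d,s,π}`. -/
def hF (r d s π : ℤ) (i : ℤ) : ℤ :=
  if 1 ≤ i ∧ i ≤ (d - 1) / s then
    1 - π + i * s - max 0 ((s - r + 1) - π - i + 1)
  else if i = (d - 1) / s + 1 then
    d - max 0 ((2 * π - (s - 1 - (d - 1) % s)) / 2)
  else if (d - 1) / s + 2 ≤ i then d
  else 0

/-- The threshold `d₀(r)`. -/
def d0 (r : ℤ) : ℤ :=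
  if r ≤ 6 then 16 * (r - 2) * (2 * r - 3)
  else if r ≤ 11 then 8 * (r - 2) ^ 3
  else 2 ^ (r.toNat + 1)

end
noncomputable section

/-- The affine cone of `V(I)`: common zeroes of the elements of `I`. -/
def zeroCone {n : ℕ} (I : Ideal (MPoly n)) : Set (Fin n → ℂ) :=
  {a | ∀ f ∈ I, MvPolynomial.eval a f = 0}

/-- Jacobian-criterion smoothness: at every nonzero point of the affine cone (of dimension `c`)
the gradients of the equations span a subspace of dimension `n - c`. -/
def IsSmooth {n : ℕ} (I : Ideal (MPoly n)) (c : ℕ) : Prop :=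
  ∀ a ∈ zeroCone I, a ≠ 0 →
    Module.finrank ℂ (Submodule.span ℂ
      {g : Fin n → ℂ | ∃ f ∈ I, g = fun j => MvPolynomial.eval a (MvPolynomial.pderiv j f)})
      = n - c

/-- Castelnuovo's bound for the genus of a nondegenerate integral curve of degree `d`
in `ℙ^R`. -/
def castelG (R d : ℤ) : ℤ :=
  binom2 ((d - 1) / (R - 1)) * (R - 1) + ((d - 1) / (R - 1)) * ((d - 1) % (R - 1))

/-- The ideal of the projective cone (from `ℙ^{n-1}` to `ℙ^n`) over `V(I)`. -/
def coneIdeal {n : ℕ} (I : Ideal (MPoly n)) : Ideal (MPoly (n + 1)) :=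
  Ideal.map (MvPolynomial.rename (Fin.castSucc : Fin n → Fin (n + 1))) I

/-- `J` is the (saturated homogeneous) ideal of a line in `ℙ^{n-1}`: it is generated by
`n - 2` linearly independent linear forms. -/
def IsLineIdeal {n : ℕ} (J : Ideal (MPoly n)) : Prop :=
  ∃ V : Submodule ℂ (MPoly n), V ≤ MvPolynomial.homogeneousSubmodule (Fin n) ℂ 1 ∧
    Module.finrank ℂ V = n - 2 ∧ J = Ideal.span (V : Set (MPoly n))

/-- `V(T) ⊆ ℙ^{n-1}` is a smooth rational normal scroll surface: a smooth nondegenerate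
integral surface of minimal degree `n - 2` (with sectional and arithmetic genus `0`)
containing a line (which rules out the Veronese surface). -/
def IsSmoothRNScroll {n : ℕ} (T : Ideal (MPoly n)) : Prop :=
  IsSurface T ∧ Nondeg T ∧ IsSmooth T 3 ∧ SurfInv T ((n : ℤ) - 2) 0 0 ∧
    ∃ J : Ideal (MPoly n), IsLineIdeal J ∧ T ≤ J

/-- The linear projection on points determined by the matrix `L`. -/
def projPt {nb ns : ℕ} (L : Fin ns → Fin nb → ℂ) (a : Fin nb → ℂ) : Fin ns → ℂ :=
  fun t => ∑ j, L t j * a j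

/-- The substitution algebra homomorphism determined by the matrix `L` (pullback of the
linear projection `ℙ^{nb-1} ⇢ ℙ^{ns-1}`). -/
def substHom {nb ns : ℕ} (L : Fin ns → Fin nb → ℂ) : MPoly ns →ₐ[ℂ] MPoly nb :=
  MvPolynomial.aeval fun t => ∑ j, MvPolynomial.C (L t j) * MvPolynomial.X j

/-- The linear projection given by `L` maps `V(I')` isomorphically onto `V(I)`: the center of
projection misses `V(I')`, `V(I)` is the image, and the projection is (projectively) bijective
from `V(I')` onto `V(I)`. -/
def IsIsoProjection {nb ns : ℕ} (L : Fin ns → Fin nb → ℂ)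
    (I' : Ideal (MPoly nb)) (I : Ideal (MPoly ns)) : Prop :=
  I = I'.comap (substHom L) ∧
  (∀ a ∈ zeroCone I', a ≠ 0 → projPt L a ≠ 0) ∧
  (∀ a ∈ zeroCone I', ∀ b ∈ zeroCone I', a ≠ 0 → b ≠ 0 →
    (∃ c : ℂ, c ≠ 0 ∧ projPt L a = c • projPt L b) → ∃ c : ℂ, c ≠ 0 ∧ a = c • b) ∧
  (∀ y ∈ zeroCone I, y ≠ 0 → ∃ a ∈ zeroCone I', a ≠ 0 ∧ ∃ c : ℂ, c ≠ 0 ∧ y = c • projPt L a)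

/-- `t` bounds the Castelnuovo–Mumford regularity of the surface `V(I) ⊆ ℙ^{n-1}`:
for every `t' ≥ t`, `H^i(ℙ, 𝓘(t'-i)) = 0` for all `i ≥ 1`, expressed through the standard
inductive characterization by successive general hyperplane sections. -/
def IsRegBound {n : ℕ} (I : Ideal (MPoly n)) (t : ℤ) : Prop :=
  GenericForms n 2 fun L => ∀ t' : ℤ, t ≤ t' →
    h1INat I (t' - 1) = 0 ∧ h1INat (sect I (L 0)) (t' - 1) = 0 ∧
      h1INat (sect (sect I (L 0)) (L 1)) (t' - 1) = 0

end


namespace RaoGenus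

open MvPolynomial

/-! ### Homogeneous ideals, saturation and Hilbert functions -/

section Graded

variable {n : ℕ}

lemma comp_homog_mul {h : MPoly n} {e : ℕ} (hh : h.IsHomogeneous e) (a : MPoly n) (d : ℕ) :
    homogeneousComponent (e + d) (h * a) = h * homogeneousComponent d a := by
  let _ := MvPolynomial.gradedAlgebra (σ := Fin n) (R := ℂ)
  have := DirectSum.coe_decompose_mul_add_of_left_mem (homogeneousSubmodule (Fin n) ℂ)
    (i := e) (j := d) (a := h) (b := a) hh
  have key : ∀ (φ : MPoly n) (i : ℕ),
      (DirectSum.decompose (homogeneousSubmodule (Fin n) ℂ) φ i : MPoly n) =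
        homogeneousComponent i φ := fun φ i => decomposition.decompose'_apply (R := ℂ) φ i
  simpa only [key] using this

lemma comp_homog_mul_of_lt {h : MPoly n} {e : ℕ} (hh : h.IsHomogeneous e) (a : MPoly n) {d : ℕ}
    (hd : d < e) : homogeneousComponent d (h * a) = 0 := by
  let _ := MvPolynomial.gradedAlgebra (σ := Fin n) (R := ℂ)
  have := DirectSum.coe_decompose_mul_of_left_mem_of_not_le (homogeneousSubmodule (Fin n) ℂ)
    (i := e) (n := d) (a := h) (b := a) hh (by omega)
  have key : ∀ (φ : MPoly n) (i : ℕ),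
      (DirectSum.decompose (homogeneousSubmodule (Fin n) ℂ) φ i : MPoly n) =
        homogeneousComponent i φ := fun φ i => decomposition.decompose'_apply (R := ℂ) φ i
  simpa only [key] using this

lemma IsHomogIdeal.sup_span {I : Ideal (MPoly n)} (hI : IsHomogIdeal I) {h : MPoly n} {e : ℕ}
    (hh : h.IsHomogeneous e) : IsHomogIdeal (I ⊔ Ideal.span {h}) := by
  intro f hf k
  obtain ⟨i, hi, j, hj, rfl⟩ := Submodule.mem_sup.1 hf
  obtain ⟨a, rfl⟩ := Ideal.mem_span_singleton'.1 hj
  rw [map_add]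
  refine Ideal.add_mem _ (Ideal.mem_sup_left (hI i hi k)) (Ideal.mem_sup_right ?_)
  rw [mul_comm a h]
  rcases lt_or_ge k e with hk | hk
  · rw [comp_homog_mul_of_lt hh _ hk]; exact Ideal.zero_mem _
  · obtain ⟨d, rfl⟩ := Nat.exists_eq_add_of_le hk
    rw [comp_homog_mul hh]
    exact Ideal.mul_mem_right _ _ (Ideal.mem_span_singleton_self h)

/-- A homogeneous member of `I + (h)` is congruent modulo `I` to `h * a` with `a` homogeneous. -/
lemma exists_homog_of_mem_sup {I : Ideal (MPoly n)} (hI : IsHomogIdeal I) {h : MPoly n} {e : ℕ}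
    (hh : h.IsHomogeneous e) {f : MPoly n} {d : ℕ} (hf : f.IsHomogeneous (e + d))
    (hm : f ∈ I ⊔ Ideal.span {h}) : ∃ a : MPoly n, a.IsHomogeneous d ∧ f - h * a ∈ I := by
  obtain ⟨i, hi, j, hj, hij⟩ := Submodule.mem_sup.1 hm
  obtain ⟨a, rfl⟩ := Ideal.mem_span_singleton'.1 hj
  refine ⟨homogeneousComponent d a, homogeneousComponent_isHomogeneous _ _, ?_⟩
  have := hI i hi (e + d)
  have h2 : i = f - h * a := by rw [← hij]; ring
  rwa [h2, map_sub, comp_homog_mul hh, homogeneousComponent_eq_self hf] at this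

lemma mem_of_mem_sup_lt {I : Ideal (MPoly n)} (hI : IsHomogIdeal I) {h : MPoly n} {e : ℕ}
    (hh : h.IsHomogeneous e) {f : MPoly n} {d : ℕ} (hf : f.IsHomogeneous d) (hd : d < e)
    (hm : f ∈ I ⊔ Ideal.span {h}) : f ∈ I := by
  obtain ⟨i, hi, j, hj, hij⟩ := Submodule.mem_sup.1 hm
  obtain ⟨a, rfl⟩ := Ideal.mem_span_singleton'.1 hj
  have := hI i hi d
  have h2 : i = f - h * a := by rw [← hij]; ring
  rwa [h2, map_sub, comp_homog_mul_of_lt hh _ hd, homogeneousComponent_eq_self hf, sub_zero]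
    at this

lemma mId_eq : mId n = idealOfVars (Fin n) ℂ := rfl

lemma X_mem_mId (j : Fin n) : (X j : MPoly n) ∈ mId n := Ideal.subset_span (Set.mem_range_self j)

lemma mem_mId_pow_of_homog {f : MPoly n} {d k : ℕ} (hf : f.IsHomogeneous d) (hk : k ≤ d) :
    f ∈ mId n ^ k := by
  rw [mId_eq, mem_pow_idealOfVars_iff]
  intro x hx
  by_contra hlt
  have := hf.coeff_eq_zero (d := x) (by simp only [not_le] at hlt; omega)
  exact (mem_support_iff.1 hx) this

/-- Splitting off the part of degree `< K`. -/
lemma exists_low_high (c : MPoly n) (K : ℕ) : ∃ lo hi : MPoly n, c = lo + hi ∧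
    lo.totalDegree ≤ K ∧ hi ∈ mId n ^ K := by
  refine ⟨∑ i ∈ Finset.range K, homogeneousComponent i c,
    c - ∑ i ∈ Finset.range K, homogeneousComponent i c, by ring, ?_, ?_⟩
  · refine totalDegree_finsetSum_le fun i hi => ?_
    exact (homogeneousComponent_isHomogeneous i c).totalDegree_le.trans
      (Finset.mem_range.1 hi).le
  · have h1 := sum_homogeneousComponent c
    have h2 : c - ∑ i ∈ Finset.range K, homogeneousComponent i c =
        ∑ i ∈ Finset.range (c.totalDegree + 1 + K) \ Finset.range K, homogeneousComponent i c := by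
      have h3 : ∑ i ∈ Finset.range (c.totalDegree + 1 + K), homogeneousComponent i c = c := by
        conv_rhs => rw [← h1]
        symm
        apply Finset.sum_subset (Finset.range_mono (by omega))
        intro x _ hx
        exact homogeneousComponent_eq_zero _ _ (by simp at hx; omega)
      rw [Finset.sum_sdiff_eq_sub (Finset.range_mono (by omega)), h3]
    rw [h2]
    refine Ideal.sum_mem _ fun i hi => ?_
    refine mem_mId_pow_of_homog (homogeneousComponent_isHomogeneous i c) ?_
    simp at hi; omega

lemma mem_sat_iff {I : Ideal (MPoly n)} {f : MPoly n} :
    f ∈ satIdeal I ↔ ∃ k : ℕ, ∀ g ∈ mId n ^ k, g * f ∈ I := by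
  constructor
  · rintro ⟨k, hk⟩
    let Q : Ideal (MPoly n) := Submodule.comap (LinearMap.mulRight (MPoly n) f) I
    have hQ : ∀ g, g ∈ Q ↔ g * f ∈ I := fun g => Iff.rfl
    have h1 : mId n ≤ Q.radical := by
      rw [mId, Ideal.span_le]
      rintro _ ⟨j, rfl⟩
      exact ⟨k, (hQ _).2 (hk j)⟩
    obtain ⟨K, hK⟩ := Ideal.exists_pow_le_of_le_radical_of_fg h1
      (by rw [mId_eq]; exact idealOfVars_fg _ _)
    exact ⟨K, fun g hg => (hQ g).1 (hK hg)⟩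
  · rintro ⟨k, hk⟩
    exact ⟨k, fun j => hk _ (Ideal.pow_mem_pow (X_mem_mId j) _)⟩

lemma le_sat (I : Ideal (MPoly n)) : I ≤ satIdeal I :=
  fun _ hf => ⟨0, fun _ => Ideal.mul_mem_left _ _ hf⟩

lemma IsHomogIdeal.sat {I : Ideal (MPoly n)} (hI : IsHomogIdeal I) : IsHomogIdeal (satIdeal I) := by
  rintro f ⟨k, hk⟩ d
  refine ⟨k, fun j => ?_⟩
  have h := hI _ (hk j) (k + d)
  have h2 := comp_homog_mul (isHomogeneous_X_pow (R := ℂ) j k) f d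
  rwa [h2] at h

/-- Saturated means: a product with a power of the irrelevant ideal in `sat I` is in `sat I`. -/
lemma mem_sat_of_pow {I : Ideal (MPoly n)} {f : MPoly n} {k : ℕ}
    (h : ∀ g ∈ mId n ^ k, g * f ∈ satIdeal I) : f ∈ satIdeal I := by
  have h1 : ∀ j : Fin n, ∃ l : ℕ, X j ^ (l + k) * f ∈ I := by
    intro j
    obtain ⟨l, hl⟩ := h (X j ^ k) (Ideal.pow_mem_pow (X_mem_mId j) _)
    exact ⟨l, by have := hl j; rwa [← mul_assoc, ← pow_add] at this⟩
  choose l hl using h1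
  refine ⟨∑ j, l j + k, fun j => ?_⟩
  have : l j ≤ ∑ j, l j := Finset.single_le_sum (f := l) (fun _ _ => Nat.zero_le _) (Finset.mem_univ j)
  obtain ⟨c, hc⟩ := Nat.exists_eq_add_of_le this
  have h3 : ∑ j, l j + k = c + (l j + k) := by omega
  rw [h3, pow_add, mul_assoc]
  exact Ideal.mul_mem_left _ _ (hl j)

/-- An ideal and its saturation agree in large degrees. -/
lemma sat_eq_large {I : Ideal (MPoly n)} (hI : IsHomogIdeal I) :
    ∃ T : ℕ, ∀ t ≥ T, ∀ f : MPoly n, f.IsHomogeneous t → f ∈ satIdeal I → f ∈ I := by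
  obtain ⟨S, hS⟩ := (IsNoetherian.noetherian (satIdeal I) : (satIdeal I).FG)
  have hg : ∀ g ∈ S, ∃ k : ℕ, ∀ h ∈ mId n ^ k, h * g ∈ I := fun g hg =>
    mem_sat_iff.1 (hS ▸ Ideal.subset_span hg)
  choose! k hk using hg
  set K := S.sup k with hKdef
  set D := S.sup (fun g => g.totalDegree) with hDdef
  refine ⟨K + D + 1, fun t ht f hf hfs => ?_⟩
  rw [← hS] at hfs
  obtain ⟨c, rfl⟩ := Submodule.mem_span_finset'.1 hfs
  choose lo hi hc hlo hhi using fun g : S => exists_low_high (c g) K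
  set F := ∑ g : S, c g • (g : MPoly n) with hF
  have hsplit : F = ∑ g : S, lo g * (g : MPoly n) + ∑ g : S, hi g * (g : MPoly n) := by
    rw [hF, ← Finset.sum_add_distrib]
    refine Finset.sum_congr rfl fun g _ => ?_
    rw [smul_eq_mul]
    conv_lhs => rw [hc g]
    ring
  have h2 : ∑ g : S, hi g * (g : MPoly n) ∈ I := by
    refine Ideal.sum_mem _ fun g _ => hk g g.2 _ ?_
    exact Ideal.pow_le_pow_right (Finset.le_sup (f := k) g.2) (hhi g)
  have h3 : (∑ g : S, lo g * (g : MPoly n)).totalDegree < t := by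
    refine lt_of_le_of_lt (totalDegree_finsetSum_le (d := K + D) fun g _ => ?_) (by omega)
    refine (totalDegree_mul _ _).trans (add_le_add (hlo g) ?_)
    exact Finset.le_sup (f := fun g : MPoly n => g.totalDegree) g.2
  have h4 := hI _ h2 t
  have h5 : ∑ g : S, hi g * (g : MPoly n) = F - ∑ g : S, lo g * (g : MPoly n) := by
    rw [hsplit]; ring
  rwa [h5, map_sub, homogeneousComponent_eq_zero _ _ h3, homogeneousComponent_eq_self hf,
    sub_zero] at h4

/-- The degree-`t` part of an ideal. -/
noncomputable def gr (I : Ideal (MPoly n)) (t : ℕ) : Submodule ℂ (MPoly n) :=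
  homogeneousSubmodule (Fin n) ℂ t ⊓ I.restrictScalars ℂ

lemma mem_gr {I : Ideal (MPoly n)} {t : ℕ} {f : MPoly n} :
    f ∈ gr I t ↔ f.IsHomogeneous t ∧ f ∈ I := Iff.rfl

instance finite_homog (t : ℕ) : Module.Finite ℂ (homogeneousSubmodule (Fin n) ℂ t) :=
  Module.Finite.iff_fg.2 (homogeneousSubmodule_fg (Fin n) ℂ t)

instance finite_gr (I : Ideal (MPoly n)) (t : ℕ) : Module.Finite ℂ (gr I t) :=
  Submodule.finiteDimensional_of_le (inf_le_left)

instance finite_degQ (I : Ideal (MPoly n)) (t : ℕ) : Module.Finite ℂ (degQ I t) := by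
  unfold degQ; infer_instance

/-- The Hilbert function indexed by natural numbers. -/
noncomputable def hN (I : Ideal (MPoly n)) (t : ℕ) : ℕ := Module.finrank ℂ (degQ I t)

lemma hilbNat_natCast (I : Ideal (MPoly n)) (t : ℕ) : hilbNat I (t : ℤ) = hN I t := by
  have h : degQZ I (t : ℤ) = degQ I t := by simp [degQZ]
  rw [hilbNat, hN, h]

lemma hilbZ_natCast (I : Ideal (MPoly n)) (t : ℕ) : hilbZ I (t : ℤ) = hN I t := by
  rw [hilbZ, hilbNat_natCast]

lemma hilbNat_neg (I : Ideal (MPoly n)) {t : ℤ} (ht : t < 0) : hilbNat I t = 0 := by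
  have h : degQZ I t = ⊥ := by simp [degQZ, not_le.2 ht]
  rw [hilbNat, h, finrank_bot]

lemma hN_add_gr (I : Ideal (MPoly n)) (t : ℕ) :
    hN I t + Module.finrank ℂ (gr I t) =
      Module.finrank ℂ (homogeneousSubmodule (Fin n) ℂ t) := by
  set H := homogeneousSubmodule (Fin n) ℂ t
  let f := (Ideal.Quotient.mkₐ ℂ I).toLinearMap.domRestrict H
  have h := LinearMap.finrank_range_add_finrank_ker f
  have h1 : LinearMap.range f = degQ I t := by
    simp only [f, LinearMap.range_domRestrict, degQ, H]
  have h2 : Module.finrank ℂ (LinearMap.ker f) = Module.finrank ℂ (gr I t) := by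
    have h3 : gr I t = (LinearMap.ker f).map H.subtype := by
      ext x
      simp only [Submodule.mem_map, LinearMap.mem_ker, Submodule.subtype_apply]
      constructor
      · rintro ⟨hx, hxI⟩
        refine ⟨⟨x, hx⟩, ?_, rfl⟩
        simpa [f] using Ideal.Quotient.eq_zero_iff_mem.2 hxI
      · rintro ⟨⟨y, hy⟩, hy2, rfl⟩
        refine ⟨hy, ?_⟩
        simp only [f, LinearMap.domRestrict_apply] at hy2
        exact Ideal.Quotient.eq_zero_iff_mem.1 hy2
    rw [h3]
    exact (LinearEquiv.finrank_eq (Submodule.equivMapOfInjective _ H.injective_subtype _))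
  rw [h1, h2] at h
  exact h

lemma hN_congr {I J : Ideal (MPoly n)} {t : ℕ}
    (h : ∀ f : MPoly n, f.IsHomogeneous t → (f ∈ I ↔ f ∈ J)) : hN I t = hN J t := by
  have h1 := hN_add_gr I t
  have h2 := hN_add_gr J t
  have h3 : gr I t = gr J t := by
    ext f; rw [mem_gr, mem_gr]
    constructor
    · rintro ⟨a, b⟩; exact ⟨a, (h f a).1 b⟩
    · rintro ⟨a, b⟩; exact ⟨a, (h f a).2 b⟩
  rw [h3] at h1; omega

lemma hN_sat_large {I : Ideal (MPoly n)} (hI : IsHomogIdeal I) :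
    ∃ T : ℕ, ∀ t ≥ T, hN (satIdeal I) t = hN I t := by
  obtain ⟨T, hT⟩ := sat_eq_large hI
  exact ⟨T, fun t ht => hN_congr fun f hf => ⟨hT t ht f hf, fun h => le_sat I h⟩⟩

/-- Hilbert function of `R/(I, L)` in degree `t+1` when `L` is injective on `(R/I)_t`. -/
lemma hN_drop {I : Ideal (MPoly n)} (hI : IsHomogIdeal I) {L : MPoly n} (hL : L.IsHomogeneous 1)
    (hL0 : L ≠ 0) {t : ℕ} (hinj : ∀ f : MPoly n, f.IsHomogeneous t → L * f ∈ I → f ∈ I) :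
    hN (I ⊔ Ideal.span {L}) (t + 1) + hN I t = hN I (t + 1) := by
  have h1 := hN_add_gr (I ⊔ Ideal.span {L}) (t + 1)
  have h2 := hN_add_gr I t
  have h3 := hN_add_gr I (t + 1)
  set μ := LinearMap.mulLeft ℂ L
  have hμ : Function.Injective μ := fun a b hab => mul_left_cancel₀ hL0 hab
  set LH := (homogeneousSubmodule (Fin n) ℂ t).map μ with hLH
  have hsup : gr (I ⊔ Ideal.span {L}) (t + 1) = gr I (t + 1) ⊔ LH := by
    ext f
    constructor
    · rintro ⟨hf, hm⟩
      refine Submodule.mem_sup.2 ?_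
      replace hf : f.IsHomogeneous (t + 1) := hf
      rw [add_comm t 1] at hf
      obtain ⟨a, ha, hb⟩ := exists_homog_of_mem_sup hI hL hf hm
      refine ⟨f - L * a, ⟨?_, hb⟩, L * a, ⟨a, ha, rfl⟩, by ring⟩
      rw [add_comm t 1]
      exact hf.sub (hL.mul ha)
    · intro hf
      obtain ⟨y, hy, _, ⟨a, ha, rfl⟩, rfl⟩ := Submodule.mem_sup.1 hf
      have : (μ a).IsHomogeneous (t + 1) := by rw [add_comm]; exact hL.mul ha
      refine ⟨(mem_gr.1 hy).1.add this, Ideal.add_mem _ (Ideal.mem_sup_left hy.2) ?_⟩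
      exact Ideal.mem_sup_right (Ideal.mul_mem_right _ _ (Ideal.mem_span_singleton_self L))
  have hinf : gr I (t + 1) ⊓ LH = (gr I t).map μ := by
    ext f
    constructor
    · rintro ⟨hf, ⟨a, ha, rfl⟩⟩
      exact ⟨a, ⟨ha, hinj a ha hf.2⟩, rfl⟩
    · rintro ⟨a, ⟨ha, haI⟩, rfl⟩
      refine ⟨⟨?_, Ideal.mul_mem_left _ _ haI⟩, ⟨a, ha, rfl⟩⟩
      have : (μ a).IsHomogeneous (t + 1) := by rw [add_comm]; exact hL.mul ha
      exact this
  have h4 := Submodule.finrank_sup_add_finrank_inf_eq (gr I (t + 1)) LH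
  have h5 : Module.finrank ℂ (gr I t) = Module.finrank ℂ ((gr I t).map μ) := LinearEquiv.finrank_eq (Submodule.equivMapOfInjective μ hμ (gr I t))
  have h6 : Module.finrank ℂ (homogeneousSubmodule (Fin n) ℂ t) =
      Module.finrank ℂ ((homogeneousSubmodule (Fin n) ℂ t).map μ) := LinearEquiv.finrank_eq
    (Submodule.equivMapOfInjective μ hμ (homogeneousSubmodule (Fin n) ℂ t))
  rw [hinf, ← hsup, hLH] at h4
  omega

end Graded

end RaoGenus

namespace RaoGenus

open MvPolynomial

/-! ### General linear forms avoid primes -/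

section Avoid

variable {n : ℕ}

/-- The linear form with coefficient vector `c`. -/
noncomputable def lin (c : Fin n → ℂ) : MPoly n := ∑ j, C (c j) * X j

lemma lin_homog (c : Fin n → ℂ) : (lin c).IsHomogeneous 1 :=
  IsHomogeneous.sum _ _ _ fun j _ => isHomogeneous_C_mul_X _ _

lemma lin_add (c d : Fin n → ℂ) : lin (c + d) = lin c + lin d := by
  simp [lin, add_mul, Finset.sum_add_distrib]

lemma lin_smul (a : ℂ) (c : Fin n → ℂ) : lin (a • c) = C a * lin c := by
  simp [lin, Finset.mul_sum, mul_assoc]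

lemma lin_single (j : Fin n) : lin (Pi.single j 1) = (X j : MPoly n) := by
  classical
  rw [lin, Finset.sum_eq_single j]
  · simp
  · intro b _ hb; simp [hb]
  · simp

lemma exists_lin_of_homog {f : MPoly n} (hf : f.IsHomogeneous 1) : ∃ c, f = lin c := by
  have h1 : f ∈ homogeneousSubmodule (Fin n) ℂ 1 := hf
  rw [homogeneousSubmodule_one_eq_span_X] at h1
  obtain ⟨c, hc⟩ := (Submodule.mem_span_range_iff_exists_fun ℂ).1 h1
  refine ⟨c, ?_⟩
  rw [← hc, lin]
  exact Finset.sum_congr rfl fun j _ => by rw [smul_eq_C_mul]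

lemma avoid_prime (p : Ideal (MPoly n)) (hp : ¬ mId n ≤ p) :
    ∃ Q : MPoly n, Q ≠ 0 ∧ ∀ c : Fin n → ℂ, eval c Q ≠ 0 → lin c ∉ p := by
  let V : Submodule ℂ (Fin n → ℂ) :=
    { carrier := {c | lin c ∈ p}
      zero_mem' := by simp [lin]
      add_mem' := by
        intro a b ha hb
        simp only [Set.mem_ofPred_eq, lin_add] at *
        exact Ideal.add_mem _ ha hb
      smul_mem' := by
        intro a b hb
        simp only [Set.mem_ofPred_eq, lin_smul] at *
        exact Ideal.mul_mem_left _ _ hb }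
  have hV : V < ⊤ := by
    rw [lt_top_iff_ne_top]
    intro h
    apply hp
    rw [mId, Ideal.span_le]
    rintro _ ⟨j, rfl⟩
    have : Pi.single j 1 ∈ V := by rw [h]; trivial
    have h2 : lin (Pi.single j 1) ∈ p := this
    rwa [lin_single] at h2
  obtain ⟨f, hf0, hf⟩ := Submodule.exists_le_ker_of_lt_top V hV
  have hev : ∀ c, eval c (lin fun j => f (Pi.single j 1)) = f c := by
    intro c
    conv_rhs => rw [pi_eq_sum_univ' c]
    simp [lin, mul_comm]
  refine ⟨lin fun j => f (Pi.single j 1), ?_, ?_⟩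
  · intro h
    apply hf0
    ext1 c
    exact (LinearMap.ext fun c => by rw [← hev c, h]; simp : f = 0) ▸ rfl
  · intro c hc hmem
    rw [hev] at hc
    exact hc (hf hmem)

lemma avoid_primes (S : Set (Ideal (MPoly n))) (hS : S.Finite) (hp : ∀ p ∈ S, ¬ mId n ≤ p) :
    ∃ Q : MPoly n, Q ≠ 0 ∧ ∀ c : Fin n → ℂ, eval c Q ≠ 0 → ∀ p ∈ S, lin c ∉ p := by
  choose! Q hQ0 hQ using fun p (h : p ∈ S) => avoid_prime p (hp p h)
  refine ⟨∏ p ∈ hS.toFinset, Q p, ?_, ?_⟩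
  · exact Finset.prod_ne_zero_iff.2 fun p h => hQ0 p (hS.mem_toFinset.1 h)
  · intro c hc p h
    rw [map_prod, Finset.prod_ne_zero_iff] at hc
    exact hQ p h c (hc p (hS.mem_toFinset.2 h))

lemma smul_mk_eq (I : Ideal (MPoly n)) (g a : MPoly n) :
    g • Ideal.Quotient.mk I a = Ideal.Quotient.mk I (g * a) := rfl

/-- A general linear form is a nonzerodivisor modulo a saturated ideal. -/
lemma avoid_sat (I : Ideal (MPoly n)) :
    ∃ Q : MPoly n, Q ≠ 0 ∧ ∀ c : Fin n → ℂ, eval c Q ≠ 0 →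
      ∀ a, lin c * a ∈ satIdeal I → a ∈ satIdeal I := by
  obtain ⟨Q, hQ0, hQ⟩ := avoid_primes (associatedPrimes (MPoly n) (MPoly n ⧸ satIdeal I))
    (associatedPrimes.finite _ _) (by
      rintro p hp hmp
      obtain ⟨hpp, x, hx⟩ := isAssociatedPrime_iff.1 hp
      obtain ⟨a, rfl⟩ := Ideal.Quotient.mk_surjective x
      have hmem : ∀ g, g ∈ p ↔ g * a ∈ satIdeal I := by
        intro g
        rw [hx, Submodule.mem_colon_singleton, Submodule.mem_bot, smul_mk_eq,
          Ideal.Quotient.eq_zero_iff_mem]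
      have ha : a ∈ satIdeal I := mem_sat_of_pow (k := 1) fun g hg =>
        (hmem g).1 (hmp (by simpa using hg))
      exact hpp.ne_top ((Ideal.eq_top_iff_one _).2 ((hmem 1).2 (by simpa using ha))))
  refine ⟨Q, hQ0, fun c hc a ha => ?_⟩
  by_contra hna
  have h1 : (Ideal.Quotient.mk (satIdeal I) a) ≠ 0 := fun h =>
    hna (Ideal.Quotient.eq_zero_iff_mem.1 h)
  have h2 : lin c ∈ ⋃ p ∈ associatedPrimes (MPoly n) (MPoly n ⧸ satIdeal I), (p : Set (MPoly n)) := by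
    rw [biUnion_associatedPrimes_eq_zero_divisors]
    exact ⟨_, h1, by
      rw [smul_mk_eq, Ideal.Quotient.eq_zero_iff_mem]; exact ha⟩
  simp only [Set.mem_iUnion] at h2
  obtain ⟨p, hp, h3⟩ := h2
  exact hQ c hc p hp h3

/-! ### Dehomogenisation with respect to a linear form -/

lemma IsHomogIdeal.mem_of_comp {Q : Ideal (MPoly n)} {a : MPoly n}
    (h : ∀ i, homogeneousComponent i a ∈ Q) : a ∈ Q := by
  rw [← sum_homogeneousComponent a]
  exact Ideal.sum_mem _ fun i _ => h i

lemma comp_succ_lin_mul {N : MPoly n} (hN : N.IsHomogeneous 1) (a : MPoly n) (i : ℕ) :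
    homogeneousComponent (i + 1) (N * a) = N * homogeneousComponent i a := by
  rw [add_comm i 1, comp_homog_mul hN]

lemma comp_zero_lin_mul {N : MPoly n} (hN : N.IsHomogeneous 1) (a : MPoly n) :
    homogeneousComponent 0 (N * a) = 0 := comp_homog_mul_of_lt hN _ (by omega)

lemma mem_of_sub_one_mul_mem {Q : Ideal (MPoly n)} (hQ : IsHomogIdeal Q) {N : MPoly n}
    (hN : N.IsHomogeneous 1) {a : MPoly n} (h : (N - 1) * a ∈ Q) : a ∈ Q := by
  refine IsHomogIdeal.mem_of_comp fun i => ?_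
  have e : (N - 1) * a = N * a - a := by ring
  rw [e] at h
  induction i with
  | zero =>
    have := hQ _ h 0
    rw [map_sub, comp_zero_lin_mul hN, zero_sub] at this
    simpa using Ideal.neg_mem_iff _ |>.1 this
  | succ i ih =>
    have := hQ _ h (i + 1)
    rw [map_sub, comp_succ_lin_mul hN] at this
    have h2 := Q.sub_mem (Q.mul_mem_left N ih) this
    simpa using h2

/-- A homogeneous element vanishing on the affine chart `N = 1` is killed by a power of `N`. -/
lemma pow_mul_mem_of_mem_sup_sub_one {Q : Ideal (MPoly n)} (hQ : IsHomogIdeal Q) {N : MPoly n}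
    (hN : N.IsHomogeneous 1) {h : MPoly n} {d : ℕ} (hh : h.IsHomogeneous d)
    (hm : h ∈ Q ⊔ Ideal.span {N - 1}) : ∃ k : ℕ, N ^ k * h ∈ Q := by
  obtain ⟨q, hq, j, hj, hij⟩ := Submodule.mem_sup.1 hm
  obtain ⟨a, rfl⟩ := Ideal.mem_span_singleton'.1 hj
  have e : h - (N * a - a) = q := by rw [← hij]; ring
  rw [← e] at hq
  have hcomp : ∀ i, i ≠ d → homogeneousComponent i h = 0 := fun i hi => by
    rw [homogeneousComponent_of_mem hh, if_neg hi]
  -- the components of `a` below degree `d` lie in `Q`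
  have hlow : ∀ i, i < d → homogeneousComponent i a ∈ Q := by
    intro i
    induction i with
    | zero =>
      intro hi
      have := hQ _ hq 0
      rw [map_sub, map_sub, comp_zero_lin_mul hN, hcomp 0 (by omega)] at this
      simpa using this
    | succ i ih =>
      intro hi
      have := hQ _ hq (i + 1)
      rw [map_sub, map_sub, comp_succ_lin_mul hN, hcomp _ (by omega)] at this
      have h2 := Q.add_mem (Q.mul_mem_left N (ih (by omega))) this
      simpa using h2
  have hhigh : ∀ k, N ^ k * h + homogeneousComponent (d + k) a ∈ Q := by
    intro k
    induction k with
    | zero =>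
      have := hQ _ hq d
      rw [map_sub, map_sub, homogeneousComponent_eq_self hh] at this
      rcases d with _ | d
      · rw [comp_zero_lin_mul hN] at this
        simpa using this
      · rw [comp_succ_lin_mul hN] at this
        have h2 := Q.add_mem (Q.mul_mem_left N (hlow d (by omega))) this
        convert h2 using 1
        simp only [pow_zero, add_zero]; ring
    | succ k ih =>
      have := hQ _ hq (d + k + 1)
      rw [map_sub, map_sub, comp_succ_lin_mul hN, hcomp _ (by omega)] at this
      have h2 := Q.add_mem (Q.mul_mem_left N ih) this
      convert h2 using 1
      rw [← add_assoc]; ring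
  refine ⟨a.totalDegree + 1, ?_⟩
  have := hhigh (a.totalDegree + 1)
  rwa [homogeneousComponent_eq_zero _ a (by omega), add_zero] at this

end Avoid
end RaoGenus

namespace RaoGenus

open MvPolynomial

/-! ### Torsion-free quotients as lattices over a polynomial subring -/

section Lat

variable {n k : ℕ}

/-- `R/J` has no torsion over the polynomial ring acting through the forms `y`. -/
def TorsFree (J : Ideal (MPoly n)) (y : Fin k → MPoly n) : Prop :=
  ∀ (p : MPoly k) (a : MPoly n), p ≠ 0 → aeval y p * a ∈ J → a ∈ J

/-- A coordinate system on `R/J`, regarded as a torsion-free finite module over the polynomial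
ring in the forms `y`: `Θ` embeds `R/J` in a free module, and after multiplication by `π` each
element is the combination of the elements `b i` with coefficients given by `Θ`. -/
structure YLat (J : Ideal (MPoly n)) (y : Fin k → MPoly n) where
  m : ℕ
  δ : ℕ
  Θ : MPoly n →ₗ[ℂ] (Fin m → MPoly k)
  b : Fin m → MPoly n
  π : MPoly k
  π_ne : π ≠ 0
  ker : ∀ a, Θ a = 0 ↔ a ∈ J
  smul : ∀ (p : MPoly k) a, Θ (aeval y p * a) = p • Θ a
  deg : ∀ d a, a.IsHomogeneous d → ∀ i, (Θ a i).totalDegree ≤ d + δ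
  expand : ∀ a, aeval y π * a - ∑ i, aeval y (Θ a i) * b i ∈ J
  indep : ∀ c : Fin m → MPoly k, ∑ i, aeval y (c i) * b i ∈ J → c = 0

lemma mem_span_range_iff {y : Fin k → MPoly n} {a : MPoly n} :
    a ∈ Ideal.span (Set.range y) ↔ ∃ c : Fin k → MPoly n, a = ∑ i, y i * c i := by
  rw [Ideal.mem_span_range_iff_exists_fun]
  constructor
  · rintro ⟨c, rfl⟩; exact ⟨c, Finset.sum_congr rfl fun i _ => mul_comm _ _⟩
  · rintro ⟨c, rfl⟩; exact ⟨c, Finset.sum_congr rfl fun i _ => mul_comm _ _⟩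

/-- Graded Nakayama: finite generation over the subring generated by `y`, with control of the
degrees of the coefficients. -/
lemma lat_generators {J : Ideal (MPoly n)} (hJ : IsHomogIdeal J) {y : Fin k → MPoly n}
    (hy : ∀ i, (y i).IsHomogeneous 1) {k0 : ℕ}
    (hfin : mId n ^ k0 ≤ J ⊔ Ideal.span (Set.range y)) :
    ∃ (q : ℕ) (e : Fin q → MPoly n), ∀ (d : ℕ) (a : MPoly n), a.IsHomogeneous d →
      ∃ p : Fin q → MPoly k, (∀ j, (p j).totalDegree ≤ d) ∧
        a - ∑ j, aeval y (p j) * e j ∈ J := by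
  obtain ⟨q, e, he⟩ := Submodule.fg_iff_exists_fin_generating_family.1
    (Module.Finite.iff_fg.1 (inferInstance : Module.Finite ℂ (restrictTotalDegree (Fin n) ℂ k0)))
  refine ⟨q, e, fun d => ?_⟩
  induction d with
  | zero =>
    intro a ha
    have h1 : a ∈ Submodule.span ℂ (Set.range e) := by
      rw [he, mem_restrictTotalDegree]
      exact ha.totalDegree_le.trans (by omega)
    obtain ⟨c, rfl⟩ := (Submodule.mem_span_range_iff_exists_fun ℂ).1 h1
    refine ⟨fun j => C (c j), fun j => by simp, ?_⟩
    simp [smul_eq_C_mul]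
  | succ d ih =>
    intro a ha
    rcases le_or_gt (d + 1) k0 with hd | hd
    · have h1 : a ∈ Submodule.span ℂ (Set.range e) := by
        rw [he, mem_restrictTotalDegree]
        exact ha.totalDegree_le.trans hd
      obtain ⟨c, rfl⟩ := (Submodule.mem_span_range_iff_exists_fun ℂ).1 h1
      refine ⟨fun j => C (c j), fun j => by simp, ?_⟩
      simp [smul_eq_C_mul]
    · have h1 := hfin (mem_mId_pow_of_homog ha hd.le)
      obtain ⟨j0, hj0, z, hz, hjz⟩ := Submodule.mem_sup.1 h1
      obtain ⟨c, rfl⟩ := mem_span_range_iff.1 hz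
      choose p hp1 hp2 using fun i => ih (homogeneousComponent d (c i))
        (homogeneousComponent_isHomogeneous _ _)
      refine ⟨fun j => ∑ i, X i * p i j, fun j => ?_, ?_⟩
      · refine totalDegree_finsetSum_le fun i _ => (totalDegree_mul _ _).trans ?_
        rw [totalDegree_X]
        have := hp1 i j
        omega
      · have h2 : a - ∑ i, y i * homogeneousComponent d (c i) ∈ J := by
          have h3 := hJ _ hj0 (d + 1)
          have h4 : j0 = a - ∑ i, y i * c i := by rw [← hjz]; ring
          rw [h4, map_sub, homogeneousComponent_eq_self ha, map_sum] at h3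
          simpa only [comp_succ_lin_mul (hy _)] using h3
        have h5 : ∑ i, y i * (homogeneousComponent d (c i) - ∑ j, aeval y (p i j) * e j) ∈ J :=
          Ideal.sum_mem _ fun i _ => Ideal.mul_mem_left _ _ (hp2 i)
        convert J.add_mem h2 h5 using 1
        simp only [mul_sub, Finset.sum_sub_distrib, map_sum, map_mul, aeval_X, Finset.sum_mul,
          Finset.mul_sum]
        rw [Finset.sum_comm]
        simp only [mul_assoc]
        ring

lemma abstract_lattice {P Q : Type*} [CommRing P] [IsDomain P] [AddCommGroup Q] [Module P Q]
    {q : ℕ} (v : Fin q → Q) (hv : Submodule.span P (Set.range v) = ⊤) :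
    ∃ (m : ℕ) (idx : Fin m → Fin q) (π : P) (Θ : Q →ₗ[P] (Fin m → P)), π ≠ 0 ∧
      LinearIndependent P (fun i => v (idx i)) ∧ ∀ x, π • x = ∑ i, Θ x i • v (idx i) := by
  classical
  obtain ⟨s, hs, hmax⟩ := exists_maximal_linearIndepOn P v
  let eq : Fin (Fintype.card s) ≃ s := (Fintype.equivFin s).symm
  let w : Fin (Fintype.card s) → Q := fun i => v (eq i)
  have hw : LinearIndependent P w := hs.comp _ eq.injective
  have hrange : Set.range w = v '' s := by
    ext x; constructor
    · rintro ⟨i, rfl⟩; exact ⟨_, (eq i).2, rfl⟩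
    · rintro ⟨j, hj, rfl⟩
      exact ⟨eq.symm ⟨j, hj⟩, by simp [w]⟩
  have hden : ∀ j, ∃ a : P, a ≠ 0 ∧ a • v j ∈ Submodule.span P (Set.range w) := by
    intro j
    rw [hrange]
    by_cases hj : j ∈ s
    · exact ⟨1, one_ne_zero, by rw [one_smul]; exact Submodule.subset_span ⟨j, hj, rfl⟩⟩
    · exact hmax j hj
  choose den hden0 hden1 using hden
  let π : P := ∏ j, den j
  have hπ0 : π ≠ 0 := Finset.prod_ne_zero_iff.2 fun j _ => hden0 j
  have hπv : ∀ j, π • v j ∈ Submodule.span P (Set.range w) := by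
    intro j
    obtain ⟨c, hc⟩ : den j ∣ π := Finset.dvd_prod_of_mem _ (Finset.mem_univ j)
    rw [hc, mul_comm, mul_smul]
    exact Submodule.smul_mem _ _ (hden1 j)
  have hπa : ∀ x : Q, (LinearMap.lsmul P Q π) x ∈ Submodule.span P (Set.range w) := by
    intro x
    have hx : x ∈ Submodule.span P (Set.range v) := by rw [hv]; trivial
    have : Submodule.span P (Set.range v) ≤
        (Submodule.span P (Set.range w)).comap (LinearMap.lsmul P Q π) := by
      rw [Submodule.span_le]
      rintro _ ⟨j, rfl⟩
      exact hπv j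
    exact this hx
  let Θ : Q →ₗ[P] (Fin (Fintype.card s) → P) :=
    (Finsupp.linearEquivFunOnFinite P P _).toLinearMap ∘ₗ hw.repr ∘ₗ
      (LinearMap.lsmul P Q π).codRestrict _ hπa
  refine ⟨Fintype.card s, fun i => eq i, π, Θ, hπ0, hw, fun x => ?_⟩
  have := hw.linearCombination_repr ⟨_, hπa x⟩
  rw [Finsupp.linearCombination_apply, Finsupp.sum_fintype _ _ (by simp)] at this
  exact this.symm

/-- `R/J` as a module over the polynomial ring acting through `y`. -/
def LatMod (J : Ideal (MPoly n)) (_y : Fin k → MPoly n) : Type := MPoly n ⧸ J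

noncomputable instance (J : Ideal (MPoly n)) (y : Fin k → MPoly n) : AddCommGroup (LatMod J y) :=
  inferInstanceAs (AddCommGroup (MPoly n ⧸ J))

noncomputable instance (J : Ideal (MPoly n)) (y : Fin k → MPoly n) :
    Module (MPoly k) (LatMod J y) :=
  letI : Module (MPoly n ⧸ J) (LatMod J y) := inferInstanceAs (Module (MPoly n ⧸ J) (MPoly n ⧸ J))
  Module.compHom _ ((Ideal.Quotient.mk J).comp (aeval y : MPoly k →ₐ[ℂ] MPoly n).toRingHom)

/-- The quotient map onto `LatMod`. -/
noncomputable def LatMod.mk (J : Ideal (MPoly n)) (y : Fin k → MPoly n) : MPoly n →+ LatMod J y :=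
  (Ideal.Quotient.mk J).toAddMonoidHom

lemma LatMod.smul_mk (J : Ideal (MPoly n)) (y : Fin k → MPoly n) (p : MPoly k) (a : MPoly n) :
    p • LatMod.mk J y a = LatMod.mk J y (aeval y p * a) :=
  (map_mul (Ideal.Quotient.mk J) (aeval y p) a).symm

lemma LatMod.mk_eq_zero (J : Ideal (MPoly n)) (y : Fin k → MPoly n) (a : MPoly n) :
    LatMod.mk J y a = 0 ↔ a ∈ J := Ideal.Quotient.eq_zero_iff_mem

lemma LatMod.mk_surj (J : Ideal (MPoly n)) (y : Fin k → MPoly n) :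
    Function.Surjective (LatMod.mk J y) := Ideal.Quotient.mk_surjective

theorem exists_lattice {J : Ideal (MPoly n)} (hJ : IsHomogIdeal J) {y : Fin k → MPoly n}
    (hy : ∀ i, (y i).IsHomogeneous 1) {k0 : ℕ}
    (hfin : mId n ^ k0 ≤ J ⊔ Ideal.span (Set.range y)) (htf : TorsFree J y) :
    Nonempty (YLat J y) := by
  classical
  obtain ⟨q, e, he⟩ := lat_generators hJ hy hfin
  have hgen : ∀ d (a : MPoly n), a.IsHomogeneous d → ∃ p : Fin q → MPoly k,
      (∀ j, (p j).totalDegree ≤ d) ∧ LatMod.mk J y a = ∑ j, p j • LatMod.mk J y (e j) := by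
    intro d a ha
    obtain ⟨p, hp1, hp2⟩ := he d a ha
    refine ⟨p, hp1, ?_⟩
    rw [← LatMod.mk_eq_zero J y, map_sub, sub_eq_zero, map_sum] at hp2
    rw [hp2]
    exact Finset.sum_congr rfl fun j _ => (LatMod.smul_mk J y _ _).symm
  obtain ⟨m, idx, π, Θ, hπ0, hind, hexp⟩ := abstract_lattice (P := MPoly k)
    (fun j => LatMod.mk J y (e j)) (by
      rw [eq_top_iff]
      rintro x -
      obtain ⟨a, rfl⟩ := LatMod.mk_surj J y x
      rw [← sum_homogeneousComponent a, map_sum]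
      refine Submodule.sum_mem _ fun i _ => ?_
      obtain ⟨p, -, hp⟩ := hgen i _ (homogeneousComponent_isHomogeneous i a)
      rw [hp]
      exact Submodule.sum_mem _ fun j _ => Submodule.smul_mem _ _
        (Submodule.subset_span ⟨j, rfl⟩))
  have hsm : ∀ (p : MPoly k) (a : MPoly n),
      Θ (LatMod.mk J y (aeval y p * a)) = p • Θ (LatMod.mk J y a) := fun p a => by
    rw [← LatMod.smul_mk, map_smul]
  let Θ' : MPoly n →ₗ[ℂ] (Fin m → MPoly k) :=
    { toFun := fun a => Θ (LatMod.mk J y a)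
      map_add' := fun a b => by rw [map_add, map_add]
      map_smul' := by
        intro c a
        have := hsm (C c) a
        rw [algHom_C, algebraMap_eq] at this
        rw [RingHom.id_apply, smul_eq_C_mul, this]
        funext i
        simp [smul_eq_C_mul] }
  refine ⟨⟨m, Finset.univ.sup fun j => Finset.univ.sup fun i =>
      (Θ' (e j) i).totalDegree, Θ', fun i => e (idx i), π, hπ0, ?_, hsm, ?_, ?_, ?_⟩⟩
  · intro a
    constructor
    · intro h
      apply htf π a hπ0
      rw [← LatMod.mk_eq_zero J y, ← LatMod.smul_mk, hexp]
      change Θ (LatMod.mk J y a) = 0 at h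
      simp [h]
    · intro h
      change Θ (LatMod.mk J y a) = 0
      rw [(LatMod.mk_eq_zero J y a).2 h, map_zero]
  · intro d a ha i
    obtain ⟨p, hp1, hp2⟩ := hgen d a ha
    have h1 : Θ' a = ∑ j, p j • Θ' (e j) := by
      change Θ (LatMod.mk J y a) = _
      rw [hp2, map_sum]
      exact Finset.sum_congr rfl fun j _ => by rw [map_smul]; rfl
    rw [h1, Finset.sum_apply]
    refine totalDegree_finsetSum_le fun j _ => ?_
    rw [Pi.smul_apply, smul_eq_mul]
    refine (totalDegree_mul _ _).trans (add_le_add (hp1 j) ?_)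
    exact (Finset.le_sup (f := fun i => (Θ' (e j) i).totalDegree) (Finset.mem_univ i)).trans
      (Finset.le_sup (f := fun j => Finset.univ.sup fun i => (Θ' (e j) i).totalDegree)
        (Finset.mem_univ j))
  · intro a
    rw [← LatMod.mk_eq_zero J y, map_sub, map_sum, ← LatMod.smul_mk, hexp, sub_eq_zero]
    exact Finset.sum_congr rfl fun i _ => LatMod.smul_mk J y _ _
  · intro c hc
    rw [← LatMod.mk_eq_zero J y, map_sum] at hc
    have h1 : ∑ i, c i • LatMod.mk J y (e (idx i)) = 0 := by
      rw [← hc]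
      exact Finset.sum_congr rfl fun i _ => LatMod.smul_mk J y _ _
    funext i
    exact Fintype.linearIndependent_iff.1 hind c h1 i

end Lat
end RaoGenus

namespace RaoGenus

open MvPolynomial

/-! ### General linear forms -/

section GenLin

variable {n : ℕ}

lemma hN_drop_sat {I : Ideal (MPoly n)} (hI : IsHomogIdeal I) {L : MPoly n}
    (hL : L.IsHomogeneous 1) (hL0 : L ≠ 0) (hinj : ∀ a, L * a ∈ satIdeal I → a ∈ satIdeal I) :
    ∃ T, ∀ t ≥ T, hN (I ⊔ Ideal.span {L}) (t + 1) + hN I t = hN I (t + 1) := by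
  obtain ⟨T, hT⟩ := sat_eq_large hI
  exact ⟨T, fun t ht => hN_drop hI hL hL0 fun f hf hLf =>
    hT t ht f hf (hinj f (le_sat I hLf))⟩

lemma mem_of_hN_zero {I : Ideal (MPoly n)} {t : ℕ} (h : hN I t = 0) {f : MPoly n}
    (hf : f.IsHomogeneous t) : f ∈ I := by
  have h1 := hN_add_gr I t
  rw [h, zero_add] at h1
  have h2 : gr I t = homogeneousSubmodule (Fin n) ℂ t :=
    Submodule.eq_of_le_of_finrank_eq (fun x hx => (mem_gr.1 hx).1) h1
  have h3 : f ∈ gr I t := by rw [h2]; exact hf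
  exact (mem_gr.1 h3).2

lemma exists_pow_le_of_large {Q : Ideal (MPoly n)} {T : ℕ}
    (h : ∀ f : MPoly n, f.IsHomogeneous T → f ∈ Q) : mId n ^ T ≤ Q := by
  rw [mId_eq, pow_idealOfVars_eq_span, Ideal.span_le]
  rintro _ ⟨x, hx, rfl⟩
  exact h _ (isHomogeneous_monomial _ (by simpa using hx))

lemma hN_sect_linear {I : Ideal (MPoly n)} (hI : IsHomogIdeal I) {s π pa : ℤ}
    (hinv : SurfInv I s π pa) {L : MPoly n} (hL : L.IsHomogeneous 1) (hL0 : L ≠ 0)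
    (hinj : ∀ a, L * a ∈ satIdeal I → a ∈ satIdeal I) :
    ∃ T : ℕ, ∀ t ≥ T, (hN (I ⊔ Ideal.span {L}) t : ℤ) = s * t + 1 - π := by
  obtain ⟨T, hT⟩ := hN_drop_sat hI hL hL0 hinj
  obtain ⟨N0, hN0⟩ := hinv
  refine ⟨T + N0.toNat + 1, fun t ht => ?_⟩
  obtain ⟨u, rfl⟩ : ∃ u, t = u + 1 := ⟨t - 1, by omega⟩
  have h1 := hT u (by omega)
  have h2 := hN0 u (by omega)
  have h3 := hN0 (u + 1 : ℕ) (by omega)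
  rw [hilbZ_natCast] at h2 h3
  have h4 : ((u + 1 : ℕ) : ℤ) * (((u + 1 : ℕ) : ℤ) + 1) / 2 = (u : ℤ) * (u + 1) / 2 + (u + 1) := by
    rw [← Int.add_mul_ediv_right _ _ (by norm_num : (2 : ℤ) ≠ 0)]
    congr 1
    push_cast
    ring
  rw [h4] at h3
  have h1' : (hN (I ⊔ Ideal.span {L}) (u + 1) : ℤ) + hN I u = hN I (u + 1) := by exact_mod_cast h1
  push_cast at h3 ⊢
  linarith

lemma hN_sect_const {I : Ideal (MPoly n)} (hI : IsHomogIdeal I) {s c : ℤ} {T : ℕ}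
    (hinv : ∀ t ≥ T, (hN I t : ℤ) = s * t + c) {L : MPoly n} (hL : L.IsHomogeneous 1)
    (hL0 : L ≠ 0) (hinj : ∀ a, L * a ∈ satIdeal I → a ∈ satIdeal I) :
    ∃ T : ℕ, ∀ t ≥ T, (hN (I ⊔ Ideal.span {L}) t : ℤ) = s := by
  obtain ⟨T', hT⟩ := hN_drop_sat hI hL hL0 hinj
  refine ⟨T + T' + 1, fun t ht => ?_⟩
  obtain ⟨u, rfl⟩ : ∃ u, t = u + 1 := ⟨t - 1, by omega⟩
  have h1 := hT u (by omega)
  have h2 := hinv u (by omega)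
  have h3 := hinv (u + 1 : ℕ) (by omega)
  have h1' : (hN (I ⊔ Ideal.span {L}) (u + 1) : ℤ) + hN I u = hN I (u + 1) := by exact_mod_cast h1
  push_cast at h3 ⊢
  linarith

/-- A parameter on a one-dimensional quotient cuts out a quotient of finite length. -/
lemma pow_le_of_const {I : Ideal (MPoly n)} (hI : IsHomogIdeal I) {s : ℤ} {T : ℕ}
    (hinv : ∀ t ≥ T, (hN I t : ℤ) = s) {L : MPoly n} (hL : L.IsHomogeneous 1)
    (hL0 : L ≠ 0) (hinj : ∀ a, L * a ∈ satIdeal I → a ∈ satIdeal I) :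
    ∃ k : ℕ, mId n ^ k ≤ I ⊔ Ideal.span {L} := by
  obtain ⟨T', hT'⟩ := hN_sect_const hI (s := 0) (c := s) (T := T) (by simpa using hinv) hL hL0 hinj
  refine ⟨T', exists_pow_le_of_large fun f hf => mem_of_hN_zero ?_ hf⟩
  exact_mod_cast hT' T' le_rfl

lemma sat_prime {I : Ideal (MPoly n)} (hI : I.IsPrime) (hm : ¬ mId n ≤ I) : satIdeal I = I := by
  refine le_antisymm (fun f hf => ?_) (le_sat I)
  obtain ⟨k, hk⟩ := mem_sat_iff.1 hf
  obtain ⟨x, hx, hxI⟩ := SetLike.not_le_iff_exists.1 hm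
  exact (hI.mem_or_mem (hk (x ^ k) (Ideal.pow_mem_pow hx k))).resolve_left
    fun h => hxI (hI.mem_of_pow_mem _ h)

lemma not_le_of_krull {I : Ideal (MPoly n)} (hI : IsSurface I) : ¬ mId n ≤ I := by
  intro h
  have h1 : Function.Surjective (algebraMap ℂ (MPoly n ⧸ I)) := by
    intro x
    obtain ⟨a, rfl⟩ := Ideal.Quotient.mk_surjective x
    refine ⟨a.coeff 0, ?_⟩
    have h2 : a - C (a.coeff 0) ∈ mId n := by
      rw [mId_eq, ← pow_one (idealOfVars (Fin n) ℂ), mem_pow_idealOfVars_iff]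
      intro x hx
      by_contra hlt
      have hx0 : x = 0 := by
        have : x.degree = 0 := by omega
        exact (Finsupp.degree_eq_zero_iff x).1 this
      rw [hx0] at hx
      simp at hx
    have h3 := Ideal.Quotient.eq.2 (h h2)
    rw [h3]
    rfl
  have h2 := ringKrullDim_le_of_surjective _ h1
  rw [hI.2.2, ringKrullDim_eq_zero_of_field] at h2
  exact absurd h2 (by decide)

lemma ringHom_finite_of_gen {A B : Type*} [CommRing A] [CommRing B] (f : A →+* B) {q : ℕ}
    (e : Fin q → B) (h : ∀ x, ∃ p : Fin q → A, x = ∑ j, f (p j) * e j) : f.Finite := by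
  letI := f.toAlgebra
  refine ⟨Submodule.fg_iff_exists_fin_generating_family.2 ⟨q, e, ?_⟩⟩
  rw [eq_top_iff]
  rintro x -
  obtain ⟨p, rfl⟩ := h x
  exact Submodule.sum_mem _ fun j _ => Submodule.smul_mem _ (p j) (Submodule.subset_span ⟨j, rfl⟩)

/-- Finiteness over the subring generated by linear forms, as integrality. -/
lemma isIntegral_of_finite {k : ℕ} {J : Ideal (MPoly n)} (hJ : IsHomogIdeal J)
    {y : Fin k → MPoly n} (hy : ∀ i, (y i).IsHomogeneous 1) {k0 : ℕ}
    (hfin : mId n ^ k0 ≤ J ⊔ Ideal.span (Set.range y)) :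
    ((Ideal.Quotient.mk J).comp (aeval y : MPoly k →ₐ[ℂ] MPoly n).toRingHom).IsIntegral := by
  apply RingHom.Finite.to_isIntegral
  obtain ⟨q, e, he⟩ := lat_generators hJ hy hfin
  refine ringHom_finite_of_gen _ (fun j => Ideal.Quotient.mk J (e j)) fun x => ?_
  obtain ⟨a, rfl⟩ := Ideal.Quotient.mk_surjective x
  choose p hp using fun i => he i _ (homogeneousComponent_isHomogeneous i a)
  refine ⟨fun j => ∑ i ∈ Finset.range (a.totalDegree + 1), p i j, ?_⟩
  conv_lhs => rw [← sum_homogeneousComponent a, map_sum]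
  simp only [map_sum, Finset.sum_mul]
  rw [Finset.sum_comm]
  refine Finset.sum_congr rfl fun i _ => ?_
  rw [Ideal.Quotient.eq.2 (hp i).2, map_sum]
  exact Finset.sum_congr rfl fun j _ => map_mul _ _ _

lemma krull_le_of_integral {A B : Type*} [CommRing A] [CommRing B] (f : A →+* B)
    (hf : f.IsIntegral) : ringKrullDim B ≤ ringKrullDim A := by
  algebraize [f]
  have : Algebra.IsIntegral A B := ⟨hf⟩
  refine Order.krullDim_le_of_strictMono (PrimeSpectrum.comap f) ?_
  intro p q hpq
  have h1 : p.asIdeal < q.asIdeal := hpq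
  refine lt_of_le_of_ne (Ideal.comap_mono h1.le) ?_
  intro heq
  obtain ⟨x, hx, hxp⟩ := SetLike.exists_of_lt h1
  have := Ideal.comap_lt_comap_of_integral_mem_sdiff (R := A) (I := p.asIdeal) (J := q.asIdeal)
    h1.le ⟨hx, hxp⟩ (hf x)
  exact this.ne (congrArg PrimeSpectrum.asIdeal heq)

lemma alg_indep_of_finite {I : Ideal (MPoly n)} (hI : IsSurface I) {y : Fin 3 → MPoly n}
    (hy : ∀ i, (y i).IsHomogeneous 1) {k0 : ℕ}
    (hfin : mId n ^ k0 ≤ I ⊔ Ideal.span (Set.range y)) {p : MPoly 3} (hp : aeval y p ∈ I) :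
    p = 0 := by
  by_contra hp0
  have hintg := isIntegral_of_finite hI.1 hy hfin
  set f := ((Ideal.Quotient.mk I).comp (aeval y : MPoly 3 →ₐ[ℂ] MPoly n).toRingHom) with hf
  have hker : ∀ a ∈ Ideal.span {p}, f a = 0 := by
    intro a ha
    obtain ⟨c, rfl⟩ := Ideal.mem_span_singleton'.1 ha
    have : f p = 0 := Ideal.Quotient.eq_zero_iff_mem.2 hp
    rw [map_mul, this, mul_zero]
  let f' := Ideal.Quotient.lift (Ideal.span {p}) f hker
  have hintg' : f'.IsIntegral := by
    refine RingHom.IsIntegral.tower_top (Ideal.Quotient.mk (Ideal.span {p})) f' ?_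
    have : f'.comp (Ideal.Quotient.mk (Ideal.span {p})) = f := by ext <;> simp [f']
    rw [this]
    exact hintg
  have h1 := krull_le_of_integral f' hintg'
  have h2 := ringKrullDim_quotient_succ_le_of_nonZeroDivisor (mem_nonZeroDivisors_of_ne_zero hp0)
  rw [MvPolynomial.ringKrullDim_of_isNoetherianRing, ringKrullDim_eq_zero_of_field] at h2
  rw [hI.2.2] at h1
  have h3 : (3 : WithBot ℕ∞) + 1 ≤ 0 + (Nat.card (Fin 3) : ℕ) := (add_le_add_left h1 1).trans h2
  rw [Nat.card_fin] at h3
  exact absurd h3 (by decide)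

lemma torsFree_of_finite {I : Ideal (MPoly n)} (hI : IsSurface I) {y : Fin 3 → MPoly n}
    (hy : ∀ i, (y i).IsHomogeneous 1) {k0 : ℕ}
    (hfin : mId n ^ k0 ≤ I ⊔ Ideal.span (Set.range y)) : TorsFree I y := fun p a hp0 h =>
  (hI.2.1.mem_or_mem h).resolve_left fun h' => hp0 (alg_indep_of_finite hI hy hfin h')

lemma range_three (a b c : MPoly n) : Ideal.span (Set.range ![a, b, c]) =
    Ideal.span {a} ⊔ Ideal.span {b} ⊔ Ideal.span {c} := by
  rw [← Ideal.span_union, ← Ideal.span_union]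
  congr 1
  ext x
  simp [Fin.exists_fin_succ, eq_comm, or_assoc]

lemma range_two (a b : MPoly n) : Ideal.span (Set.range ![a, b]) =
    Ideal.span {a} ⊔ Ideal.span {b} := by
  rw [← Ideal.span_union]
  congr 1
  ext x
  simp [Fin.exists_fin_succ, eq_comm]

end GenLin
end RaoGenus

namespace RaoGenus

open MvPolynomial

/-! ### Torsion-freeness of the general hyperplane section -/

section TF

variable {n : ℕ}

lemma aeval_cons_eq {B : Type*} [CommRing B] [Algebra ℂ B] {k : ℕ} (y0 : B) (z : Fin k → B)
    (f : MPoly (k + 1)) : aeval (Fin.cons y0 z : Fin (k + 1) → B) f =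
      Polynomial.eval₂ (aeval z : MPoly k →ₐ[ℂ] B).toRingHom y0 (finSuccEquiv ℂ k f) := by
  induction f using MvPolynomial.induction_on with
  | C a => simp [finSuccEquiv_apply]
  | add p q hp hq => rw [map_add, map_add, Polynomial.eval₂_add, hp, hq]
  | mul_X p i hp =>
    rw [map_mul, map_mul, Polynomial.eval₂_mul, hp]
    refine Fin.cases ?_ (fun j => ?_) i
    · simp [finSuccEquiv_X_zero]
    · simp [finSuccEquiv_X_succ]

lemma aeval_cons_symm {B : Type*} [CommRing B] [Algebra ℂ B] {k : ℕ} (y0 : B) (z : Fin k → B)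
    (f : Polynomial (MPoly k)) :
    aeval (Fin.cons y0 z : Fin (k + 1) → B) ((finSuccEquiv ℂ k).symm f) =
      Polynomial.eval₂ (aeval z : MPoly k →ₐ[ℂ] B).toRingHom y0 f := by
  rw [aeval_cons_eq, AlgEquiv.apply_symm_apply]

lemma C_dvd_of_monic {A : Type*} [CommRing A] {p : A} {ν θ : Polynomial A} (hν : ν.Monic)
    (h : Polynomial.C p ∣ ν * θ) : Polynomial.C p ∣ θ := by
  rw [Polynomial.C_dvd_iff_dvd_coeff] at h ⊢
  have h1 : (ν * θ).map (Ideal.Quotient.mk (Ideal.span {p})) = 0 := by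
    ext i
    rw [Polynomial.coeff_map, Polynomial.coeff_zero, Ideal.Quotient.eq_zero_iff_mem,
      Ideal.mem_span_singleton]
    exact h i
  rw [Polynomial.map_mul, (hν.map _).mul_right_eq_zero_iff] at h1
  intro i
  rw [← Ideal.mem_span_singleton, ← Ideal.Quotient.eq_zero_iff_mem, ← Polynomial.coeff_map, h1,
    Polynomial.coeff_zero]

theorem torsFree_sect {I : Ideal (MPoly n)} (hI : IsSurface I) {y0 M N L : MPoly n}
    (hM : M.IsHomogeneous 1) (hN : N.IsHomogeneous 1) (hL : L.IsHomogeneous 1)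
    {y : Fin 3 → MPoly n} (hy : y = ![y0, M, N]) (hind : ∀ p : MPoly 3, aeval y p ∈ I → p = 0)
    (Y : YLat I y) {k : ℕ} (hfin : mId n ^ k ≤ I ⊔ Ideal.span (Set.range ![L, M, N]))
    (hLπ : ∀ a, L * a ∈ satIdeal (I ⊔ Ideal.span {aeval y Y.π}) →
      a ∈ satIdeal (I ⊔ Ideal.span {aeval y Y.π})) :
    TorsFree (sect I L) ![M, N] := by
  have hprime := hI.2.1
  -- `y0` is integral over `ℂ[M, N]` modulo `I + (L)`
  obtain ⟨ν, hνm, hν⟩ := isIntegral_of_finite (k := 2) (J := I ⊔ Ideal.span {L})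
    (IsHomogIdeal.sup_span hI.1 hL) (y := ![M, N]) (by
      intro i; fin_cases i <;> simpa) (k0 := k) (by
      rw [range_three] at hfin; rw [range_two]; simpa only [sup_assoc] using hfin)
    (Ideal.Quotient.mk _ y0)
  rw [← Polynomial.hom_eval₂, ← aeval_cons_symm, Ideal.Quotient.eq_zero_iff_mem] at hν
  change aeval ![y0, M, N] _ ∈ _ at hν
  rw [← hy] at hν
  obtain ⟨i1, hi1, i2, hi2, hν'⟩ := Submodule.mem_sup.1 hν
  obtain ⟨ν', rfl⟩ := Ideal.mem_span_singleton'.1 hi2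
  have hp3 : ∀ p : MPoly 2, aeval ![M, N] p =
      aeval y ((finSuccEquiv ℂ 2).symm (Polynomial.C p)) := by
    intro p
    rw [hy]
    change _ = aeval (Fin.cons y0 ![M, N] : Fin 3 → MPoly n) _
    rw [aeval_cons_symm, Polynomial.eval₂_C]
    rfl
  -- the case in which the torsion relation holds already modulo `I + (L)`
  have key : ∀ (p : MPoly 2) (a : MPoly n), p ≠ 0 → aeval ![M, N] p * a ∈ I ⊔ Ideal.span {L} →
      a ∈ sect I L := by
    intro p a hp0 hpa
    obtain ⟨j1, hj1, j2, hj2, hpa'⟩ := Submodule.mem_sup.1 hpa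
    obtain ⟨a', rfl⟩ := Ideal.mem_span_singleton'.1 hj2
    set P := (finSuccEquiv ℂ 2).symm (Polynomial.C p) with hP
    set V := (finSuccEquiv ℂ 2).symm ν with hV
    rw [hp3] at hpa'
    have hPI : aeval y P ∉ I := by
      intro h
      have := hind _ h
      rw [hP, EmbeddingLike.map_eq_zero_iff, Polynomial.C_eq_zero] at this
      exact hp0 this
    have hΘ : P • Y.Θ (ν' * a) = V • Y.Θ a' := by
      rw [← Y.smul, ← Y.smul, ← sub_eq_zero, ← map_sub, Y.ker]
      have : aeval y P * (ν' * a) - aeval y V * a' = ν' * j1 - a' * i1 := by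
        linear_combination (-ν') * hpa' + a' * hν'
      rw [this]
      exact I.sub_mem (I.mul_mem_left _ hj1) (I.mul_mem_left _ hi1)
    have hdvd : ∀ i, P ∣ Y.Θ a' i := by
      intro i
      have h1 := congrFun hΘ i
      simp only [Pi.smul_apply, smul_eq_mul] at h1
      have h2 : Polynomial.C p ∣ ν * finSuccEquiv ℂ 2 (Y.Θ a' i) := by
        refine ⟨finSuccEquiv ℂ 2 (Y.Θ (ν' * a) i), ?_⟩
        have := congrArg (finSuccEquiv ℂ 2) h1
        simpa [hP, hV] using this.symm
      obtain ⟨c, hc⟩ := C_dvd_of_monic hνm h2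
      refine ⟨(finSuccEquiv ℂ 2).symm c, ?_⟩
      apply (finSuccEquiv ℂ 2).injective
      simp [hc, hP]
    choose c hc using hdvd
    set Z := ∑ i, aeval y (c i) * Y.b i with hZ
    have h3 : aeval y Y.π * a' - aeval y P * Z ∈ I := by
      have := Y.expand a'
      convert this using 2
      rw [hZ, Finset.mul_sum]
      refine Finset.sum_congr rfl fun i _ => ?_
      rw [hc i, map_mul]
      ring
    have h4 : L * Z - aeval y Y.π * a ∈ I := by
      refine (hprime.mem_or_mem (?_ : aeval y P * (L * Z - aeval y Y.π * a) ∈ I)).resolve_left hPI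
      have : aeval y P * (L * Z - aeval y Y.π * a) =
          -L * (aeval y Y.π * a' - aeval y P * Z) - aeval y Y.π * j1 := by
        linear_combination aeval y Y.π * hpa'
      rw [this]
      exact I.sub_mem (I.mul_mem_left _ h3) (I.mul_mem_left _ hj1)
    have h5 : Z ∈ satIdeal (I ⊔ Ideal.span {aeval y Y.π}) := by
      apply hLπ
      apply le_sat
      have : L * Z = (L * Z - aeval y Y.π * a) + aeval y Y.π * a := by ring
      rw [this]
      exact Ideal.add_mem _ (Ideal.mem_sup_left h4) (Ideal.mem_sup_right
        (Ideal.mul_mem_right _ _ (Ideal.mem_span_singleton_self _)))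
    obtain ⟨K, hK⟩ := mem_sat_iff.1 h5
    refine mem_sat_iff.2 ⟨K, fun f hf => ?_⟩
    obtain ⟨l1, hl1, l2, hl2, hfz⟩ := Submodule.mem_sup.1 (hK f hf)
    obtain ⟨z, rfl⟩ := Ideal.mem_span_singleton'.1 hl2
    have hπI : aeval y Y.π ∉ I := fun h => Y.π_ne (hind _ h)
    have h6 : f * a - z * L ∈ I := by
      refine (hprime.mem_or_mem (?_ : aeval y Y.π * (f * a - z * L) ∈ I)).resolve_left hπI
      have : aeval y Y.π * (f * a - z * L) =
          -f * (L * Z - aeval y Y.π * a) + L * l1 := by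
        linear_combination (-L) * hfz
      rw [this]
      exact I.add_mem (I.mul_mem_left _ h4) (I.mul_mem_left _ hl1)
    have : f * a = (f * a - z * L) + z * L := by ring
    rw [this]
    exact Ideal.add_mem _ (Ideal.mem_sup_left h6) (Ideal.mem_sup_right
        (Ideal.mul_mem_left _ _ (Ideal.mem_span_singleton_self _)))
  intro p a hp0 hpa
  obtain ⟨K, hK⟩ := mem_sat_iff.1 hpa
  refine mem_sat_of_pow (k := K) fun f hf => key p (f * a) hp0 ?_
  have := hK f hf
  rwa [show aeval ![M, N] p * (f * a) = f * (aeval ![M, N] p * a) by ring]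

end TF
end RaoGenus

namespace RaoGenus

open MvPolynomial

/-! ### Integral fractions on a hyperplane section -/

section Good

variable {n : ℕ}

/-- The conditions on the forms `L, M, N` relative to the surface `V(I)`: finiteness of the
projection, torsion-freeness of the hyperplane section by `L`, and reducedness of the affine
part of the section by `L` and `M`. -/
structure Good (I : Ideal (MPoly n)) (L M N : MPoly n) : Prop where
  surf : IsSurface I
  hL : L.IsHomogeneous 1
  hM : M.IsHomogeneous 1
  hN : N.IsHomogeneous 1
  fin : ∃ k, mId n ^ k ≤ I ⊔ Ideal.span (Set.range ![L, M, N])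
  tf : TorsFree (sect I L) ![M, N]
  red : (I ⊔ Ideal.span {L} ⊔ Ideal.span {M} ⊔ Ideal.span {N - 1}).IsRadical

variable {I : Ideal (MPoly n)} {L M N : MPoly n}

lemma Good.homogJ (h : Good I L M N) : IsHomogIdeal (sect I L) :=
  IsHomogIdeal.sat (IsHomogIdeal.sup_span h.surf.1 h.hL)

lemma le_sect : I ⊔ Ideal.span {L} ≤ sect I L := le_sat _

lemma Good.mul_M (h : Good I L M N) {a : MPoly n} (ha : M * a ∈ sect I L) : a ∈ sect I L :=
  h.tf (X 0) a (X_ne_zero _) (by simpa using ha)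

lemma Good.mul_N (h : Good I L M N) {a : MPoly n} (ha : N * a ∈ sect I L) : a ∈ sect I L :=
  h.tf (X 1) a (X_ne_zero _) (by simpa using ha)

lemma Good.pow_M (h : Good I L M N) {k : ℕ} {a : MPoly n} (ha : M ^ k * a ∈ sect I L) :
    a ∈ sect I L :=
  h.tf (X 0 ^ k) a (pow_ne_zero _ (X_ne_zero _)) (by simpa using ha)

lemma Good.pow_N (h : Good I L M N) {k : ℕ} {a : MPoly n} (ha : N ^ k * a ∈ sect I L) :
    a ∈ sect I L :=
  h.tf (X 1 ^ k) a (pow_ne_zero _ (X_ne_zero _)) (by simpa using ha)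

lemma Good.latJ (h : Good I L M N) : Nonempty (YLat (sect I L) ![M, N]) := by
  obtain ⟨k, hk⟩ := h.fin
  refine exists_lattice h.homogJ (k0 := k) (fun i => ?_) (hk.trans ?_) h.tf
  · fin_cases i
    · exact h.hM
    · exact h.hN
  · rw [range_three, range_two, sup_assoc, ← sup_assoc I]
    exact sup_le_sup_right le_sect _

lemma Good.homog_y (h : Good I L M N) (i : Fin 3) : (![L, M, N] i).IsHomogeneous 1 := by
  fin_cases i
  · exact h.hL
  · exact h.hM
  · exact h.hN

lemma Good.indep (h : Good I L M N) {p : MPoly 3} (hp : aeval ![L, M, N] p ∈ I) : p = 0 := by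
  obtain ⟨k, hk⟩ := h.fin
  exact alg_indep_of_finite h.surf h.homog_y hk hp

lemma Good.latI (h : Good I L M N) : Nonempty (YLat I ![L, M, N]) := by
  obtain ⟨k, hk⟩ := h.fin
  exact exists_lattice h.surf.1 h.homog_y hk (torsFree_of_finite h.surf h.homog_y hk)

lemma Good.L_notin (h : Good I L M N) : L ∉ I := fun hL =>
  X_ne_zero (R := ℂ) (0 : Fin 3) (h.indep (p := X 0) (by simpa using hL))

lemma Good.M_notin (h : Good I L M N) : M ∉ I := fun hL =>
  X_ne_zero (R := ℂ) (1 : Fin 3) (h.indep (p := X 1) (by simpa using hL))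

lemma Good.N_notin (h : Good I L M N) : N ∉ I := fun hL =>
  X_ne_zero (R := ℂ) (2 : Fin 3) (h.indep (p := X 2) (by simpa using hL))

lemma Good.N_ne (h : Good I L M N) : N ≠ 0 := fun h0 => h.N_notin (h0 ▸ I.zero_mem)

lemma mem_of_mem_mId (hN : N.IsHomogeneous 1) (k : ℕ) : N ^ k ∈ mId n ^ k :=
  mem_mId_pow_of_homog (by simpa using hN.pow k) le_rfl

lemma X_pow_dvd {k : ℕ} {i j : Fin k} (hij : i ≠ j) {a b : ℕ} {f : MPoly k}
    (h : (X i : MPoly k) ^ a ∣ X j ^ b * f) : (X i : MPoly k) ^ a ∣ f := by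
  refine Prime.pow_dvd_of_dvd_mul_left X_prime a (fun h' => ?_) h
  exact hij (X_dvd_X.1 (X_prime.dvd_of_dvd_pow h'))

lemma le_totalDegree_of_dvd {k : ℕ} {i : Fin k} {a : ℕ} {f : MPoly k} (hf : f ≠ 0)
    (h : (X i : MPoly k) ^ a ∣ f) : a ≤ f.totalDegree := by
  obtain ⟨c, rfl⟩ := h
  rw [totalDegree_mul_of_isDomain (left_ne_zero_of_mul hf) (right_ne_zero_of_mul hf),
    totalDegree_X_pow]
  omega

/-- The reduction step behind `Good.rad`: a nilpotent is divisible by `M` up to powers of `N`. -/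
lemma Good.rad_step (h : Good I L M N) {c : MPoly n} {d e : ℕ} (hc : c.IsHomogeneous d)
    (hce : c ^ e ∈ sect I L) : ∃ k d' c', IsHomogeneous c' d' ∧ N ^ k * c - M * c' ∈ sect I L := by
  obtain ⟨K, hK⟩ := mem_sat_iff.1 hce
  have h1 : N ^ K * c ^ e ∈ I ⊔ Ideal.span {L} := hK _ (mem_of_mem_mId h.hN K)
  have h2 : c ^ e ∈ I ⊔ Ideal.span {L} ⊔ Ideal.span {M} ⊔ Ideal.span {N - 1} := by
    obtain ⟨z, hz⟩ := sub_one_dvd_pow_sub_one N K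
    have : c ^ e = N ^ K * c ^ e - (N - 1) * (z * c ^ e) := by
      linear_combination (-c ^ e) * hz
    rw [this]
    exact Ideal.sub_mem _ (Ideal.mem_sup_left (Ideal.mem_sup_left h1))
      (Ideal.mem_sup_right (Ideal.mul_mem_right _ _ (Ideal.mem_span_singleton_self _)))
  have h3 := h.red ⟨e, h2⟩
  have hQ := IsHomogIdeal.sup_span h.surf.1 h.hL
  obtain ⟨k, hk⟩ := pow_mul_mem_of_mem_sup_sub_one (IsHomogIdeal.sup_span hQ h.hM) h.hN hc h3
  have h4 : N ^ (k + 1) * c ∈ I ⊔ Ideal.span {L} ⊔ Ideal.span {M} := by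
    rw [pow_succ', mul_assoc]; exact Ideal.mul_mem_left _ _ hk
  have h5 : (N ^ (k + 1) * c).IsHomogeneous (1 + (k + d)) := by
    have := (h.hN.pow (k + 1)).mul hc
    convert this using 1
    ring
  obtain ⟨c', hc', hm⟩ := exists_homog_of_mem_sup hQ h.hM h5 h4
  exact ⟨k + 1, k + d, c', hc', le_sect hm⟩

/-- The hyperplane section is reduced. -/
theorem Good.rad (h : Good I L M N) {b : MPoly n} {d e : ℕ} (hb : b.IsHomogeneous d)
    (hbe : b ^ e ∈ sect I L) : b ∈ sect I L := by
  obtain ⟨Y⟩ := h.latJ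
  have key : ∀ i, ∃ k d' c, IsHomogeneous c d' ∧ c ^ e ∈ sect I L ∧
      N ^ k * b - M ^ i * c ∈ sect I L := by
    intro i
    induction i with
    | zero => exact ⟨0, d, b, hb, hbe, by simp⟩
    | succ i ih =>
      obtain ⟨k, d', c, hc, hce, hm⟩ := ih
      obtain ⟨k', d'', c', hc', hm'⟩ := h.rad_step hc hce
      refine ⟨k + k', d'', c', hc', ?_, ?_⟩
      · apply h.pow_M (k := e)
        have h1 : N ^ (k' * e) * c ^ e - M ^ e * c' ^ e ∈ sect I L := by
          obtain ⟨z, hz⟩ := sub_dvd_pow_sub_pow (N ^ k' * c) (M * c') e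
          have : N ^ (k' * e) * c ^ e - M ^ e * c' ^ e = (N ^ k' * c - M * c') * z := by
            rw [← hz]; ring
          rw [this]; exact Ideal.mul_mem_right _ _ hm'
        have h2 := Ideal.sub_mem _ (Ideal.mul_mem_left _ (N ^ (k' * e)) hce) h1
        rwa [sub_sub_cancel] at h2
      · have := Ideal.add_mem _ (Ideal.mul_mem_left _ (N ^ k') hm)
          (Ideal.mul_mem_left _ (M ^ i) hm')
        convert this using 1
        ring
  rw [← Y.ker]
  funext j
  by_contra hne
  obtain ⟨k, d', c, -, -, hm⟩ := key ((Y.Θ b j).totalDegree + 1)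
  have h1 : (X 1 : MPoly 2) ^ k • Y.Θ b = (X 0 : MPoly 2) ^ ((Y.Θ b j).totalDegree + 1) • Y.Θ c := by
    rw [← Y.smul, ← Y.smul, ← sub_eq_zero, ← map_sub, Y.ker]
    simpa using hm
  have h2 : (X 0 : MPoly 2) ^ ((Y.Θ b j).totalDegree + 1) ∣ X 1 ^ k * Y.Θ b j :=
    ⟨Y.Θ c j, congrFun h1 j⟩
  have h3 := le_totalDegree_of_dvd hne (X_pow_dvd (by decide) h2)
  omega

/-- An integrality condition on the fraction `b / N ^ κ` forces divisibility of coordinates. -/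
lemma dvd_theta {k : ℕ} {J : Ideal (MPoly n)} {y : Fin k → MPoly n} (Y : YLat J y) {iM iN : Fin k}
    (hne : iN ≠ iM) {κ : ℕ} {b b' : MPoly n} (h : y iM ^ κ * b - y iN ^ κ * b' ∈ J) (i : ℕ)
    (j : Fin Y.m) : (X iN : MPoly k) ^ (κ * i) ∣ Y.Θ (b ^ i) j := by
  refine X_pow_dvd hne (b := κ * i) ⟨Y.Θ (b' ^ i) j, ?_⟩
  have h1 : (X iM : MPoly k) ^ (κ * i) • Y.Θ (b ^ i) = (X iN : MPoly k) ^ (κ * i) • Y.Θ (b' ^ i) := by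
    rw [← Y.smul, ← Y.smul, ← sub_eq_zero, ← map_sub, Y.ker]
    obtain ⟨z, hz⟩ := sub_dvd_pow_sub_pow (y iM ^ κ * b) (y iN ^ κ * b') i
    rw [map_pow, map_pow, aeval_X, aeval_X]
    have : y iM ^ (κ * i) * b ^ i - y iN ^ (κ * i) * b' ^ i =
        (y iM ^ κ * b - y iN ^ κ * b') * z := by rw [← hz]; ring
    rw [this]; exact Ideal.mul_mem_right _ _ h
  exact congrFun h1 j

/-- A fraction `b / N ^ κ` of degree zero, integral in the above sense, satisfies an equation
with constant coefficients. -/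
lemma alg_of_integral {k : ℕ} {J : Ideal (MPoly n)} {y : Fin k → MPoly n} (Y : YLat J y)
    {iM iN : Fin k} (hne : iN ≠ iM) (hy0 : y iN ≠ 0) {κ : ℕ} {b b' : MPoly n}
    (hb : b.IsHomogeneous κ) (h : y iM ^ κ * b - y iN ^ κ * b' ∈ J) :
    ∃ S : Multiset ℂ, (S.map fun ρ => b - C ρ * y iN ^ κ).prod ∈ J := by
  choose θ hθ using fun i j => dvd_theta Y hne h i j
  have hdeg : ∀ i j, θ i j ∈ restrictTotalDegree (Fin k) ℂ Y.δ := by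
    intro i j
    rw [mem_restrictTotalDegree]
    by_cases h0 : θ i j = 0
    · simp [h0]
    · have h1 := Y.deg (κ * i) (b ^ i) (hb.pow i) j
      rw [hθ, totalDegree_mul_of_isDomain (pow_ne_zero _ (X_ne_zero _)) h0, totalDegree_X_pow] at h1
      omega
  let v : ℕ → Fin Y.m → restrictTotalDegree (Fin k) ℂ Y.δ := fun i j => ⟨θ i j, hdeg i j⟩
  have hdep : ¬ LinearIndependent ℂ v := by
    intro hli
    haveI := hli.finite
    exact not_finite ℕ
  rw [linearIndependent_iff] at hdep
  push Not at hdep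
  obtain ⟨l, hl, hl0⟩ := hdep
  obtain ⟨q, hq⟩ : ∃ q : Polynomial ℂ, ∀ i, q.coeff i = l i := by
    refine ⟨∑ i ∈ l.support, Polynomial.monomial i (l i), fun i => ?_⟩
    simp only [Polynomial.finset_sum_coeff, Polynomial.coeff_monomial, Finset.sum_ite_eq']
    simp +contextual [Finsupp.mem_support_iff, eq_comm]
  have hq0 : q ≠ 0 := fun h0 => hl0 (Finsupp.ext fun i => by rw [← hq, h0]; rfl)
  have hqv : ∀ j, ∑ i ∈ Finset.range (q.natDegree + 1), C (q.coeff i) * θ i j = 0 := by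
    intro j
    have h1 := congrArg (fun w : Fin Y.m → restrictTotalDegree (Fin k) ℂ Y.δ => (w j : MPoly k)) hl
    simp only [Finsupp.linearCombination_apply, Finsupp.sum, Finset.sum_apply, Pi.smul_apply,
      AddSubmonoidClass.coe_finset_sum, Submodule.coe_smul, Pi.zero_apply, Submodule.coe_zero] at h1
    rw [← h1]
    symm
    have hsub : l.support ⊆ Finset.range (q.natDegree + 1) := fun i hi =>
      Finset.mem_range_succ_iff.2 (Polynomial.le_natDegree_of_mem_supp i
        (by rw [Polynomial.mem_support_iff, hq]; exact Finsupp.mem_support_iff.1 hi))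
    rw [Finset.sum_subset hsub]
    · exact Finset.sum_congr rfl fun i _ => by rw [smul_eq_C_mul, hq]
    · intro i _ hi
      rw [Finsupp.notMem_support_iff.1 hi, zero_smul]
  set e := q.natDegree with he
  have hmem : ∑ i ∈ Finset.range (e + 1), C (q.coeff i) * (y iN ^ (κ * (e - i)) * b ^ i) ∈ J := by
    rw [← Y.ker, map_sum]
    funext j
    rw [Finset.sum_apply]
    have : ∀ i ∈ Finset.range (e + 1), Y.Θ (C (q.coeff i) * (y iN ^ (κ * (e - i)) * b ^ i)) j =
        (X iN : MPoly k) ^ (κ * e) * (C (q.coeff i) * θ i j) := by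
      intro i hi
      have hle : i ≤ e := Finset.mem_range_succ_iff.1 hi
      have h1 := Y.smul (C (q.coeff i) * X iN ^ (κ * (e - i))) (b ^ i)
      have h0 : aeval y (C (q.coeff i) * X iN ^ (κ * (e - i)) : MPoly k) =
          C (q.coeff i) * y iN ^ (κ * (e - i)) := by simp
      rw [h0, mul_assoc] at h1
      rw [h1, Pi.smul_apply, smul_eq_mul, hθ]
      have : κ * e = κ * (e - i) + κ * i := by rw [← mul_add]; congr 1; omega
      rw [this, pow_add]
      ring
    rw [Finset.sum_congr rfl this, ← Finset.mul_sum, hqv j, mul_zero]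
    rfl
  refine ⟨q.roots, ?_⟩
  -- comparison with the factorisation over `ℂ`, in the field of fractions
  have hfac : C q.leadingCoeff * (q.roots.map fun ρ => b - C ρ * y iN ^ κ).prod =
      ∑ i ∈ Finset.range (e + 1), C (q.coeff i) * (y iN ^ (κ * (e - i)) * b ^ i) := by
    apply IsFractionRing.injective (MPoly n) (FractionRing (MPoly n))
    set ψ := algebraMap (MPoly n) (FractionRing (MPoly n)) with hψ
    have hν0 : ψ (y iN ^ κ) ≠ 0 := by
      rw [hψ, Ne, IsFractionRing.to_map_eq_zero_iff]
      exact pow_ne_zero _ hy0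
    set ν := ψ (y iN ^ κ) with hν
    let ι : ℂ →+* FractionRing (MPoly n) := ψ.comp C
    have hsp : q = Polynomial.C q.leadingCoeff * (q.roots.map fun ρ => Polynomial.X - Polynomial.C ρ).prod :=
      (IsAlgClosed.splits q).eq_prod_roots
    have hcard : Multiset.card q.roots = e := (IsAlgClosed.splits q).natDegree_eq_card_roots.symm
    have h1 : Polynomial.eval₂ ι (ψ b / ν) q * ν ^ e =
        ι q.leadingCoeff * (q.roots.map fun ρ => ψ b - ι ρ * ν).prod := by
      conv_lhs => rw [hsp]
      rw [Polynomial.eval₂_mul, Polynomial.eval₂_C, ← hcard, mul_assoc]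
      congr 1
      rw [← Polynomial.coe_eval₂RingHom, map_multiset_prod, Multiset.map_map, ← Multiset.prod_replicate,
        ← Multiset.map_const', ← Multiset.prod_map_mul]
      refine congrArg _ (Multiset.map_congr rfl fun ρ _ => ?_)
      simp
      field_simp
    have h2 : Polynomial.eval₂ ι (ψ b / ν) q * ν ^ e =
        ∑ i ∈ Finset.range (e + 1), ι (q.coeff i) * (ν ^ (e - i) * ψ b ^ i) := by
      rw [Polynomial.eval₂_eq_sum_range, Finset.sum_mul]
      refine Finset.sum_congr rfl fun i hi => ?_
      have hle : i ≤ e := Finset.mem_range_succ_iff.1 hi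
      rw [div_pow, mul_assoc]
      congr 1
      rw [show ν ^ e = ν ^ (e - i) * ν ^ i by rw [← pow_add]; congr 1; omega]
      field_simp
    rw [map_mul, map_multiset_prod, Multiset.map_map, map_sum]
    rw [h2] at h1
    have h3 : (fun ρ => ψ b - ι ρ * ν) = ψ ∘ fun ρ => b - C ρ * y iN ^ κ := by
      funext ρ
      simp [ι, hν]
    rw [h3] at h1
    refine h1.symm.trans (Finset.sum_congr rfl fun i _ => ?_)
    rw [map_mul, map_mul, map_pow ψ b, hν, ← map_pow, ← pow_mul]
    rfl
  rw [← hfac] at hmem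
  have hl : q.leadingCoeff ≠ 0 := Polynomial.leadingCoeff_ne_zero.2 hq0
  have h4 := Ideal.mul_mem_left _ (C q.leadingCoeff⁻¹) hmem
  rwa [← mul_assoc, ← C_mul, inv_mul_cancel₀ hl, C_1, one_mul] at h4

/-- Sections of negative degree vanish. -/
lemma Good.neg (h : Good I L M N) {b b' : MPoly n} {d k : ℕ} (hb : b.IsHomogeneous d) (hd : d < k)
    (hm : M ^ k * b - N ^ k * b' ∈ sect I L) : b ∈ sect I L := by
  obtain ⟨Y⟩ := h.latJ
  refine h.rad hb (e := Y.δ + 1) ?_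
  rw [← Y.ker]
  funext j
  by_contra hne
  have h1 := dvd_theta Y (iM := 0) (iN := 1) (by decide) (κ := k) (b := b) (b' := b') hm (Y.δ + 1) j
  have h2 := le_totalDegree_of_dvd hne h1
  have h3 := Y.deg _ _ (hb.pow (Y.δ + 1)) j
  have h4 : (d + 1) * (Y.δ + 1) ≤ k * (Y.δ + 1) := Nat.mul_le_mul_right _ hd
  have h5 : (d + 1) * (Y.δ + 1) = d * (Y.δ + 1) + Y.δ + 1 := by ring
  omega

/-- The hyperplane section of a nondegenerate surface spans the hyperplane. -/
lemma Good.linear (h : Good I L M N) (hnd : Nondeg I) {a : MPoly n} (ha : a.IsHomogeneous 1)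
    (haJ : a ∈ sect I L) : ∃ ρ : ℂ, a = C ρ * L := by
  obtain ⟨K, hK⟩ := mem_sat_iff.1 haJ
  have hP : I.IsPrime := h.surf.2.1
  have hhom : ∀ {T : MPoly n}, T.IsHomogeneous 1 → (T ^ K * a).IsHomogeneous (1 + K) := by
    intro T hT
    have := (hT.pow K).mul ha
    convert this using 1
    ring
  obtain ⟨a1, ha1, h1⟩ := exists_homog_of_mem_sup h.surf.1 h.hL (hhom h.hN)
    (hK _ (mem_of_mem_mId h.hN K))
  obtain ⟨a2, ha2, h2⟩ := exists_homog_of_mem_sup h.surf.1 h.hL (hhom h.hM)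
    (hK _ (mem_of_mem_mId h.hM K))
  have h3 : M ^ K * a1 - N ^ K * a2 ∈ I := by
    refine (hP.mem_or_mem (?_ : L * (M ^ K * a1 - N ^ K * a2) ∈ I)).resolve_left h.L_notin
    have := I.sub_mem (I.mul_mem_left (N ^ K) h2) (I.mul_mem_left (M ^ K) h1)
    convert this using 1
    ring
  obtain ⟨Y⟩ := h.latI
  obtain ⟨S, hS⟩ := alg_of_integral Y (iM := 1) (iN := 2) (by decide) h.N_ne ha1 h3
  obtain ⟨ρ, -, hρ⟩ : ∃ ρ ∈ S, a1 - C ρ * N ^ K ∈ I := by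
    have := (Ideal.IsPrime.multiset_prod_mem_iff_exists_mem hP _).1 hS
    simpa using this
  refine ⟨ρ, ?_⟩
  have h4 : a - C ρ * L ∈ I := by
    refine (hP.mem_or_mem (?_ : N ^ K * (a - C ρ * L) ∈ I)).resolve_left
      fun h' => h.N_notin (hP.mem_of_pow_mem _ h')
    have := I.add_mem h1 (I.mul_mem_left L hρ)
    convert this using 1
    ring
  have h5 : (a - C ρ * L).IsHomogeneous 1 := by
    refine ha.sub ?_
    simpa using (isHomogeneous_C _ ρ).mul h.hL
  exact sub_eq_zero.1 (hnd _ h5 h4)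

end Good
end RaoGenus

namespace RaoGenus

open MvPolynomial

/-! ### Connectedness of the hyperplane section -/

section Gram

variable {n k : ℕ} {I : Ideal (MPoly n)} {y : Fin k → MPoly n}

lemma YLat.congr (Y : YLat I y) {a b : MPoly n} (h : a - b ∈ I) : Y.Θ a = Y.Θ b := by
  rw [← sub_eq_zero, ← map_sub, Y.ker]; exact h

lemma YLat.smul_apply (Y : YLat I y) (p : MPoly k) (a : MPoly n) (j : Fin Y.m) :
    Y.Θ (aeval y p * a) j = p * Y.Θ a j := by
  rw [Y.smul]; rfl

lemma YLat.sum_apply (Y : YLat I y) {ι : Type*} (s : Finset ι) (c : ι → MPoly k) (a : ι → MPoly n)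
    (j : Fin Y.m) : Y.Θ (∑ i ∈ s, aeval y (c i) * a i) j = ∑ i ∈ s, c i * Y.Θ (a i) j := by
  rw [map_sum, Finset.sum_apply]
  exact Finset.sum_congr rfl fun i _ => Y.smul_apply _ _ _

lemma YLat.expand_phi (Y : YLat I y) (j0 : Fin Y.m) (z a : MPoly n) :
    Y.π * Y.Θ (z * a) j0 = ∑ i, Y.Θ a i * Y.Θ (z * Y.b i) j0 := by
  rw [← Y.smul_apply, ← Y.sum_apply]
  refine congrFun (Y.congr ?_) j0
  have := I.mul_mem_left z (Y.expand a)
  convert this using 1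
  rw [mul_sub, Finset.mul_sum]
  congr 1
  · ring
  · exact Finset.sum_congr rfl fun i _ => by ring

/-- Nondegeneracy of the form `(z, u) ↦ φ (z u)`, where `φ` is a coordinate of `Θ`. -/
lemma YLat.exists_ne (Y : YLat I y) (hP : I.IsPrime) (j0 : Fin Y.m) {z : MPoly n} (hz : z ∉ I) :
    ∃ u, Y.Θ (z * u) j0 ≠ 0 := by
  classical
  let Z : Matrix (Fin Y.m) (Fin Y.m) (MPoly k) := Matrix.of fun i j => Y.Θ (z * Y.b j) i
  have hlin : ∀ w : Fin Y.m → MPoly k, Y.Θ (z * ∑ j, aeval y (w j) * Y.b j) = Z.mulVec w := by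
    intro w
    funext i
    have : z * ∑ j, aeval y (w j) * Y.b j = ∑ j, aeval y (w j) * (z * Y.b j) := by
      rw [Finset.mul_sum]; exact Finset.sum_congr rfl fun i _ => by ring
    rw [this, Y.sum_apply]
    simp only [Matrix.mulVec, dotProduct, Z, Matrix.of_apply]
    exact Finset.sum_congr rfl fun i _ => mul_comm _ _
  have hdet : Z.det ≠ 0 := by
    intro h0
    obtain ⟨w, hw0, hw⟩ := Matrix.exists_mulVec_eq_zero_iff.2 h0
    rw [← hlin, Y.ker] at hw
    exact hw0 (Y.indep w ((hP.mem_or_mem hw).resolve_left hz))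
  refine ⟨∑ j, aeval y (Z.adjugate.mulVec (Pi.single j0 1) j) * Y.b j, ?_⟩
  rw [hlin, Matrix.mulVec_mulVec, Matrix.mul_adjugate, Matrix.smul_mulVec, Matrix.one_mulVec]
  simpa using hdet

/-- The Gram matrix of the lattice for the functional `Θ · j0`. -/
noncomputable def YLat.G (Y : YLat I y) (j0 : Fin Y.m) : Matrix (Fin Y.m) (Fin Y.m) (MPoly k) :=
  Matrix.of fun i j => Y.Θ (Y.b i * Y.b j) j0

lemma YLat.G_mulVec (Y : YLat I y) (j0 : Fin Y.m) (w : Fin Y.m → MPoly k) (i : Fin Y.m) :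
    (Y.G j0).mulVec w i = Y.Θ ((∑ j, aeval y (w j) * Y.b j) * Y.b i) j0 := by
  rw [Finset.sum_mul, Finset.sum_congr rfl (fun j _ => mul_assoc _ (Y.b j) (Y.b i)), Y.sum_apply]
  simp only [Matrix.mulVec, dotProduct, YLat.G, Matrix.of_apply]
  exact Finset.sum_congr rfl fun j _ => by rw [mul_comm (Y.b i)]; ring

lemma YLat.mem_of_phi (Y : YLat I y) (hP : I.IsPrime) (j0 : Fin Y.m) {z : MPoly n}
    (hz : ∀ i, Y.Θ (z * Y.b i) j0 = 0) : z ∈ I := by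
  by_contra h
  obtain ⟨u, hu⟩ := Y.exists_ne hP j0 h
  have := Y.expand_phi j0 z u
  simp only [hz, mul_zero, Finset.sum_const_zero] at this
  exact (mul_ne_zero Y.π_ne hu) this

lemma YLat.G_det (Y : YLat I y) (hP : I.IsPrime) (j0 : Fin Y.m) : (Y.G j0).det ≠ 0 := by
  classical
  intro h0
  obtain ⟨w, hw0, hw⟩ := Matrix.exists_mulVec_eq_zero_iff.2 h0
  refine hw0 (Y.indep w (Y.mem_of_phi hP j0 fun i => ?_))
  rw [← Y.G_mulVec, hw]
  rfl

end Gram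

section Trunc

lemma X_pow_dvd_of_mul {k : ℕ} {i : Fin k} {q : ℕ} {c f : MPoly k} (hc : ¬ (X i : MPoly k) ∣ c)
    (h : (X i : MPoly k) ^ q ∣ c * f) : (X i : MPoly k) ^ q ∣ f :=
  Prime.pow_dvd_of_dvd_mul_left X_prime q hc h

/-- A polynomial of degree at most `κ + D` divisible by `N ^ κ` modulo `L ^ q` is a multiple of
`N ^ κ` by a polynomial whose degree in `L` is at most `D`. -/
lemma trunc_dvd {q κ D : ℕ} (hq : D < q) {f f' : MPoly 3} (hf : f.totalDegree ≤ κ + D)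
    (h : (X 0 : MPoly 3) ^ q ∣ X 1 ^ κ * f - X 2 ^ κ * f') :
    ∃ t : MPoly 3, degreeOf 0 t ≤ D ∧ (X 0 : MPoly 3) ^ q ∣ f - X 2 ^ κ * t := by
  let E := finSuccEquiv ℂ 2
  have e0 : E (X 0) = Polynomial.X := finSuccEquiv_X_zero
  have e1 : E (X 1) = Polynomial.C (X 0) := finSuccEquiv_X_succ (j := 0)
  have e2 : E (X 2) = Polynomial.C (X 1) := finSuccEquiv_X_succ (j := 1)
  have hiff : ∀ g : MPoly 3, (X 0 : MPoly 3) ^ q ∣ g ↔ ∀ i < q, (E g).coeff i = 0 := by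
    intro g
    rw [← Polynomial.X_pow_dvd_iff, ← e0, ← map_pow]
    exact (map_dvd_iff E).symm
  have hd : ∀ i < q, (X 1 : MPoly 2) ^ κ ∣ (E f).coeff i := by
    intro i hi
    have h1 := (hiff _).1 h i hi
    rw [map_sub, map_mul, map_mul, map_pow, map_pow, e1, e2, ← Polynomial.C_pow, ← Polynomial.C_pow,
      Polynomial.coeff_sub, Polynomial.coeff_C_mul, Polynomial.coeff_C_mul, sub_eq_zero] at h1
    exact X_pow_dvd (i := 1) (j := 0) (by decide) ⟨_, h1⟩
  have hs : ∀ i, ∃ s, i < q → (E f).coeff i = X 1 ^ κ * s := fun i => by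
    by_cases hi : i < q
    · obtain ⟨s, hs⟩ := hd i hi; exact ⟨s, fun _ => hs⟩
    · exact ⟨0, fun h => absurd h hi⟩
  choose s hs using hs
  have hcoef : ∀ j, (∑ i ∈ Finset.range (D + 1), Polynomial.monomial i (s i)).coeff j =
      if j ≤ D then s j else 0 := by
    intro j
    simp [Polynomial.finset_sum_coeff, Polynomial.coeff_monomial, Nat.lt_succ_iff]
  refine ⟨E.symm (∑ i ∈ Finset.range (D + 1), Polynomial.monomial i (s i)), ?_, ?_⟩
  · rw [← natDegree_finSuccEquiv]
    change (E (E.symm _)).natDegree ≤ D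
    rw [AlgEquiv.apply_symm_apply, Polynomial.natDegree_le_iff_coeff_eq_zero]
    intro j hj
    rw [hcoef, if_neg (by omega)]
  · rw [hiff]
    intro i hi
    rw [map_sub, map_mul, map_pow, e2, ← Polynomial.C_pow, AlgEquiv.apply_symm_apply,
      Polynomial.coeff_sub, Polynomial.coeff_C_mul, hcoef, sub_eq_zero]
    split_ifs with hiD
    · exact hs i hi
    · rw [mul_zero]
      by_contra hne
      have h1 := le_totalDegree_of_dvd hne (hd i hi)
      have h2 := totalDegree_coeff_finSuccEquiv_add_le f i hne
      change ((E f).coeff i).totalDegree + i ≤ _ at h2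
      omega

lemma le_degreeOf_of_dvd {q : ℕ} {f : MPoly 3} (hf : f ≠ 0) (h : (X 0 : MPoly 3) ^ q ∣ f) :
    q ≤ degreeOf 0 f := by
  rw [← natDegree_finSuccEquiv]
  have h1 : (Polynomial.X : Polynomial (MPoly 2)) ^ q ∣ finSuccEquiv ℂ 2 f := by
    have := map_dvd (finSuccEquiv ℂ 2) h
    rwa [map_pow, finSuccEquiv_X_zero] at this
  have h2 := Polynomial.natDegree_le_of_dvd h1 (by simpa using hf)
  rwa [Polynomial.natDegree_X_pow] at h2

end Trunc

section Psi

variable {B : Type*} [CommRing B]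

/-- The part of the binomial expansion of `(α + (w - α)) ^ (2q + 1)` divisible by `α ^ (q + 1)`:
it turns an idempotent modulo `L` into one modulo `L ^ (q + 1)`. -/
def Psi (q : ℕ) (α w : B) : B :=
  ∑ i ∈ Finset.range (q + 1), ((2 * q + 1).choose i : B) * (α ^ (2 * q + 1 - i) * (w - α) ^ i)

lemma Psi_dvd (q : ℕ) (α w : B) : α ^ (q + 1) ∣ Psi q α w := by
  refine Finset.dvd_sum fun i hi => ?_
  have := Finset.mem_range_succ_iff.1 hi
  exact Dvd.dvd.mul_left (Dvd.dvd.mul_right (pow_dvd_pow _ (by omega)) _) _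

lemma Psi_dvd' (q : ℕ) (α w : B) : (w - α) ^ (q + 1) ∣ w ^ (2 * q + 1) - Psi q α w := by
  have h : w ^ (2 * q + 1) = ∑ i ∈ Finset.range ((q + 1) + (q + 1)),
      ((2 * q + 1).choose i : B) * (α ^ (2 * q + 1 - i) * (w - α) ^ i) := by
    have h1 : w ^ (2 * q + 1) = ((w - α) + α) ^ (2 * q + 1) := by ring
    rw [h1, add_pow, show 2 * q + 1 + 1 = (q + 1) + (q + 1) by ring]
    exact Finset.sum_congr rfl fun i _ => by ring
  rw [h, Finset.sum_range_add, Psi, add_sub_cancel_left]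
  refine Finset.dvd_sum fun i _ => ?_
  exact Dvd.dvd.mul_left (Dvd.dvd.mul_left (pow_dvd_pow _ (by omega)) _) _

lemma Psi_mul (q : ℕ) (c α w : B) : Psi q (c * α) (c * w) = c ^ (2 * q + 1) * Psi q α w := by
  rw [Psi, Psi, Finset.mul_sum]
  refine Finset.sum_congr rfl fun i hi => ?_
  have := Finset.mem_range_succ_iff.1 hi
  rw [← mul_sub, mul_pow, mul_pow, show c ^ (2 * q + 1) = c ^ (2 * q + 1 - i) * c ^ i by
    rw [← pow_add]; congr 1; omega]
  ring

lemma Psi_homog {n K q : ℕ} {α w : MPoly n} (hα : α.IsHomogeneous K) (hw : w.IsHomogeneous K) :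
    (Psi q α w).IsHomogeneous (K * (2 * q + 1)) := by
  refine IsHomogeneous.sum _ _ _ fun i hi => ?_
  have := Finset.mem_range_succ_iff.1 hi
  have h1 := (isHomogeneous_C (Fin n) ((2 * q + 1).choose i : ℂ)).mul
    ((hα.pow (2 * q + 1 - i)).mul ((hw.sub hα).pow i))
  convert h1 using 1
  · simp
  · rw [← mul_add, zero_add]; congr 1; omega

end Psi
end RaoGenus

namespace RaoGenus

open MvPolynomial

section Idem

variable {n : ℕ} {I : Ideal (MPoly n)} {L M N : MPoly n}

lemma YLat.deg_mul {k : ℕ} {y : Fin k → MPoly n} (Y : YLat I y) : ∃ D, ∀ d (f : MPoly n),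
    f.IsHomogeneous d → ∀ i j, (Y.Θ (f * Y.b j) i).totalDegree ≤ d + D := by
  refine ⟨(∑ j, (Y.b j).totalDegree) + Y.δ, fun d f hf i j => ?_⟩
  conv_lhs => rw [← sum_homogeneousComponent (Y.b j)]
  rw [Finset.mul_sum, map_sum, Finset.sum_apply]
  refine totalDegree_finsetSum_le fun e he => ?_
  refine (Y.deg (d + e) _ (hf.mul (homogeneousComponent_isHomogeneous _ _)) i).trans ?_
  have h1 := Finset.mem_range_succ_iff.1 he
  have h2 : (Y.b j).totalDegree ≤ ∑ j, (Y.b j).totalDegree :=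
    Finset.single_le_sum (f := fun j => (Y.b j).totalDegree) (fun _ _ => Nat.zero_le _)
      (Finset.mem_univ j)
  omega

/-- Elements whose products with the lattice basis are highly divisible by `L` vanish on the
hyperplane section. -/
lemma Good.mem_of_dvd (h : Good I L M N) (Y : YLat I ![L, M, N]) (j0 : Fin Y.m) {q : ℕ}
    (hq : degreeOf 0 ((Y.G j0).det ^ 2 * Y.π) < q) {z : MPoly n}
    (hz : ∀ j, (X 0 : MPoly 3) ^ q ∣ (Y.G j0).det * Y.Θ (z * Y.b j) j0) : z ∈ sect I L := by
  classical
  have hP : I.IsPrime := h.surf.2.1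
  have hdet := Y.G_det hP j0
  have h1 : ∀ j, (Y.G j0).mulVec (Y.Θ z) j = Y.π * Y.Θ (z * Y.b j) j0 := by
    intro j
    rw [Y.G_mulVec, ← Y.smul_apply]
    refine congrFun (Y.congr ?_) j0
    have := I.mul_mem_right (Y.b j) (I.neg_mem (Y.expand z))
    convert this using 1
    ring
  have h2 : ∀ i, (X 0 : MPoly 3) ^ q ∣ (Y.G j0).det ^ 2 * Y.Θ z i := by
    intro i
    have h3 : (Y.G j0).det * Y.Θ z i = ∑ j, (Y.G j0).adjugate i j * (Y.π * Y.Θ (z * Y.b j) j0) := by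
      have := congrFun (Matrix.mulVec_mulVec (Y.Θ z) (Y.G j0).adjugate (Y.G j0)) i
      rw [Matrix.adjugate_mul, Matrix.smul_mulVec, Matrix.one_mulVec] at this
      simp only [Pi.smul_apply, smul_eq_mul] at this
      rw [← this]
      simp only [Matrix.mulVec, dotProduct]
      refine Finset.sum_congr rfl fun j _ => ?_
      rw [← h1]
      rfl
    rw [sq, mul_assoc, h3, Finset.mul_sum]
    refine Finset.dvd_sum fun j _ => ?_
    have : (Y.G j0).det * ((Y.G j0).adjugate i j * (Y.π * Y.Θ (z * Y.b j) j0)) =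
      ((Y.G j0).det * Y.Θ (z * Y.b j) j0) * ((Y.G j0).adjugate i j * Y.π) := by ring
    rw [this]
    exact Dvd.dvd.mul_right (hz j) _
  choose c hc using h2
  set p := (Y.G j0).det ^ 2 * Y.π with hp
  have hp0 : p ≠ 0 := mul_ne_zero (pow_ne_zero _ hdet) Y.π_ne
  have h4 : aeval ![L, M, N] p * z - L ^ q * ∑ i, aeval ![L, M, N] (c i) * Y.b i ∈ I := by
    have this := I.mul_mem_left (aeval ![L, M, N] ((Y.G j0).det ^ 2)) (Y.expand z)
    suffices hsum : L ^ q * ∑ i, aeval ![L, M, N] (c i) * Y.b i =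
        aeval ![L, M, N] ((Y.G j0).det ^ 2) * ∑ i, aeval ![L, M, N] (Y.Θ z i) * Y.b i by
      rw [hsum, hp, map_mul, mul_assoc, ← mul_sub]
      exact this
    rw [Finset.mul_sum, Finset.mul_sum]
    refine Finset.sum_congr rfl fun i _ => ?_
    have hci := congrArg (aeval ![L, M, N]) (hc i)
    rw [map_mul, map_mul, map_pow _ (X 0), aeval_X] at hci
    have hL0 : (![L, M, N] : Fin 3 → MPoly n) 0 = L := rfl
    rw [hL0] at hci
    rw [← mul_assoc, ← mul_assoc, ← hci]
  obtain ⟨v, ρ, hρ, hpρ⟩ : ∃ v, ∃ ρ : MPoly 3, ¬ (X 0 : MPoly 3) ∣ ρ ∧ p = X 0 ^ v * ρ := by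
    obtain ⟨ρ, h5, h6⟩ := (FiniteMultiplicity.of_prime_left X_prime hp0 :
      FiniteMultiplicity (X 0 : MPoly 3) p).exists_eq_pow_mul_and_not_dvd
    exact ⟨_, ρ, h6, h5⟩
  have hv : v < q := (le_degreeOf_of_dvd hp0 ⟨ρ, hpρ⟩).trans_lt hq
  have h5 : aeval ![L, M, N] ρ * z - L ^ (q - v) * ∑ i, aeval ![L, M, N] (c i) * Y.b i ∈ I := by
    refine (hP.mem_or_mem (?_ : L ^ v * _ ∈ I)).resolve_left
      fun h' => h.L_notin (hP.mem_of_pow_mem _ h')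
    convert h4 using 1
    have h6 : aeval ![L, M, N] p = L ^ v * aeval ![L, M, N] ρ := by
      rw [hpρ, map_mul, map_pow, aeval_X]; rfl
    rw [h6, show q = v + (q - v) by omega, pow_add, show v + (q - v) - v = q - v by omega]
    ring
  have h6 : aeval ![L, M, N] ρ * z ∈ sect I L := by
    apply le_sect
    have h7 : L ^ (q - v) * ∑ i, aeval ![L, M, N] (c i) * Y.b i ∈ I ⊔ Ideal.span {L} := by
      refine Ideal.mem_sup_right (Ideal.mem_span_singleton.2 ?_)
      exact Dvd.dvd.mul_right (dvd_pow_self _ (by omega)) _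
    have := Ideal.add_mem _ (Ideal.mem_sup_left h5) h7
    rwa [sub_add_cancel] at this
  -- reduction of `ρ` modulo `L`
  set ρ0 := (finSuccEquiv ℂ 2 ρ).coeff 0 with hρ0
  have hρ0' : ρ0 ≠ 0 := by
    intro h0
    apply hρ
    have : (Polynomial.X : Polynomial (MPoly 2)) ∣ finSuccEquiv ℂ 2 ρ := Polynomial.X_dvd_iff.2 h0
    rw [← finSuccEquiv_X_zero] at this
    exact (map_dvd_iff (finSuccEquiv ℂ 2)).1 this
  refine h.tf ρ0 z hρ0' ?_
  have h8 : aeval ![L, M, N] ρ = aeval ![M, N] ρ0 +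
      L * Polynomial.eval₂ (aeval ![M, N] : MPoly 2 →ₐ[ℂ] MPoly n).toRingHom L
        (finSuccEquiv ℂ 2 ρ).divX := by
    have := aeval_cons_eq L ![M, N] ρ
    rw [← Polynomial.divX_mul_X_add (finSuccEquiv ℂ 2 ρ), Polynomial.eval₂_add,
      Polynomial.eval₂_mul, Polynomial.eval₂_X, Polynomial.eval₂_C] at this
    rw [add_comm, mul_comm L]
    exact this
  rw [h8, add_mul, mul_assoc] at h6
  refine (Ideal.add_mem_iff_left _ (Ideal.mul_mem_right _ _ (le_sect
    (Ideal.mem_sup_right (Ideal.mem_span_singleton_self L))))).1 h6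

lemma pow_mem_sup_pow {x : MPoly n} (hx : x ∈ I ⊔ Ideal.span {L}) (q : ℕ) :
    x ^ q ∈ I ⊔ Ideal.span {L ^ q} := by
  obtain ⟨i, hi, j, hj, rfl⟩ := Submodule.mem_sup.1 hx
  obtain ⟨c, rfl⟩ := Ideal.mem_span_singleton'.1 hj
  obtain ⟨z, hz⟩ := sub_dvd_pow_sub_pow (i + c * L) (c * L) q
  rw [← sub_add_cancel ((i + c * L) ^ q) ((c * L) ^ q), hz, add_sub_cancel_right]
  refine Ideal.add_mem _ (Ideal.mem_sup_left (I.mul_mem_right _ hi)) (Ideal.mem_sup_right ?_)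
  rw [mul_pow]
  exact Ideal.mul_mem_left _ _ (Ideal.mem_span_singleton_self _)

lemma exists_of_mem_sup_pow {x : MPoly n} {q : ℕ} (hx : x ∈ I ⊔ Ideal.span {L ^ q}) :
    ∃ z, x - L ^ q * z ∈ I := by
  obtain ⟨i, hi, j, hj, rfl⟩ := Submodule.mem_sup.1 hx
  obtain ⟨c, rfl⟩ := Ideal.mem_span_singleton'.1 hj
  exact ⟨c, by convert hi using 1; ring⟩

lemma not_X_dvd {k : ℕ} {i j : Fin k} (hij : i ≠ j) (m : ℕ) : ¬ (X i : MPoly k) ∣ X j ^ m :=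
  fun h => hij (X_dvd_X.1 (X_prime.dvd_of_dvd_pow h))

/-- An approximately idempotent fraction `x / N ^ κ`, to a high order in `L`, reduces to `0` or `1`
on the hyperplane section. -/
lemma Good.approx_idem (h : Good I L M N) (κ : ℕ → ℕ) (x x' : ℕ → MPoly n)
    (hx : ∀ q, (x q).IsHomogeneous (κ q))
    (h1 : ∀ q, x q * (N ^ κ q - x q) ∈ I ⊔ Ideal.span {L ^ (q + 1)})
    (h2 : ∀ q, (M * N) ^ κ q * (M ^ κ q * x q - N ^ κ q * x' q) ∈ I ⊔ Ideal.span {L ^ (q + 1)}) :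
    ∃ q, x q ∈ sect I L ∨ x q - N ^ κ q ∈ sect I L := by
  classical
  have hP : I.IsPrime := h.surf.2.1
  obtain ⟨Y⟩ := h.latI
  obtain ⟨j0, -⟩ : ∃ j0, Y.Θ 1 j0 ≠ 0 := by
    by_contra h0
    push Not at h0
    exact hP.ne_top ((Ideal.eq_top_iff_one I).2 ((Y.ker 1).1 (funext h0)))
  obtain ⟨D, hD⟩ := Y.deg_mul
  set det := (Y.G j0).det with hdet
  -- a common bound for the degrees in `L` of all auxiliary coefficients
  obtain ⟨B, hB1, hB2, hB3, hB4, hB5⟩ : ∃ B, (∀ i j, degreeOf 0 ((Y.G j0).adjugate i j) ≤ B) ∧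
      degreeOf 0 det ≤ B ∧ degreeOf 0 Y.π ≤ B ∧
      (∀ i j, degreeOf 0 (Y.Θ (Y.b i * Y.b j) j0) ≤ B) ∧
      (∀ i k j, degreeOf 0 (Y.Θ (Y.b i * (Y.b k * Y.b j)) j0) ≤ B) := by
    have hfin : ∀ {ι : Type} [Fintype ι] (f : ι → ℕ), ∃ B, ∀ i, f i ≤ B := fun f =>
      ⟨∑ i, f i, fun i => Finset.single_le_sum (fun _ _ => Nat.zero_le _) (Finset.mem_univ i)⟩
    obtain ⟨a, ha⟩ := hfin fun p : Fin Y.m × Fin Y.m => degreeOf 0 ((Y.G j0).adjugate p.1 p.2)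
    obtain ⟨b, hb⟩ := hfin fun p : Fin Y.m × Fin Y.m => degreeOf 0 (Y.Θ (Y.b p.1 * Y.b p.2) j0)
    obtain ⟨c, hc⟩ := hfin fun p : Fin Y.m × Fin Y.m × Fin Y.m =>
      degreeOf 0 (Y.Θ (Y.b p.1 * (Y.b p.2.1 * Y.b p.2.2)) j0)
    exact ⟨a + b + c + degreeOf 0 det + degreeOf 0 Y.π, fun i j => (ha (i, j)).trans (by omega),
      by omega, by omega, fun i j => (hb (i, j)).trans (by omega),
      fun i j k => (hc (i, j, k)).trans (by omega)⟩
  set q := 4 * B + 2 * D + degreeOf 0 (det ^ 2 * Y.π) with hq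
  refine ⟨q, ?_⟩
  -- the coefficients `t`
  have ht : ∀ j, ∃ t : MPoly 3, degreeOf 0 t ≤ D ∧
      (X 0 : MPoly 3) ^ (q + 1) ∣ Y.Θ (x q * Y.b j) j0 - X 2 ^ κ q * t := by
    intro j
    refine trunc_dvd (by omega) (hD _ _ (hx q) j0 j) (f' := Y.Θ (x' q * Y.b j) j0) ?_
    obtain ⟨z, hz⟩ := exists_of_mem_sup_pow (h2 q)
    have h3 : (X 0 : MPoly 3) ^ (q + 1) ∣ X 2 ^ κ q * (X 1 ^ κ q *
        (X 1 ^ κ q * Y.Θ (x q * Y.b j) j0 - X 2 ^ κ q * Y.Θ (x' q * Y.b j) j0)) := by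
      refine ⟨Y.Θ (z * Y.b j) j0, ?_⟩
      simp only [mul_sub, ← Y.smul_apply]
      rw [← Pi.sub_apply, ← map_sub]
      refine congrFun (Y.congr ?_) j0
      have := I.mul_mem_right (Y.b j) hz
      convert this using 1
      simp only [map_pow, aeval_X, Matrix.cons_val]
      ring
    exact X_pow_dvd_of_mul (not_X_dvd (by decide) _) (X_pow_dvd_of_mul (not_X_dvd (by decide) _) h3)
  choose t htD ht using ht
  set s := (Y.G j0).adjugate.mulVec t with hs
  set g := ∑ i, aeval ![L, M, N] (s i) * Y.b i with hg
  have hsD : ∀ i, degreeOf 0 (s i) ≤ B + D := by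
    intro i
    rw [hs]
    simp only [Matrix.mulVec, dotProduct]
    refine (degreeOf_sum_le _ _ _).trans (Finset.sup_le fun j _ => ?_)
    exact (degreeOf_mul_le _ _ _).trans (add_le_add (hB1 _ _) (htD _))
  have hgb : ∀ j, Y.Θ (g * Y.b j) j0 = det * t j := by
    intro j
    rw [hg, ← Y.G_mulVec, hs, Matrix.mulVec_mulVec, Matrix.mul_adjugate, Matrix.smul_mulVec,
      Matrix.one_mulVec]
    rfl
  set w := aeval ![L, M, N] det * x q - N ^ κ q * g with hw
  have hNX : aeval ![L, M, N] (X 2 ^ κ q : MPoly 3) = N ^ κ q := by simp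
  have hwb : ∀ j, (X 0 : MPoly 3) ^ (q + 1) ∣ Y.Θ (w * Y.b j) j0 := by
    intro j
    have : Y.Θ (w * Y.b j) j0 = det * (Y.Θ (x q * Y.b j) j0 - X 2 ^ κ q * t j) := by
      rw [hw, sub_mul, map_sub, Pi.sub_apply, mul_assoc, mul_assoc, Y.smul_apply, ← hNX,
        Y.smul_apply, hgb]
      ring
    rw [this]
    exact Dvd.dvd.mul_left (ht j) _
  have hwa : ∀ a, (X 0 : MPoly 3) ^ (q + 1) ∣ Y.π * Y.Θ (w * a) j0 := by
    intro a
    rw [Y.expand_phi]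
    exact Finset.dvd_sum fun i _ => Dvd.dvd.mul_left (hwb i) _
  -- `g / det` is an exact idempotent
  have hidem : g * (aeval ![L, M, N] det - g) ∈ I := by
    refine Y.mem_of_phi hP j0 fun j => ?_
    have hF : Y.Θ (g * (aeval ![L, M, N] det - g) * Y.b j) j0 =
        det * (∑ i, s i * Y.Θ (Y.b i * Y.b j) j0) -
          ∑ i, s i * ∑ k, s k * Y.Θ (Y.b i * (Y.b k * Y.b j)) j0 := by
      have e1 : g * Y.b j = ∑ i, aeval ![L, M, N] (s i) * (Y.b i * Y.b j) := by
        rw [hg, Finset.sum_mul]; exact Finset.sum_congr rfl fun i _ => by ring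
      have e2 : ∀ i, Y.b i * (g * Y.b j) =
          ∑ k, aeval ![L, M, N] (s k) * (Y.b i * (Y.b k * Y.b j)) := by
        intro i
        rw [e1, Finset.mul_sum]; exact Finset.sum_congr rfl fun i _ => by ring
      have e3 : g * (g * Y.b j) = ∑ i, aeval ![L, M, N] (s i) * (Y.b i * (g * Y.b j)) := by
        conv_lhs => rw [hg, Finset.sum_mul]
        exact Finset.sum_congr rfl fun i _ => by ring
      have e4 : g * (aeval ![L, M, N] det - g) * Y.b j =
          aeval ![L, M, N] det * (g * Y.b j) - g * (g * Y.b j) := by ring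
      rw [e4, map_sub, Pi.sub_apply, Y.smul_apply, e3, Y.sum_apply]
      congr 1
      · rw [e1, Y.sum_apply]
      · refine Finset.sum_congr rfl fun i _ => ?_
        rw [e2, Y.sum_apply]
    have hdegF : degreeOf 0 (Y.π * Y.Θ (g * (aeval ![L, M, N] det - g) * Y.b j) j0) ≤
        4 * B + 2 * D := by
      refine (degreeOf_mul_le _ _ _).trans ?_
      have e5 : degreeOf 0 (det * (∑ i, s i * Y.Θ (Y.b i * Y.b j) j0)) ≤ 3 * B + 2 * D := by
        refine (degreeOf_mul_le _ _ _).trans ?_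
        have : degreeOf 0 (∑ i, s i * Y.Θ (Y.b i * Y.b j) j0) ≤ (B + D) + B := by
          refine (degreeOf_sum_le _ _ _).trans (Finset.sup_le fun i _ => ?_)
          exact (degreeOf_mul_le _ _ _).trans (add_le_add (hsD _) (hB4 _ _))
        omega
      have e6 : degreeOf 0 (∑ i, s i * ∑ k, s k * Y.Θ (Y.b i * (Y.b k * Y.b j)) j0) ≤
          3 * B + 2 * D := by
        refine (degreeOf_sum_le _ _ _).trans (Finset.sup_le fun i _ => ?_)
        refine (degreeOf_mul_le _ _ _).trans ?_
        have : degreeOf 0 (∑ k, s k * Y.Θ (Y.b i * (Y.b k * Y.b j)) j0) ≤ (B + D) + B := by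
          refine (degreeOf_sum_le _ _ _).trans (Finset.sup_le fun k _ => ?_)
          exact (degreeOf_mul_le _ _ _).trans (add_le_add (hsD _) (hB5 _ _ _))
        have := hsD i
        omega
      have e7 : degreeOf 0 (Y.Θ (g * (aeval ![L, M, N] det - g) * Y.b j) j0) ≤ 3 * B + 2 * D := by
        rw [hF, sub_eq_add_neg]
        refine (degreeOf_add_le _ _ _).trans (max_le e5 ?_)
        rwa [degreeOf_neg]
      omega
    by_contra hne
    have hne' := mul_ne_zero Y.π_ne hne
    have hdiv : (X 0 : MPoly 3) ^ (q + 1) ∣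
        Y.π * Y.Θ (g * (aeval ![L, M, N] det - g) * Y.b j) j0 := by
      refine X_pow_dvd_of_mul (not_X_dvd (j := 2) (by decide) (κ q * 2)) ?_
      obtain ⟨z, hz⟩ := exists_of_mem_sup_pow (h1 q)
      have e8 : X 2 ^ (κ q * 2) * (Y.π * Y.Θ (g * (aeval ![L, M, N] det - g) * Y.b j) j0) =
          Y.π * (det ^ 2 * (X 0 ^ (q + 1) * Y.Θ (z * Y.b j) j0)) -
          Y.π * Y.Θ (w * ((N ^ κ q * aeval ![L, M, N] det - w - 2 * N ^ κ q * g) * Y.b j)) j0 := by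
        rw [← mul_sub, mul_left_comm]
        congr 1
        rw [← Y.smul_apply, ← Y.smul_apply, ← Y.smul_apply, ← Pi.sub_apply, ← map_sub]
        refine congrFun (Y.congr ?_) j0
        have := I.mul_mem_left (aeval ![L, M, N] det ^ 2 * Y.b j) hz
        convert this using 1
        rw [hw, map_pow, map_pow, map_pow, aeval_X, aeval_X]
        simp only [Matrix.cons_val]
        ring
      rw [e8]
      exact dvd_sub (Dvd.dvd.mul_left (Dvd.dvd.mul_left (Dvd.intro _ rfl) _) _) (hwa _)
    have := le_degreeOf_of_dvd hne' hdiv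
    omega
  have hqd : degreeOf 0 (det ^ 2 * Y.π) < q + 1 := by omega
  rcases hP.mem_or_mem hidem with hg0 | hg1
  · left
    refine h.mem_of_dvd Y j0 hqd fun j => ?_
    rw [← hdet, ← Y.smul_apply]
    have : Y.Θ (aeval ![L, M, N] det * (x q * Y.b j)) = Y.Θ (w * Y.b j) := by
      refine Y.congr ?_
      have := I.mul_mem_left (N ^ κ q * Y.b j) hg0
      convert this using 1
      rw [hw]; ring
    rw [this]
    exact hwb j
  · right
    refine h.mem_of_dvd Y j0 hqd fun j => ?_
    rw [← hdet, ← Y.smul_apply]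
    have : Y.Θ (aeval ![L, M, N] det * ((x q - N ^ κ q) * Y.b j)) = Y.Θ (w * Y.b j) := by
      refine Y.congr ?_
      have := I.mul_mem_left (-(N ^ κ q * Y.b j)) hg1
      convert this using 1
      rw [hw]; ring
    rw [this]
    exact hwb j

/-- Connectedness of the hyperplane section: idempotent fractions `a / N ^ K` are constant. -/
theorem Good.idem (h : Good I L M N) {K : ℕ} {a a' : MPoly n} (ha : a.IsHomogeneous K)
    (h1 : M ^ K * a - N ^ K * a' ∈ sect I L) (h2 : a * (N ^ K - a) ∈ sect I L) :
    a ∈ sect I L ∨ a - N ^ K ∈ sect I L := by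
  obtain ⟨k1, hk1⟩ := mem_sat_iff.1 h1
  obtain ⟨k2, hk2⟩ := mem_sat_iff.1 h2
  -- clearing the saturation
  set c := k1 + k2 with hc
  set α := N ^ c * a with hα
  set α' := M ^ c * a' with hα'
  have h3 : M ^ (K + c) * α - N ^ (K + c) * α' ∈ I ⊔ Ideal.span {L} := by
    have := Ideal.mul_mem_left _ (M ^ c * N ^ k2) (hk1 _ (mem_of_mem_mId h.hN k1))
    convert this using 1
    rw [hα, hα', hc]; ring
  have h4 : α * (N ^ (K + c) - α) ∈ I ⊔ Ideal.span {L} := by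
    have := Ideal.mul_mem_left _ (N ^ (c + k1)) (hk2 _ (mem_of_mem_mId h.hN k2))
    convert this using 1
    rw [hα, hc]; ring
  have hαh : α.IsHomogeneous (K + c) := by
    have := (h.hN.pow c).mul ha
    convert this using 1
    ring
  have hNh : (N ^ (K + c)).IsHomogeneous (K + c) := by simpa using h.hN.pow (K + c)
  have hprod : ∀ (q : ℕ) (u v x z : MPoly n), x * z ∈ I ⊔ Ideal.span {L} → x ^ (q + 1) ∣ u →
      z ^ (q + 1) ∣ v → u * v ∈ I ⊔ Ideal.span {L ^ (q + 1)} := by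
    intro q u v x z hxz hu hv
    refine Ideal.mem_of_dvd _ ?_ (pow_mem_sup_pow hxz (q + 1))
    rw [mul_pow]
    exact mul_dvd_mul hu hv
  obtain ⟨q, hq⟩ := h.approx_idem (fun q => (K + c) * (2 * q + 1))
    (fun q => Psi q α (N ^ (K + c))) (fun q => Psi q α' (M ^ (K + c)))
    (fun q => Psi_homog hαh hNh) (fun q => by
      rw [pow_mul]
      exact hprod q _ _ _ _ h4 (Psi_dvd _ _ _) (Psi_dvd' _ _ _)) (fun q => by
      simp only [pow_mul]
      rw [← Psi_mul, ← Psi_mul, mul_comm (M ^ (K + c)) (N ^ (K + c))]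
      set W := N ^ (K + c) * M ^ (K + c) with hW
      set β := M ^ (K + c) * α
      set β' := N ^ (K + c) * α'
      have e1 : ((M * N) ^ (K + c)) ^ (2 * q + 1) = W ^ (2 * q + 1) := by
        rw [hW, mul_pow, mul_comm]
      have h5 : β * (W - β) ∈ I ⊔ Ideal.span {L} := by
        have := Ideal.mul_mem_left _ (M ^ (K + c) * M ^ (K + c)) h4
        convert this using 1
        ring
      have e2 : ((M * N) ^ (K + c)) ^ (2 * q + 1) * (Psi q β W - Psi q β' W) =
          Psi q β W * (W ^ (2 * q + 1) - Psi q β' W) - Psi q β' W * (W ^ (2 * q + 1) - Psi q β W) := by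
        rw [e1]; ring
      rw [e2]
      refine Ideal.sub_mem _ (hprod q _ _ _ _ ?_ (Psi_dvd _ _ _) (Psi_dvd' _ _ _))
        (hprod q _ _ _ _ ?_ (Psi_dvd _ _ _) (Psi_dvd' _ _ _))
      · have := Ideal.add_mem _ h5 (Ideal.mul_mem_left _ β h3)
        convert this using 1
        ring
      · have := Ideal.sub_mem _ h5 (Ideal.mul_mem_left _ (W - β) h3)
        convert this using 1
        ring)
  have h6 : N ^ (K + c) * Psi q α (N ^ (K + c)) - α * (N ^ (K + c)) ^ (2 * q + 1) ∈ sect I L := by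
    apply le_sect
    obtain ⟨u, hu⟩ := (pow_dvd_pow α (Nat.le_add_left 1 q)).trans (Psi_dvd q α (N ^ (K + c)))
    obtain ⟨v, hv⟩ := (pow_dvd_pow (N ^ (K + c) - α) (Nat.le_add_left 1 q)).trans
      (Psi_dvd' q α (N ^ (K + c)))
    rw [pow_one] at hu hv
    have := Ideal.mul_mem_left _ (u - v) h4
    convert this using 1
    linear_combination (N ^ (K + c) - α) * hu - α * hv
  rcases hq with hq | hq
  · left
    have h7 := Ideal.sub_mem _ (Ideal.mul_mem_left _ (N ^ (K + c)) hq) h6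
    apply h.pow_N (k := (K + c) * (2 * q + 1) + c)
    convert h7 using 1
    rw [hα]; ring
  · right
    have h7 := Ideal.sub_mem _ (Ideal.mul_mem_left _ (N ^ (K + c)) hq) h6
    apply h.pow_N (k := (K + c) * (2 * q + 1) + c)
    convert h7 using 1
    rw [hα]; ring

end Idem
end RaoGenus

namespace RaoGenus

open MvPolynomial

section Zero

variable {n : ℕ} {I : Ideal (MPoly n)} {L M N : MPoly n}

lemma Good.homog_factor (h : Good I L M N) {k : ℕ} {b : MPoly n} (hb : b.IsHomogeneous k) (ρ : ℂ) :
    (b - C ρ * N ^ k).IsHomogeneous k := by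
  refine hb.sub ?_
  simpa using (isHomogeneous_C _ ρ).mul (h.hN.pow k)

/-- Sections of degree zero of the hyperplane section are constant. -/
theorem Good.zero (h : Good I L M N) {k : ℕ} {b b' : MPoly n} (hb : b.IsHomogeneous k)
    (hm : M ^ k * b - N ^ k * b' ∈ sect I L) : ∃ ρ : ℂ, b - C ρ * N ^ k ∈ sect I L := by
  classical
  obtain ⟨Y⟩ := h.latJ
  obtain ⟨S, hS⟩ := alg_of_integral Y (iM := 0) (iN := 1) (by decide) h.N_ne hb hm
  have hS' : (S.map fun ρ => b - C ρ * N ^ k).prod ∈ sect I L := hS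
  have hT : ∏ ρ ∈ S.toFinset, (b - C ρ * N ^ k) ∈ sect I L := by
    refine h.rad (d := ∑ ρ ∈ S.toFinset, k) (e := Multiset.card S)
      (IsHomogeneous.prod _ _ _ fun ρ _ => h.homog_factor hb ρ) ?_
    refine Ideal.mem_of_dvd _ ?_ hS'
    rw [Finset.prod_multiset_map_count, ← Finset.prod_pow]
    exact Finset.prod_dvd_prod_of_dvd _ _ fun ρ _ => pow_dvd_pow _ (Multiset.count_le_card _ _)
  revert hT
  refine Finset.induction_on S.toFinset ?_ ?_
  · intro h1
    rw [Finset.prod_empty] at h1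
    exact ⟨0, by rw [(Ideal.eq_top_iff_one _).2 h1]; trivial⟩
  · intro ρ1 T hρ1 ih hT
    rw [Finset.prod_insert hρ1] at hT
    have hne : ∀ ρ ∈ T, ρ1 - ρ ≠ 0 := fun ρ hρ h0 => hρ1 ((sub_eq_zero.1 h0) ▸ hρ)
    set a := ∏ ρ ∈ T, (C (ρ1 - ρ)⁻¹ * (b - C ρ * N ^ k)) with ha
    set a' := ∏ ρ ∈ T, (C (ρ1 - ρ)⁻¹ * (b' - C ρ * M ^ k)) with ha'
    have hah : a.IsHomogeneous (k * T.card) := by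
      have := IsHomogeneous.prod T (fun ρ => C (ρ1 - ρ)⁻¹ * (b - C ρ * N ^ k)) (fun _ => k)
        fun ρ _ => by simpa using (isHomogeneous_C _ (ρ1 - ρ)⁻¹).mul (h.homog_factor hb ρ)
      rwa [Finset.sum_const, smul_eq_mul, mul_comm] at this
    have haC : a = C (∏ ρ ∈ T, (ρ1 - ρ)⁻¹) * ∏ ρ ∈ T, (b - C ρ * N ^ k) := by
      rw [ha, Finset.prod_mul_distrib, map_prod]
    have hb1 : (b - C ρ1 * N ^ k) * a ∈ sect I L := by
      rw [haC, mul_left_comm]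
      exact Ideal.mul_mem_left _ _ hT
    have h1 : M ^ (k * T.card) * a - N ^ (k * T.card) * a' ∈ sect I L := by
      rw [← Ideal.Quotient.eq, pow_mul, pow_mul, ha, ha', ← Finset.prod_const, ← Finset.prod_const,
        ← Finset.prod_mul_distrib, ← Finset.prod_mul_distrib, map_prod, map_prod]
      refine Finset.prod_congr rfl fun ρ _ => ?_
      rw [Ideal.Quotient.eq]
      have := Ideal.mul_mem_left _ (C (ρ1 - ρ)⁻¹) hm
      convert this using 1
      ring
    have h2 : b - C ρ1 * N ^ k ∣ a - N ^ (k * T.card) := by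
      rw [← Ideal.mem_span_singleton, ← Ideal.Quotient.eq, pow_mul, ha, ← Finset.prod_const,
        map_prod, map_prod]
      refine Finset.prod_congr rfl fun ρ hρ => ?_
      rw [Ideal.Quotient.eq, Ideal.mem_span_singleton]
      refine ⟨C (ρ1 - ρ)⁻¹, ?_⟩
      have h3 : C (ρ1 - ρ)⁻¹ * (C ρ1 - C ρ) = (1 : MPoly n) := by
        rw [← C_sub, ← C_mul, inv_mul_cancel₀ (hne ρ hρ), C_1]
      linear_combination (N ^ k) * h3
    obtain ⟨z, hz⟩ := h2
    rcases h.idem hah h1 (by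
      have := Ideal.mul_mem_left _ (-z) hb1
      convert this using 1
      linear_combination (-a) * hz) with h4 | h4
    · apply ih
      have h5 : ∏ ρ ∈ T, (ρ1 - ρ)⁻¹ ≠ 0 :=
        Finset.prod_ne_zero_iff.2 fun ρ hρ => inv_ne_zero (hne ρ hρ)
      have := Ideal.mul_mem_left _ (C (∏ ρ ∈ T, (ρ1 - ρ)⁻¹)⁻¹) h4
      rwa [haC, ← mul_assoc, ← C_mul, inv_mul_cancel₀ h5, C_1, one_mul] at this
    · refine ⟨ρ1, h.pow_N (k := k * T.card) ?_⟩
      have := Ideal.sub_mem _ hb1 (Ideal.mul_mem_left _ (b - C ρ1 * N ^ k) h4)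
      convert this using 1
      ring

end Zero
end RaoGenus

namespace RaoGenus

open MvPolynomial

/-! ### Twisted sections of a curve as a reflexive lattice -/

section Sections

variable {n : ℕ} {J : Ideal (MPoly n)} {y : Fin 2 → MPoly n}

/-- Vectors of degree `t` which become coordinates of forms after multiplication by a power of
the `i`-th variable: sections of `𝒪(t)` on the open set `y i ≠ 0`. -/
noncomputable def Loc (Y : YLat J y) (hy : ∀ i, (y i).IsHomogeneous 1) (i : Fin 2) (t : ℤ) :
    Submodule ℂ (Fin Y.m → MPoly 2) where
  carrier := {θ | ∃ (e d : ℕ) (b : MPoly n), (d : ℤ) = e + t ∧ b.IsHomogeneous d ∧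
    (X i : MPoly 2) ^ e • θ = Y.Θ b}
  zero_mem' := ⟨t.natAbs, (t.natAbs + t).toNat, 0, by omega, isHomogeneous_zero _ _ _, by simp⟩
  add_mem' := by
    rintro θ η ⟨e, d, b, h1, h2, h3⟩ ⟨e', d', b', h1', h2', h3'⟩
    refine ⟨e + e', e + d', y i ^ e' * b + y i ^ e * b', by push_cast; omega, ?_, ?_⟩
    · refine IsHomogeneous.add ?_ ?_
      · have := ((hy i).pow e').mul h2
        convert this using 1
        omega
      · have := ((hy i).pow e).mul h2'
        convert this using 1
        omega
    · have e1 : ∀ j, aeval y (X i ^ j : MPoly 2) = y i ^ j := fun j => by simp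
      rw [map_add, ← e1, ← e1, Y.smul, Y.smul, ← h3, ← h3', smul_add, smul_smul, smul_smul,
        ← pow_add, ← pow_add, add_comm e' e]
  smul_mem' := by
    rintro c θ ⟨e, d, b, h1, h2, h3⟩
    refine ⟨e, d, C c * b, h1, by simpa using (isHomogeneous_C _ c).mul h2, ?_⟩
    rw [← smul_eq_C_mul, map_smul, ← h3, smul_comm]

/-- Global sections of `𝒪(t)`. -/
noncomputable def Glob (Y : YLat J y) (hy : ∀ i, (y i).IsHomogeneous 1) (t : ℤ) :
    Submodule ℂ (Fin Y.m → MPoly 2) := Loc Y hy 0 t ⊓ Loc Y hy 1 t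

variable {Y : YLat J y} {hy : ∀ i, (y i).IsHomogeneous 1}

lemma mem_Loc {i : Fin 2} {t : ℤ} {θ : Fin Y.m → MPoly 2} : θ ∈ Loc Y hy i t ↔
    ∃ (e d : ℕ) (b : MPoly n), (d : ℤ) = e + t ∧ b.IsHomogeneous d ∧
      (X i : MPoly 2) ^ e • θ = Y.Θ b := Iff.rfl

lemma theta_pow (i : Fin 2) (e : ℕ) (b : MPoly n) :
    Y.Θ (y i ^ e * b) = (X i : MPoly 2) ^ e • Y.Θ b := by
  rw [← Y.smul]; simp

lemma Loc.raise {i : Fin 2} {t : ℤ} {θ : Fin Y.m → MPoly 2} {e d : ℕ} {b : MPoly n}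
    (h1 : (d : ℤ) = e + t) (h2 : b.IsHomogeneous d) (h3 : (X i : MPoly 2) ^ e • θ = Y.Θ b)
    (hy : ∀ i, (y i).IsHomogeneous 1)
    {e' : ℕ} (he : e ≤ e') : ∃ (d : ℕ) (b : MPoly n), (d : ℤ) = e' + t ∧ b.IsHomogeneous d ∧
      (X i : MPoly 2) ^ e' • θ = Y.Θ b := by
  refine ⟨(e' - e) + d, y i ^ (e' - e) * b, by push_cast [he]; omega, ?_, ?_⟩
  · simpa using ((hy i).pow (e' - e)).mul h2
  · rw [theta_pow, ← h3, smul_smul, ← pow_add]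
    congr 2
    omega

lemma theta_mem_Loc {i : Fin 2} {d : ℕ} {b : MPoly n} (hb : b.IsHomogeneous d) :
    Y.Θ b ∈ Loc Y hy i d := ⟨0, d, b, by simp, hb, by simp⟩

lemma theta_mem_Glob {d : ℕ} {b : MPoly n} (hb : b.IsHomogeneous d) : Y.Θ b ∈ Glob Y hy d :=
  ⟨theta_mem_Loc hb, theta_mem_Loc hb⟩

lemma Loc.mul {i : Fin 2} (j : Fin 2) {t : ℤ} {θ : Fin Y.m → MPoly 2} (h : θ ∈ Loc Y hy i t) :
    (X j : MPoly 2) • θ ∈ Loc Y hy i (t + 1) := by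
  obtain ⟨e, d, b, h1, h2, h3⟩ := h
  refine ⟨e, 1 + d, y j * b, by push_cast; omega, (hy j).mul h2, ?_⟩
  rw [smul_comm, h3, ← pow_one (X j), ← theta_pow, pow_one]

lemma Glob.mul (j : Fin 2) {t : ℤ} {θ : Fin Y.m → MPoly 2} (h : θ ∈ Glob Y hy t) :
    (X j : MPoly 2) • θ ∈ Glob Y hy (t + 1) := ⟨Loc.mul j h.1, Loc.mul j h.2⟩

lemma Loc.of_mul {i : Fin 2} {t : ℤ} {θ : Fin Y.m → MPoly 2}
    (h : (X i : MPoly 2) • θ ∈ Loc Y hy i (t + 1)) : θ ∈ Loc Y hy i t := by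
  obtain ⟨e, d, b, h1, h2, h3⟩ := h
  refine ⟨e + 1, d, b, by push_cast; omega, h2, ?_⟩
  rw [← h3, smul_smul, pow_succ]

lemma smul_X_inj {i : Fin 2} {e : ℕ} {θ η : Fin Y.m → MPoly 2}
    (h : (X i : MPoly 2) ^ e • θ = (X i : MPoly 2) ^ e • η) : θ = η :=
  smul_right_injective _ (pow_ne_zero e (X_ne_zero i)) h

lemma Glob.le_degree {t : ℤ} {θ : Fin Y.m → MPoly 2} (h : θ ∈ Glob Y hy t) (j : Fin Y.m) :
    (θ j).totalDegree ≤ t.toNat + Y.δ := by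
  obtain ⟨e, d, b, h1, h2, h3⟩ := h.1
  by_cases h0 : θ j = 0
  · simp [h0]
  have h4 := Y.deg d b h2 j
  rw [← h3, Pi.smul_apply, smul_eq_mul,
    totalDegree_mul_of_isDomain (pow_ne_zero _ (X_ne_zero _)) h0, totalDegree_X_pow] at h4
  omega

instance Glob.finite (t : ℤ) : Module.Finite ℂ (Glob Y hy t) := by
  let f : (Fin Y.m → restrictTotalDegree (Fin 2) ℂ (t.toNat + Y.δ)) →ₗ[ℂ] (Fin Y.m → MPoly 2) :=
    LinearMap.pi fun i => (Submodule.subtype _).comp (LinearMap.proj i)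
  have hle : Glob Y hy t ≤ LinearMap.range f := fun θ hθ =>
    ⟨fun i => ⟨θ i, (mem_restrictTotalDegree _ _ _).2 (Glob.le_degree hθ i)⟩, rfl⟩
  exact Submodule.finiteDimensional_of_le hle

/-- A power of the variables that works for all sections of degree `t`. -/
lemma Glob.uniform (t : ℤ) : ∃ e0 : ℕ, ∀ e ≥ e0, ∀ θ ∈ Glob Y hy t, ∀ i, ∃ (d : ℕ) (b : MPoly n),
    (d : ℤ) = e + t ∧ b.IsHomogeneous d ∧ (X i : MPoly 2) ^ e • θ = Y.Θ b := by
  obtain ⟨S, hS⟩ := Module.Finite.iff_fg.1 (Glob.finite (Y := Y) (hy := hy) t)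
  have hex : ∀ (θ : Fin Y.m → MPoly 2) (i : Fin 2), ∃ e0 : ℕ, θ ∈ Glob Y hy t → ∀ e ≥ e0,
      ∃ (d : ℕ) (b : MPoly n),
      (d : ℤ) = e + t ∧ b.IsHomogeneous d ∧ (X i : MPoly 2) ^ e • θ = Y.Θ b := by
    intro θ i
    by_cases h : θ ∈ Glob Y hy t
    · have h' : θ ∈ Loc Y hy i t := by
        fin_cases i
        · exact h.1
        · exact h.2
      obtain ⟨e, d, b, h1, h2, h3⟩ := h'
      exact ⟨e, fun _ e' he => Loc.raise h1 h2 h3 hy he⟩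
    · exact ⟨0, fun h' => absurd h' h⟩
  choose E hE using hex
  refine ⟨t.natAbs + ∑ θ ∈ S, ∑ i, E θ i, fun e he θ hθ i => ?_⟩
  have hd : (((e : ℤ) + t).toNat : ℤ) = e + t := by omega
  rw [← hS] at hθ
  suffices ∃ b : MPoly n, b.IsHomogeneous ((e : ℤ) + t).toNat ∧ (X i : MPoly 2) ^ e • θ = Y.Θ b by
    obtain ⟨b, h1, h2⟩ := this
    exact ⟨_, b, hd, h1, h2⟩
  induction hθ using Submodule.span_induction with
  | mem θ hθ =>
    have h1 : E θ i ≤ ∑ i, E θ i := Finset.single_le_sum (fun _ _ => Nat.zero_le _) (Finset.mem_univ i)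
    have h2 : ∑ i, E θ i ≤ ∑ θ ∈ S, ∑ i, E θ i :=
      Finset.single_le_sum (f := fun θ => ∑ i, E θ i) (fun _ _ => Nat.zero_le _) hθ
    obtain ⟨d, b, h3, h4, h5⟩ := hE θ i (hS ▸ Submodule.subset_span hθ) e (by omega)
    have : d = ((e : ℤ) + t).toNat := by omega
    exact ⟨b, this ▸ h4, h5⟩
  | zero => exact ⟨0, isHomogeneous_zero _ _ _, by simp⟩
  | add θ η _ _ h1 h2 =>
    obtain ⟨b, h3, h4⟩ := h1
    obtain ⟨b', h3', h4'⟩ := h2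
    exact ⟨b + b', h3.add h3', by rw [smul_add, h4, h4', map_add]⟩
  | smul c θ _ h1 =>
    obtain ⟨b, h3, h4⟩ := h1
    exact ⟨C c * b, by simpa using (isHomogeneous_C _ c).mul h3, by
      rw [smul_comm, h4, ← smul_eq_C_mul, map_smul]⟩

/-- Multiplication by a variable, as a linear map. -/
noncomputable def mulX (m : ℕ) (p : MPoly 2) : (Fin m → MPoly 2) →ₗ[ℂ] (Fin m → MPoly 2) :=
  LinearMap.lsmul (MPoly 2) (Fin m → MPoly 2) p |>.restrictScalars ℂ

@[simp] lemma mulX_apply (m : ℕ) (p : MPoly 2) (θ : Fin m → MPoly 2) : mulX m p θ = p • θ := rfl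

lemma mulX_inj {m : ℕ} {p : MPoly 2} (hp : p ≠ 0) : Function.Injective (mulX m p) :=
  smul_right_injective _ hp

lemma finrank_map_inj {V W : Type*} [AddCommGroup V] [Module ℂ V] [AddCommGroup W] [Module ℂ W]
    {f : V →ₗ[ℂ] W} (hf : Function.Injective f) (p : Submodule ℂ V) :
    Module.finrank ℂ (p.map f) = Module.finrank ℂ p :=
  (Submodule.equivMapOfInjective f hf p).finrank_eq.symm

lemma Glob.inf_map (t : ℤ) : (Glob Y hy (t + 1)).map (mulX Y.m (X 0)) ⊓
    (Glob Y hy (t + 1)).map (mulX Y.m (X 1)) = (Glob Y hy t).map (mulX Y.m (X 0 * X 1)) := by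
  apply le_antisymm
  · rintro _ ⟨⟨θ, hθ, rfl⟩, ⟨η, hη, hh⟩⟩
    simp only [mulX_apply] at hh ⊢
    -- `X 0` divides the coordinates of `η`
    have hdvd : ∀ j, (X 0 : MPoly 2) ∣ η j := by
      intro j
      have h1 : (X 0 : MPoly 2) ^ 1 ∣ X 1 ^ 1 * η j := ⟨θ j, by
        simpa using congrFun hh j⟩
      simpa using X_pow_dvd (by decide) h1
    choose ζ hζ using hdvd
    have hηζ : η = (X 0 : MPoly 2) • ζ := funext hζ
    have hθζ : θ = (X 1 : MPoly 2) • ζ := by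
      apply smul_X_inj (Y := Y) (i := 0) (e := 1)
      rw [pow_one, ← hh, hηζ, smul_comm]
    refine ⟨ζ, ⟨Loc.of_mul (hηζ ▸ hη.1), Loc.of_mul (hθζ ▸ hθ.2)⟩, ?_⟩
    rw [mulX_apply, hθζ, smul_smul]
  · rintro _ ⟨ζ, hζ, rfl⟩
    refine ⟨⟨X 1 • ζ, Glob.mul 1 hζ, ?_⟩, ⟨X 0 • ζ, Glob.mul 0 hζ, ?_⟩⟩
    · simp [smul_smul]
    · simp [smul_smul, mul_comm]

/-- Every form is congruent to a quadric times a power of `y 1` modulo `J` and `y 0`, on the chart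
where `y 1` is invertible. -/
def QuadCond (J : Ideal (MPoly n)) (y : Fin 2 → MPoly n) : Prop :=
  ∀ d (b : MPoly n), b.IsHomogeneous (d + 2) → ∃ w : MPoly n, w.IsHomogeneous 2 ∧
  ∃ (j : ℕ) (c : MPoly n), c.IsHomogeneous (d + 1 + j) ∧ y 1 ^ j * (b - y 1 ^ d * w) - y 0 * c ∈ J

/-- Sections of degree at least two are generated by those of smaller degree and by quadrics. -/
lemma Glob.decomp (hH : QuadCond J y) (t : ℕ) {θ : Fin Y.m → MPoly 2}
    (hθ : θ ∈ Glob Y hy ((t : ℤ) + 2)) :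
    ∃ η ∈ Glob Y hy ((t : ℤ) + 1), ∃ w : MPoly n, w.IsHomogeneous 2 ∧
      θ = (X 0 : MPoly 2) • η + (X 1 : MPoly 2) ^ t • Y.Θ w := by
  obtain ⟨e, d, b, h1, h2, h3⟩ := hθ.2
  obtain rfl : d = (e + t) + 2 := by omega
  obtain ⟨w, hw, j, c, hc, hm⟩ := hH _ b h2
  have h4 : (X 1 : MPoly 2) ^ (j + e) • (θ - (X 1 : MPoly 2) ^ t • Y.Θ w) =
      (X 0 : MPoly 2) • Y.Θ c := by
    have h5 := (Y.ker _).2 hm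
    rw [map_sub, sub_eq_zero, theta_pow, map_sub, theta_pow, ← h3, ← pow_one (y 0), theta_pow,
      pow_one] at h5
    rw [← h5, smul_sub, smul_sub, smul_smul, smul_smul, smul_smul, ← pow_add, ← pow_add, ← pow_add]
    congr 3
    ring
  have hdvd : ∀ i, (X 0 : MPoly 2) ∣ (θ - (X 1 : MPoly 2) ^ t • Y.Θ w) i := by
    intro i
    have h1 : (X 0 : MPoly 2) ^ 1 ∣ X 1 ^ (j + e) * (θ - (X 1 : MPoly 2) ^ t • Y.Θ w) i :=
      ⟨Y.Θ c i, by simpa using congrFun h4 i⟩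
    simpa using X_pow_dvd (by decide) h1
  choose η hη' using hdvd
  have hη : θ - (X 1 : MPoly 2) ^ t • Y.Θ w = (X 0 : MPoly 2) • η := funext hη'
  refine ⟨η, ⟨Loc.of_mul (i := 0) ?_, j + e, e + t + 1 + j, c, by push_cast; ring, hc, ?_⟩, w, hw, ?_⟩
  · rw [← hη]
    refine Submodule.sub_mem _ (by rw [add_assoc]; exact hθ.1) ?_
    rw [← theta_pow]
    have h6 : (y 1 ^ t * w).IsHomogeneous (t + 2) := by
      simpa using ((hy 1).pow t).mul hw
    rw [show (t : ℤ) + 1 + 1 = ((t + 2 : ℕ) : ℤ) by push_cast; ring]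
    exact theta_mem_Loc h6
  · apply smul_X_inj (Y := Y) (i := 0) (e := 1)
    rw [pow_one, ← h4, hη, smul_comm]
  · rw [← hη, sub_add_cancel]

lemma Glob.sup_map (hH : QuadCond J y) (t : ℕ) : (Glob Y hy ((t : ℤ) + 2)).map (mulX Y.m (X 0)) ⊔
    (Glob Y hy ((t : ℤ) + 2)).map (mulX Y.m (X 1)) = Glob Y hy ((t : ℤ) + 3) := by
  apply le_antisymm
  · refine sup_le ?_ ?_
    · rintro _ ⟨θ, hθ, rfl⟩
      have := Glob.mul 0 hθ
      rwa [add_assoc] at this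
    · rintro _ ⟨θ, hθ, rfl⟩
      have := Glob.mul 1 hθ
      rwa [add_assoc] at this
  · intro θ hθ
    obtain ⟨η, hη, w, hw, rfl⟩ := Glob.decomp hH (t + 1) (by
      rw [show ((t + 1 : ℕ) : ℤ) + 2 = (t : ℤ) + 3 by push_cast; ring]; exact hθ)
    refine Submodule.add_mem_sup ⟨η, by
      rw [show (t : ℤ) + 2 = ((t + 1 : ℕ) : ℤ) + 1 by push_cast; ring]; exact hη, rfl⟩
      ⟨(X 1 : MPoly 2) ^ t • Y.Θ w, ?_, ?_⟩
    · rw [← theta_pow]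
      have h6 : (y 1 ^ t * w).IsHomogeneous (t + 2) := by
        simpa using ((hy 1).pow t).mul hw
      have := theta_mem_Glob (Y := Y) (hy := hy) h6
      exact_mod_cast this
    · rw [mulX_apply, smul_smul, pow_succ']

/-- The dimension of the space of sections is linear in the degree. -/
lemma Glob.recur (hH : QuadCond J y) (t : ℕ) :
    Module.finrank ℂ (Glob Y hy ((t : ℤ) + 3)) +
    Module.finrank ℂ (Glob Y hy ((t : ℤ) + 1)) = 2 * Module.finrank ℂ (Glob Y hy ((t : ℤ) + 2)) := by
  have h := Submodule.finrank_sup_add_finrank_inf_eq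
    ((Glob Y hy ((t : ℤ) + 2)).map (mulX Y.m (X 0))) ((Glob Y hy ((t : ℤ) + 2)).map (mulX Y.m (X 1)))
  rw [Glob.sup_map hH] at h
  have h2 := Glob.inf_map (Y := Y) (hy := hy) ((t : ℤ) + 1)
  rw [show (t : ℤ) + 1 + 1 = t + 2 by ring] at h2
  rw [h2, finrank_map_inj (mulX_inj (mul_ne_zero (X_ne_zero _) (X_ne_zero _))),
    finrank_map_inj (mulX_inj (X_ne_zero _)), finrank_map_inj (mulX_inj (X_ne_zero _))] at h
  omega

end Sections
end RaoGenus

namespace RaoGenus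

open MvPolynomial

/-! ### Twisted sections and graded homomorphisms -/

section Deligne

variable {n : ℕ} {J : Ideal (MPoly n)} {y : Fin 2 → MPoly n}

/-- The coordinates of a residue class. -/
noncomputable def thetaBar (Y : YLat J y) : (MPoly n ⧸ J) →ₗ[ℂ] (Fin Y.m → MPoly 2) where
  toFun x := Y.Θ (Function.surjInv Ideal.Quotient.mk_surjective x)
  map_add' x z := by
    rw [← sub_eq_zero, ← map_add, ← map_sub, Y.ker, ← Ideal.Quotient.eq_zero_iff_mem]
    simp [Function.surjInv_eq]
  map_smul' c x := by
    rw [← sub_eq_zero, RingHom.id_apply, ← map_smul, ← map_sub, Y.ker,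
      ← Ideal.Quotient.eq_zero_iff_mem, map_sub, smul_eq_C_mul, map_mul,
      Function.surjInv_eq Ideal.Quotient.mk_surjective,
      Function.surjInv_eq Ideal.Quotient.mk_surjective, sub_eq_zero]
    obtain ⟨a, rfl⟩ := Ideal.Quotient.mk_surjective x
    rw [← map_mul, ← smul_eq_C_mul]
    rfl

variable (Y : YLat J y)

lemma thetaBar_mk (a : MPoly n) : thetaBar Y (Ideal.Quotient.mk J a) = Y.Θ a := by
  change Y.Θ _ = _
  rw [← sub_eq_zero, ← map_sub, Y.ker, ← Ideal.Quotient.eq_zero_iff_mem]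
  simp [Function.surjInv_eq]

lemma thetaBar_inj : Function.Injective (thetaBar Y) := by
  rw [injective_iff_map_eq_zero]
  intro x hx
  obtain ⟨a, rfl⟩ := Ideal.Quotient.mk_surjective x
  rw [thetaBar_mk, Y.ker] at hx
  exact Ideal.Quotient.eq_zero_iff_mem.2 hx

lemma pow_cancel (Y : YLat J y) (i : Fin 2) {e : ℕ} {a : MPoly n} (h : y i ^ e * a ∈ J) : a ∈ J := by
  rw [← Y.ker, theta_pow, smul_eq_zero] at h
  rw [← Y.ker]
  exact h.resolve_left (pow_ne_zero _ (X_ne_zero _))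

variable (hy : ∀ i, (y i).IsHomogeneous 1)

/-- The section defined by a graded homomorphism, multiplied by a power of the last variable. -/
noncomputable def evHom (k : ℕ) (t : ℤ) : gradedHomSub J k t →ₗ[ℂ] (Fin Y.m → MPoly 2) where
  toFun φ := thetaBar Y (φ.1 ⟨y 1 ^ k, mem_of_mem_mId (hy 1) k⟩)
  map_add' φ ψ := by simp
  map_smul' c φ := by simp

lemma evHom_inj (k : ℕ) (t : ℤ) : Function.Injective (evHom Y hy k t) := by
  rw [injective_iff_map_eq_zero]
  intro φ hφ
  have h0 : φ.1 ⟨y 1 ^ k, mem_of_mem_mId (hy 1) k⟩ = 0 :=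
    thetaBar_inj Y (by rw [map_zero]; exact hφ)
  ext ⟨f, hf⟩
  have h1 : (y 1 ^ k) • φ.1 ⟨f, hf⟩ = f • φ.1 ⟨y 1 ^ k, mem_of_mem_mId (hy 1) k⟩ := by
    rw [← map_smul, ← map_smul]
    congr 1
    ext1
    exact mul_comm _ _
  rw [h0, smul_zero] at h1
  change φ.1 ⟨f, hf⟩ = 0
  obtain ⟨a, ha⟩ := Ideal.Quotient.mk_surjective (φ.1 ⟨f, hf⟩)
  rw [← ha, smul_mk_eq, Ideal.Quotient.eq_zero_iff_mem] at h1
  rw [← ha, Ideal.Quotient.eq_zero_iff_mem]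
  exact pow_cancel Y 1 h1

lemma mem_degQZ {x : MPoly n ⧸ J} {t : ℤ} (h : x ∈ degQZ J t) : x = 0 ∨
    ∃ (d : ℕ) (b : MPoly n), (d : ℤ) = t ∧ b.IsHomogeneous d ∧ x = Ideal.Quotient.mk J b := by
  unfold degQZ at h
  split_ifs at h with h0
  · obtain ⟨b, hb, rfl⟩ := h
    exact Or.inr ⟨t.toNat, b, by omega, hb, rfl⟩
  · exact Or.inl h

lemma evHom_range (k : ℕ) (t : ℤ) : LinearMap.range (evHom Y hy k t) ≤
    (Glob Y hy t).map (mulX Y.m (X 1 ^ k)) := by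
  rintro _ ⟨φ, rfl⟩
  have hk0 : (y 0 ^ k).IsHomogeneous k := by simpa using (hy 0).pow k
  have hk1 : (y 1 ^ k).IsHomogeneous k := by simpa using (hy 1).pow k
  have h0 := mem_degQZ (φ.2 k (y 0 ^ k) (mem_of_mem_mId (hy 0) k) hk0)
  have h1 := mem_degQZ (φ.2 k (y 1 ^ k) (mem_of_mem_mId (hy 1) k) hk1)
  have hc : (y 0 ^ k) • φ.1 ⟨y 1 ^ k, mem_of_mem_mId (hy 1) k⟩ =
      (y 1 ^ k) • φ.1 ⟨y 0 ^ k, mem_of_mem_mId (hy 0) k⟩ := by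
    rw [← map_smul, ← map_smul]
    congr 1
    ext1
    exact mul_comm _ _
  have hzero : φ.1 ⟨y 1 ^ k, mem_of_mem_mId (hy 1) k⟩ = 0 →
      evHom Y hy k t φ ∈ (Glob Y hy t).map (mulX Y.m (X 1 ^ k)) := by
    intro h
    have : evHom Y hy k t φ = 0 := by
      change thetaBar Y _ = 0
      rw [h, map_zero]
    rw [this]
    exact zero_mem _
  rcases h1 with h1 | ⟨d, b, hd, hb, h1⟩
  · exact hzero h1
  rcases h0 with h0 | ⟨d', b', hd', hb', h0⟩
  · apply hzero
    rw [h0, smul_zero, h1, smul_mk_eq, Ideal.Quotient.eq_zero_iff_mem] at hc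
    rw [h1, Ideal.Quotient.eq_zero_iff_mem]
    exact pow_cancel Y 0 hc
  rw [h0, h1, smul_mk_eq, smul_mk_eq, Ideal.Quotient.mk_eq_mk_iff_sub_mem, ← Y.ker, map_sub,
    sub_eq_zero, theta_pow, theta_pow] at hc
  have hdvd : ∀ j, (X 1 : MPoly 2) ^ k ∣ Y.Θ b j := fun j =>
    X_pow_dvd (i := 1) (j := 0) (by decide) (b := k) ⟨Y.Θ b' j, congrFun hc j⟩
  choose θ hθ' using hdvd
  have hθ : Y.Θ b = (X 1 : MPoly 2) ^ k • θ := funext hθ'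
  refine ⟨θ, ⟨⟨k, d', b', hd', hb', ?_⟩, ⟨k, d, b, hd, hb, hθ.symm⟩⟩, ?_⟩
  · apply smul_X_inj (Y := Y) (i := 1) (e := k)
    rw [← hc, hθ, smul_comm]
  · change _ = thetaBar Y _
    rw [h1, thetaBar_mk, hθ, mulX_apply]

lemma evHom_surj (hJ : IsHomogIdeal J) {k0 : ℕ} (hfin : mId n ^ k0 ≤ J ⊔ Ideal.span (Set.range y))
    (t : ℤ) : ∃ K, (Glob Y hy t).map (mulX Y.m (X 1 ^ K)) ≤ LinearMap.range (evHom Y hy K t) := by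
  obtain ⟨e, he⟩ := Glob.uniform (Y := Y) (hy := hy) t
  replace he := he e le_rfl
  have hK : mId n ^ (k0 * (1 + (e + e))) ≤ J ⊔ (Ideal.span {y 0 ^ e} ⊔ Ideal.span {y 1 ^ e}) := by
    have h2 : Ideal.span (Set.range y) = Ideal.span {y 0} ⊔ Ideal.span {y 1} := by
      rw [← range_two]
      congr 2
      ext i; fin_cases i <;> rfl
    rw [pow_mul]
    refine (Ideal.pow_right_mono hfin _).trans ?_
    refine Ideal.sup_pow_add_le_pow_sup_pow.trans ?_
    rw [pow_one, h2]
    refine sup_le_sup_left (Ideal.sup_pow_add_le_pow_sup_pow.trans ?_) _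
    rw [Ideal.span_singleton_pow, Ideal.span_singleton_pow]
  refine ⟨k0 * (1 + (e + e)), ?_⟩
  generalize k0 * (1 + (e + e)) = K at hK
  rintro _ ⟨θ, hθ, rfl⟩
  obtain ⟨d, b0, hd, hb0, h0⟩ := he θ hθ 0
  obtain ⟨d1, b1, hd1, hb1, h1⟩ := he θ hθ 1
  obtain rfl : d = d1 := by omega
  have hrel : y 0 ^ e * b1 - y 1 ^ e * b0 ∈ J := by
    rw [← Y.ker, map_sub, theta_pow, theta_pow, ← h0, ← h1, smul_comm, sub_self]
  have hex : ∀ f : (mId n ^ K : Ideal (MPoly n)), ∃ c, y 1 ^ e * c - f.1 * b1 ∈ J := by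
    rintro ⟨f, hf⟩
    obtain ⟨j, hj, u, hu, rfl⟩ := Submodule.mem_sup.1 (hK hf)
    obtain ⟨u0, hu0, u1, hu1, rfl⟩ := Submodule.mem_sup.1 hu
    obtain ⟨g0, rfl⟩ := Ideal.mem_span_singleton'.1 hu0
    obtain ⟨g1, rfl⟩ := Ideal.mem_span_singleton'.1 hu1
    refine ⟨g0 * b0 + g1 * b1, ?_⟩
    have : y 1 ^ e * (g0 * b0 + g1 * b1) - (j + (g0 * y 0 ^ e + g1 * y 1 ^ e)) * b1 =
      -(b1 * j) - g0 * (y 0 ^ e * b1 - y 1 ^ e * b0) := by ring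
    exact this ▸ J.sub_mem (J.neg_mem (J.mul_mem_left _ hj)) (J.mul_mem_left _ hrel)
  choose c hc using hex
  have huniq : ∀ {a a' : MPoly n}, y 1 ^ e * a - y 1 ^ e * a' ∈ J →
      Ideal.Quotient.mk J a = Ideal.Quotient.mk J a' := by
    intro a a' h
    rw [Ideal.Quotient.mk_eq_mk_iff_sub_mem]
    rw [← mul_sub] at h
    exact pow_cancel Y 1 h
  let φ : (mId n ^ K : Ideal (MPoly n)) →ₗ[MPoly n] (MPoly n ⧸ J) :=
    { toFun := fun f => Ideal.Quotient.mk J (c f)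
      map_add' := by
        intro f g
        rw [← map_add]
        apply huniq
        have : y 1 ^ e * c (f + g) - y 1 ^ e * (c f + c g) =
          (y 1 ^ e * c (f + g) - (f.1 + g.1) * b1) - (y 1 ^ e * c f - f.1 * b1) -
            (y 1 ^ e * c g - g.1 * b1) := by ring
        rw [this]
        exact J.sub_mem (J.sub_mem (hc _) (hc _)) (hc _)
      map_smul' := by
        intro a f
        rw [RingHom.id_apply, smul_mk_eq]
        apply huniq
        have : y 1 ^ e * c (a • f) - y 1 ^ e * (a * c f) =
          (y 1 ^ e * c (a • f) - (a * f.1) * b1) - a * (y 1 ^ e * c f - f.1 * b1) := by ring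
        rw [this]
        exact J.sub_mem (hc (a • f)) (J.mul_mem_left _ (hc _)) }
  have hye : (y 1 ^ e).IsHomogeneous e := by simpa using (hy 1).pow e
  have hφ : φ ∈ gradedHomSub J K t := by
    intro j f hf hfj
    have hfb : (f * b1).IsHomogeneous (j + d) := IsHomogeneous.mul hfj hb1
    have hcf := hc ⟨f, hf⟩
    change Ideal.Quotient.mk J (c ⟨f, hf⟩) ∈ _
    generalize c ⟨f, hf⟩ = a at hcf
    have hcomp : ∀ i, y 1 ^ e * homogeneousComponent i a -
        homogeneousComponent (e + i) (f * b1) ∈ J := by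
      intro i
      have := hJ _ hcf (e + i)
      rwa [map_sub, comp_homog_mul hye] at this
    by_cases hjt : 0 ≤ (j : ℤ) + t
    · have hi : e + ((j : ℤ) + t).toNat = j + d := by omega
      have h5 := hcomp ((j : ℤ) + t).toNat
      rw [hi, homogeneousComponent_of_mem hfb, if_pos rfl] at h5
      have h6 : Ideal.Quotient.mk J a =
          Ideal.Quotient.mk J (homogeneousComponent ((j : ℤ) + t).toNat a) := by
        apply huniq
        have := J.sub_mem hcf h5
        simpa using this
      rw [h6, degQZ, if_pos hjt]
      exact ⟨_, homogeneousComponent_isHomogeneous _ _, rfl⟩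
    · have : a ∈ J := by
        apply IsHomogIdeal.mem_of_comp
        intro i
        have h5 := hcomp i
        rw [homogeneousComponent_of_mem hfb, if_neg (by omega), sub_zero] at h5
        exact pow_cancel Y 1 h5
      rw [Ideal.Quotient.eq_zero_iff_mem.2 this]
      exact zero_mem _
  refine ⟨⟨φ, hφ⟩, ?_⟩
  change thetaBar Y (Ideal.Quotient.mk J (c _)) = _
  have h7 := hc ⟨y 1 ^ K, mem_of_mem_mId (hy 1) K⟩
  rw [← Y.ker, map_sub, theta_pow, theta_pow, ← h1, sub_eq_zero, smul_comm] at h7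
  rw [thetaBar_mk, mulX_apply]
  exact smul_X_inj h7

/-- The stable dimension of the graded homomorphisms `𝔪^k → R/J` is the dimension of the space
of twisted sections. -/
theorem h0Nat_eq_finrank_Glob (hJ : IsHomogIdeal J) {k0 : ℕ}
    (hfin : mId n ^ k0 ≤ J ⊔ Ideal.span (Set.range y)) (t : ℤ) :
    h0Nat J t = Module.finrank ℂ (Glob Y hy t) := by
  have hmap : ∀ k, Module.finrank ℂ ((Glob Y hy t).map (mulX Y.m (X 1 ^ k))) =
      Module.finrank ℂ (Glob Y hy t) := fun k =>
    finrank_map_inj (mulX_inj (pow_ne_zero _ (X_ne_zero _))) _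
  have hev : ∀ k, Module.finrank ℂ (gradedHomSub J k t) =
      Module.finrank ℂ (LinearMap.range (evHom Y hy k t)) := fun k =>
    (LinearMap.finrank_range_of_inj (evHom_inj Y hy k t)).symm
  have hle : ∀ k, Module.finrank ℂ (gradedHomSub J k t) ≤ Module.finrank ℂ (Glob Y hy t) := by
    intro k
    rw [hev, ← hmap k]
    exact Submodule.finrank_mono (evHom_range Y hy k t)
  apply le_antisymm
  · exact ciSup_le' hle
  · obtain ⟨K, hK⟩ := evHom_surj Y hy hJ hfin t
    refine le_trans ?_ (le_ciSup ⟨_, Set.forall_mem_range.2 hle⟩ K)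
    rw [hev, ← hmap K, le_antisymm (evHom_range Y hy K t) hK]

end Deligne
end RaoGenus

namespace RaoGenus

open MvPolynomial

/-! ### The genus formula for a good triple of linear forms -/

section Conclusion

variable {n : ℕ}

lemma finrank_theta {J : Ideal (MPoly n)} {y : Fin 2 → MPoly n} (Y : YLat J y) (t : ℕ) :
    Module.finrank ℂ ((homogeneousSubmodule (Fin n) ℂ t).map Y.Θ) = hN J t := by
  have : (homogeneousSubmodule (Fin n) ℂ t).map Y.Θ = (degQ J t).map (thetaBar Y) := by
    ext v
    constructor
    · rintro ⟨b, hb, rfl⟩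
      exact ⟨Ideal.Quotient.mk J b, ⟨b, hb, rfl⟩, thetaBar_mk Y b⟩
    · rintro ⟨_, ⟨b, hb, rfl⟩, rfl⟩
      exact ⟨b, hb, (thetaBar_mk Y b).symm⟩
  rw [this, finrank_map_inj (thetaBar_inj Y)]
  rfl

lemma hN_zero {I : Ideal (MPoly n)} (hI : I.IsPrime) : hN I 0 = 1 := by
  have h := hN_add_gr I 0
  have h1 : gr I 0 = ⊥ := by
    rw [eq_bot_iff]
    intro f hf
    rw [mem_gr] at hf
    have hC : f = C (coeff 0 f) := by
      have := (totalDegree_eq_zero_iff_eq_C (p := f)).1 (Nat.le_zero.1 (hf.1.totalDegree_le))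
      exact this
    rw [Submodule.mem_bot]
    by_contra h0
    have hc : coeff 0 f ≠ 0 := fun hc => h0 (by rw [hC, hc, C_0])
    refine hI.ne_top (I.eq_top_of_isUnit_mem hf.2 ?_)
    rw [hC]
    exact (isUnit_iff_ne_zero.2 hc).map C
  have h2 : homogeneousSubmodule (Fin n) ℂ 0 = Submodule.span ℂ {1} := by
    ext f
    rw [Submodule.mem_span_singleton, mem_homogeneousSubmodule]
    constructor
    · intro hf
      refine ⟨coeff 0 f, ?_⟩
      rw [smul_eq_C_mul, mul_one]
      exact ((totalDegree_eq_zero_iff_eq_C (p := f)).1 (Nat.le_zero.1 (hf.totalDegree_le))).symm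
    · rintro ⟨a, rfl⟩
      rw [smul_eq_C_mul, mul_one]
      exact isHomogeneous_C _ _
  rw [h1, h2, finrank_bot, finrank_span_singleton one_ne_zero, add_zero] at h
  exact h

variable {I : Ideal (MPoly n)} {L M N : MPoly n}

lemma Good.homog_two (h : Good I L M N) (i : Fin 2) : (![M, N] i).IsHomogeneous 1 := by
  fin_cases i
  · exact h.hM
  · exact h.hN

lemma Good.finJ (h : Good I L M N) : ∃ k, mId n ^ k ≤ sect I L ⊔ Ideal.span (Set.range ![M, N]) := by
  obtain ⟨k, hk⟩ := h.fin
  refine ⟨k, hk.trans ?_⟩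
  rw [range_three, range_two, sup_assoc (Ideal.span {L}), ← sup_assoc I]
  exact sup_le_sup_right le_sect _

/-- The zero-dimensional section `V(I, L, M)` imposes independent conditions on quadrics. -/
def Quad (I : Ideal (MPoly n)) (L M N : MPoly n) : Prop :=
  ∀ a : MPoly n, ∃ w : MPoly n, w.IsHomogeneous 2 ∧
    a - w ∈ I ⊔ Ideal.span {L} ⊔ Ideal.span {M} ⊔ Ideal.span {N - 1}

lemma pow_mul_sub_mem (Q : Ideal (MPoly n)) (N w : MPoly n) (d : ℕ) :
    N ^ d * w - w ∈ Q ⊔ Ideal.span {N - 1} := by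
  refine Ideal.mem_sup_right (Ideal.mem_span_singleton.2 ?_)
  have : N ^ d * w - w = (N ^ d - 1) * w := by ring
  rw [this]
  exact (sub_one_dvd_pow_sub_one N d).mul_right _

lemma Good.quad (h : Good I L M N) (hq : Quad I L M N) (d : ℕ) (b : MPoly n)
    (hb : b.IsHomogeneous (d + 2)) : ∃ w : MPoly n, w.IsHomogeneous 2 ∧
      ∃ (j : ℕ) (c : MPoly n), c.IsHomogeneous (d + 1 + j) ∧
        ![M, N] 1 ^ j * (b - ![M, N] 1 ^ d * w) - ![M, N] 0 * c ∈ sect I L := by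
  obtain ⟨w, hw, hbw⟩ := hq b
  refine ⟨w, hw, ?_⟩
  have h1 : b - N ^ d * w ∈ I ⊔ Ideal.span {L} ⊔ Ideal.span {M} ⊔ Ideal.span {N - 1} := by
    have : b - N ^ d * w = (b - w) - (N ^ d * w - w) := by ring
    rw [this]
    exact Ideal.sub_mem _ hbw (pow_mul_sub_mem _ _ _ _)
  have hIL := IsHomogIdeal.sup_span h.surf.1 h.hL
  have hhom : (b - N ^ d * w).IsHomogeneous (d + 2) :=
    hb.sub (by simpa using (h.hN.pow d).mul hw)
  obtain ⟨j, hj⟩ := pow_mul_mem_of_mem_sup_sub_one (IsHomogIdeal.sup_span hIL h.hM) h.hN hhom h1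
  have hhom2 : (N ^ j * (b - N ^ d * w)).IsHomogeneous (1 + (d + 1 + j)) := by
    have := (h.hN.pow j).mul hhom
    convert this using 1
    omega
  obtain ⟨c, hc, hm⟩ := exists_homog_of_mem_sup hIL h.hM hhom2 hj
  exact ⟨j, c, hc, le_sect hm⟩

variable (h : Good I L M N) (Y : YLat (sect I L) ![M, N])

lemma Good.glob_neg (h : Good I L M N) {t : ℤ} (ht : t < 0) : Glob Y h.homog_two t = ⊥ := by
  obtain ⟨e, he⟩ := Glob.uniform (Y := Y) (hy := h.homog_two) t
  rw [eq_bot_iff]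
  intro θ hθ
  obtain ⟨d, b0, hd, hb0, h0⟩ := he e le_rfl θ hθ 0
  obtain ⟨d1, b1, hd1, hb1, h1⟩ := he e le_rfl θ hθ 1
  have h2 : b1 ∈ sect I L := by
    refine h.neg (b' := b0) hb1 (k := e) (by omega) ?_
    rw [← Y.ker, map_sub]
    have e0 := theta_pow (Y := Y) 0 e b1
    have e1 := theta_pow (Y := Y) 1 e b0
    simp only [Matrix.cons_val_zero, Matrix.cons_val_one] at e0 e1
    rw [e0, e1, ← h0, ← h1, smul_comm, sub_self]
  rw [Submodule.mem_bot]
  rw [(Y.ker _).2 h2, smul_eq_zero] at h1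
  exact h1.resolve_left (pow_ne_zero _ (X_ne_zero _))

lemma Good.glob_zero (h : Good I L M N) :
    Glob Y h.homog_two ((0 : ℕ) : ℤ) = (homogeneousSubmodule (Fin n) ℂ 0).map Y.Θ := by
  obtain ⟨e, he⟩ := Glob.uniform (Y := Y) (hy := h.homog_two) ((0 : ℕ) : ℤ)
  apply le_antisymm
  · intro θ hθ
    obtain ⟨d, b0, hd, hb0, h0⟩ := he e le_rfl θ hθ 0
    obtain ⟨d1, b1, hd1, hb1, h1⟩ := he e le_rfl θ hθ 1
    obtain rfl : d1 = e := by omega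
    obtain ⟨ρ, hρ⟩ := h.zero (b' := b0) hb1 (by
      rw [← Y.ker, map_sub]
      have e0 := theta_pow (Y := Y) 0 d1 b1
      have e1 := theta_pow (Y := Y) 1 d1 b0
      simp only [Matrix.cons_val_zero, Matrix.cons_val_one] at e0 e1
      rw [e0, e1, ← h0, ← h1, smul_comm, sub_self])
    refine ⟨C ρ, isHomogeneous_C _ _, ?_⟩
    have e1 := theta_pow (Y := Y) 1 d1 (C ρ)
    simp only [Matrix.cons_val_zero, Matrix.cons_val_one] at e1
    rw [← Y.ker, map_sub, sub_eq_zero, ← h1, mul_comm, e1] at hρ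
    exact (smul_X_inj hρ).symm
  · rintro _ ⟨b, hb, rfl⟩
    exact theta_mem_Glob hb

lemma Good.glob_sup (h : Good I L M N) (hq : Quad I L M N) (t : ℕ) : ∀ θ ∈ Glob Y h.homog_two ((t : ℤ) + 1),
    ∃ η ∈ Glob Y h.homog_two 1, ∃ b : MPoly n, b.IsHomogeneous (t + 1) ∧
      θ = (X 0 : MPoly 2) ^ t • η + Y.Θ b := by
  induction t with
  | zero =>
    intro θ hθ
    exact ⟨θ, by simpa using hθ, 0, isHomogeneous_zero _ _ _, by simp⟩
  | succ t ih =>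
    intro θ hθ
    obtain ⟨η, hη, w, hw, rfl⟩ := Glob.decomp (h.quad hq) t (by
      rw [show (t : ℤ) + 2 = ((t + 1 : ℕ) : ℤ) + 1 by push_cast; ring]; exact hθ)
    obtain ⟨ζ, hζ, b, hb, rfl⟩ := ih η hη
    refine ⟨ζ, hζ, M * b + N ^ t * w, ?_, ?_⟩
    · refine IsHomogeneous.add ?_ ?_
      · have := h.hM.mul hb
        rwa [add_comm] at this
      · simpa using (h.hN.pow t).mul hw
    · have e0 := theta_pow (Y := Y) 0 1 b
      have e1 := theta_pow (Y := Y) 1 t w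
      simp only [Matrix.cons_val_zero, Matrix.cons_val_one, pow_one] at e0 e1
      rw [map_add, e0, e1, smul_add, smul_smul, ← pow_succ', add_assoc]

lemma Good.glob_large (h : Good I L M N) (hq : Quad I L M N) : ∃ T : ℕ, ∀ t ≥ T,
    Glob Y h.homog_two (t : ℤ) = (homogeneousSubmodule (Fin n) ℂ t).map Y.Θ := by
  obtain ⟨e, he⟩ := Glob.uniform (Y := Y) (hy := h.homog_two) 1
  refine ⟨e + 1, fun t ht => le_antisymm ?_ ?_⟩
  · obtain ⟨t, rfl⟩ : ∃ t', t = t' + 1 := ⟨t - 1, by omega⟩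
    intro θ hθ
    obtain ⟨η, hη, b, hb, rfl⟩ := h.glob_sup Y hq t θ (by exact_mod_cast hθ)
    obtain ⟨d, b0, hd, hb0, h0⟩ := he t (by omega) η hη 0
    obtain rfl : d = t + 1 := by omega
    rw [h0, ← map_add]
    exact ⟨_, hb0.add hb, rfl⟩
  · rintro _ ⟨b, hb, rfl⟩
    exact theta_mem_Glob hb

lemma sum_linear (s c : ℤ) (T : ℕ) : ∑ i ∈ Finset.Icc 1 T, (s * (i : ℤ) + c) =
    s * ((T : ℤ) * (T + 1) / 2) + c * T := by
  induction T with
  | zero => simp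
  | succ T ih =>
    rw [Finset.sum_Icc_succ_top (by omega), ih]
    have : ((T + 1 : ℕ) : ℤ) * ((T + 1 : ℕ) + 1) / 2 = (T : ℤ) * (T + 1) / 2 + (T + 1) := by
      push_cast
      rw [show ((T : ℤ) + 1) * (T + 1 + 1) = T * (T + 1) + (T + 1) * 2 by ring]
      exact Int.add_mul_ediv_right _ _ (by norm_num)
    rw [this]
    push_cast
    ring

lemma sum_telescope (f : ℕ → ℤ) (T : ℕ) : ∑ i ∈ Finset.Icc 1 T, (f i - f (i - 1)) = f T - f 0 := by
  induction T with
  | zero => simp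
  | succ T ih =>
    rw [Finset.sum_Icc_succ_top (by omega), ih]
    simp

/-- The genus formula.  Descending from large degrees, `Quad` shows that the twisted sections of
the curve have the dimension predicted by the Hilbert polynomial in all degrees `t ≥ 1`. -/
theorem genus_of_good (h : Good I L M N) (hq : Quad I L M N) {s π pa : ℤ}
    (hinv : SurfInv I s π pa) :
    pa = -(raoDim (sect I L) : ℤ) + (∑ᶠ i ∈ Set.Ici (1 : ℤ),
      ((hilbZ I i - hilbZ I (i - 1)) - hilbZ (sect I L) i)) := by
  obtain ⟨Y⟩ := h.latJ
  obtain ⟨k0, hfin⟩ := h.finJ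
  have hinj : ∀ a, L * a ∈ satIdeal I → a ∈ satIdeal I := by
    rw [sat_prime h.surf.2.1 (not_le_of_krull h.surf)]
    intro a ha
    exact (h.surf.2.1.mem_or_mem ha).resolve_left h.L_notin
  have hL0 : L ≠ 0 := fun h0 => h.L_notin (h0 ▸ I.zero_mem)
  have hIL := IsHomogIdeal.sup_span h.surf.1 h.hL
  obtain ⟨T1, hT1⟩ := hN_sect_linear h.surf.1 hinv h.hL hL0 hinj
  obtain ⟨T2, hT2⟩ := hN_sat_large hIL
  obtain ⟨T3, hT3⟩ := h.glob_large Y hq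
  obtain ⟨T4, hT4⟩ := hN_drop_sat h.surf.1 h.hL hL0 hinj
  obtain ⟨T5, hT5⟩ := hinv
  have hJl : ∀ t : ℕ, T1 + T2 ≤ t → (hN (sect I L) t : ℤ) = s * t + 1 - π := fun t ht => by
    have : hN (sect I L) t = _ := hT2 t (by omega)
    rw [this, hT1 t (by omega)]
  -- dimension of the spaces of sections
  have hg : ∀ k t : ℕ, 1 ≤ t → T1 + T2 + T3 ≤ t + k →
      (Module.finrank ℂ (Glob Y h.homog_two (t : ℤ)) : ℤ) = s * t + 1 - π := by
    intro k
    induction k with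
    | zero =>
      intro t _ ht
      rw [hT3 t (by omega), finrank_theta, hJl t (by omega)]
    | succ k ih =>
      intro t ht1 ht
      obtain ⟨t, rfl⟩ : ∃ t', t = t' + 1 := ⟨t - 1, by omega⟩
      have h1 := ih (t + 2) (by omega) (by omega)
      have h2 := ih (t + 3) (by omega) (by omega)
      have h3 := Glob.recur (Y := Y) (hy := h.homog_two) (h.quad hq) t
      rw [show ((t + 2 : ℕ) : ℤ) = (t : ℤ) + 2 by push_cast; ring] at h1
      rw [show ((t + 3 : ℕ) : ℤ) = (t : ℤ) + 3 by push_cast; ring] at h2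
      rw [show ((t + 1 : ℕ) : ℤ) = (t : ℤ) + 1 by push_cast; ring]
      zify at h3
      linarith
  have hh0 : ∀ t, h0Nat (sect I L) t = Module.finrank ℂ (Glob Y h.homog_two t) := fun t =>
    h0Nat_eq_finrank_Glob Y h.homog_two h.homogJ hfin t
  have h1neg : ∀ t : ℤ, t ≤ 0 → h1INat (sect I L) t = 0 := by
    intro t ht
    rcases ht.lt_or_eq with ht | rfl
    · rw [h1INat, hh0, h.glob_neg Y ht, finrank_bot, Nat.zero_sub]
    · have : h0Nat (sect I L) ((0 : ℕ) : ℤ) = hilbNat (sect I L) ((0 : ℕ) : ℤ) := by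
        rw [hh0, h.glob_zero Y, finrank_theta, hilbNat_natCast]
      rw [h1INat]
      rw [Nat.cast_zero] at this
      rw [this, Nat.sub_self]
  have h1pos : ∀ t : ℕ, 1 ≤ t → (h1INat (sect I L) (t : ℤ) : ℤ) =
      s * t + (1 - π) - hN (sect I L) t := by
    intro t ht
    have hle : hN (sect I L) t ≤ Module.finrank ℂ (Glob Y h.homog_two (t : ℤ)) := by
      rw [← finrank_theta Y]
      apply Submodule.finrank_mono
      rintro _ ⟨b, hb, rfl⟩
      exact theta_mem_Glob hb
    rw [h1INat, hh0, hilbNat_natCast, Nat.cast_sub hle, hg (T1 + T2 + T3) t ht (by omega)]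
    ring
  obtain ⟨T, hT⟩ : ∃ T : ℕ, T = T1 + T2 + T4 + T5.toNat + 1 := ⟨_, rfl⟩
  have hrao : (raoDim (sect I L) : ℤ) =
      ∑ i ∈ Finset.Icc 1 T, (s * (i : ℤ) + (1 - π) - hN (sect I L) i) := by
    rw [raoDim, finsum_eq_sum_of_support_subset (s := (Finset.Icc 1 T).map Nat.castEmbedding)]
    · rw [Finset.sum_map, Nat.cast_sum]
      refine Finset.sum_congr rfl fun i hi => ?_
      rw [Finset.mem_Icc] at hi
      exact h1pos i hi.1
    · intro t ht
      rw [Function.mem_support] at ht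
      have ht0 : 0 < t := by
        by_contra h0
        exact ht (h1neg t (by omega))
      obtain ⟨t, rfl⟩ := Int.eq_ofNat_of_zero_le ht0.le
      simp only [Finset.coe_map, Set.mem_image, Finset.coe_Icc, Set.mem_Icc]
      refine ⟨t, ⟨by omega, ?_⟩, rfl⟩
      by_contra h0
      apply ht
      have h3 := h1pos t (by omega)
      rw [hJl t (by omega)] at h3
      have : (h1INat (sect I L) (t : ℤ) : ℤ) = 0 := by rw [h3]; ring
      exact_mod_cast this
  have hmu : (∑ᶠ i ∈ Set.Ici (1 : ℤ), ((hilbZ I i - hilbZ I (i - 1)) - hilbZ (sect I L) i)) =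
      ∑ i ∈ Finset.Icc 1 T, (((hN I i : ℤ) - hN I (i - 1)) - hN (sect I L) i) := by
    rw [finsum_mem_eq_sum_of_subset (t := (Finset.Icc 1 T).map Nat.castEmbedding)]
    · rw [Finset.sum_map]
      refine Finset.sum_congr rfl fun i hi => ?_
      rw [Finset.mem_Icc] at hi
      have : (Nat.castEmbedding i : ℤ) - 1 = ((i - 1 : ℕ) : ℤ) := by
        simp only [Nat.castEmbedding_apply]; omega
      rw [this, hilbZ_natCast]
      simp only [Nat.castEmbedding_apply, hilbZ_natCast]
    · rintro t ⟨ht1, ht⟩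
      rw [Function.mem_support] at ht
      rw [Set.mem_Ici] at ht1
      obtain ⟨t, rfl⟩ := Int.eq_ofNat_of_zero_le (by omega : 0 ≤ t)
      simp only [Finset.coe_map, Set.mem_image, Finset.coe_Icc, Set.mem_Icc]
      refine ⟨t, ⟨by omega, ?_⟩, rfl⟩
      by_contra h0
      apply ht
      obtain ⟨t, rfl⟩ : ∃ t', t = t' + 1 := ⟨t - 1, by omega⟩
      have h4 := hT4 t (by omega)
      have h5 : hN (sect I L) (t + 1) = _ := hT2 (t + 1) (by omega)
      rw [show ((t + 1 : ℕ) : ℤ) - 1 = (t : ℤ) by push_cast; ring, hilbZ_natCast, hilbZ_natCast,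
        hilbZ_natCast, h5, ← h4]
      push_cast
      ring
    · intro t
      simp only [Finset.coe_map, Set.mem_image, Finset.coe_Icc, Set.mem_Icc, Set.mem_Ici]
      rintro ⟨i, hi, rfl⟩
      simp only [Nat.castEmbedding_apply]
      omega
  have hlast := hT5 T (by omega)
  rw [hilbZ_natCast] at hlast
  have htel := sum_telescope (fun i => (hN I i : ℤ)) T
  have hlin := sum_linear s (1 - π) T
  have h00 : (hN I 0 : ℤ) = 1 := by exact_mod_cast hN_zero h.surf.2.1
  rw [hrao, hmu, Finset.sum_sub_distrib, Finset.sum_sub_distrib, htel, hlin, hlast, h00]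
  ring

end Conclusion
end RaoGenus

namespace RaoGenus

open MvPolynomial

/-! ### Field theory: products of subspaces, fixed elements, transcendence bases -/

section CauchyDavenport

variable {K Ω : Type*} [Field K] [Field Ω] [Algebra K Ω]

lemma finrank_scale {c : Ω} (hc : c ≠ 0) (B : Submodule K Ω) :
    Module.finrank K (B.map (LinearMap.mulLeft K c)) = Module.finrank K B :=
  (Submodule.equivMapOfInjective _ (by
    intro x y hxy
    simpa [hc] using hxy) B).finrank_eq.symm

lemma mul_scale (c : Ω) (A B : Submodule K Ω) :
    A * B.map (LinearMap.mulLeft K c) = (A * B).map (LinearMap.mulLeft K c) := by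
  apply le_antisymm
  · rw [Submodule.mul_le]
    rintro a ha _ ⟨b, hb, rfl⟩
    exact ⟨a * b, Submodule.mul_mem_mul ha hb, by simp; ring⟩
  · rw [Submodule.map_le_iff_le_comap, Submodule.mul_le]
    intro a ha b hb
    have : a * (c * b) ∈ A * B.map (LinearMap.mulLeft K c) :=
      Submodule.mul_mem_mul ha ⟨b, hb, rfl⟩
    simpa [mul_left_comm] using this

/-- The linear analogue of the Cauchy–Davenport inequality, for finite field extensions without
proper intermediate fields.  The proof replaces `(A, B)` by `(A ∩ B, A + B)`, which shrinks `A`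
and does not enlarge the product; the replacement fails only when `A` stabilises `B`. -/
theorem lin_cauchy_davenport [FiniteDimensional K Ω]
    (hprim : ∀ G : IntermediateField K Ω, G = ⊥ ∨ G = ⊤) (m : ℕ) :
    ∀ A B : Submodule K Ω, Module.finrank K A ≤ m → A ≠ ⊥ → B ≠ ⊥ →
      Module.finrank K Ω ≤ Module.finrank K (A * B : Submodule K Ω) ∨
      Module.finrank K A + Module.finrank K B ≤ Module.finrank K (A * B : Submodule K Ω) + 1 := by
  induction m with
  | zero =>
    intro A B hA hA0 _
    exact absurd (Submodule.finrank_eq_zero.mp (Nat.le_zero.mp hA)) hA0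
  | succ m ih =>
    intro A B hA hA0 hB0
    obtain ⟨a0, ha0, ha0'⟩ := Submodule.exists_mem_ne_zero_of_ne_bot hA0
    -- after scaling one may assume `1 ∈ A`
    have key : ∀ A' : Submodule K Ω, (1 : Ω) ∈ A' → Module.finrank K A' ≤ m + 1 →
        Module.finrank K Ω ≤ Module.finrank K (A' * B : Submodule K Ω) ∨
        Module.finrank K A' + Module.finrank K B
          ≤ Module.finrank K (A' * B : Submodule K Ω) + 1 := by
      intro A h1 hA
      have hBle : B ≤ A * B := fun b hb => by
        simpa using Submodule.mul_mem_mul h1 hb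
      by_cases hst : ∀ a ∈ A, ∀ b ∈ B, a * b ∈ B
      · let St : Subalgebra K Ω :=
          { carrier := {x | ∀ b ∈ B, x * b ∈ B}
            mul_mem' := fun {x y} hx hy b hb => by rw [mul_assoc]; exact hx _ (hy _ hb)
            add_mem' := fun {x y} hx hy b hb => by rw [add_mul]; exact B.add_mem (hx _ hb) (hy _ hb)
            algebraMap_mem' := fun r b hb => by
              rw [← Algebra.smul_def]; exact B.smul_mem _ hb }
        have hStf : IsField St := Subalgebra.isField_of_algebraic St
        let G : IntermediateField K Ω := St.toIntermediateField' hStf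
        have hAG : ∀ a ∈ A, a ∈ G := fun a ha => hst a ha
        rcases hprim G with hG | hG
        · right
          have hA1 : A ≤ (1 : Submodule K Ω) := by
            intro a ha
            have := hAG a ha
            rw [hG, IntermediateField.mem_bot] at this
            obtain ⟨x, rfl⟩ := this
            exact Submodule.algebraMap_mem x
          have h2 : Module.finrank K A ≤ 1 := by
            refine (Submodule.finrank_mono hA1).trans ?_
            rw [Submodule.one_eq_span]
            exact (finrank_span_le_card _).trans (by simp)
          have h3 := Submodule.finrank_mono hBle
          omega
        · left
          obtain ⟨b, hb, hb0⟩ := Submodule.exists_mem_ne_zero_of_ne_bot hB0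
          have hBt : B = ⊤ := by
            rw [eq_top_iff]
            intro x _
            have hx : x / b ∈ G := by rw [hG]; exact IntermediateField.mem_top
            have : x / b * b ∈ B := hx b hb
            rwa [div_mul_cancel₀ _ hb0] at this
          have h3 := Submodule.finrank_mono hBle
          rw [hBt, finrank_top] at h3
          rw [hBt]; exact h3
      · push Not at hst
        obtain ⟨a, ha, b, hb, hab⟩ := hst
        have hb0 : b ≠ 0 := by
          rintro rfl
          exact hab (by simp)
        have hbi : b⁻¹ ≠ 0 := inv_ne_zero hb0
        let B' : Submodule K Ω := B.map (LinearMap.mulLeft K b⁻¹)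
        have hB'1 : (1 : Ω) ∈ B' := ⟨b, hb, by simp [hb0]⟩
        have haB' : a ∉ B' := by
          rintro ⟨x, hx, hxa⟩
          apply hab
          have : a * b = x := by
            rw [← hxa, LinearMap.mulLeft_apply]
            field_simp
          rw [this]; exact hx
        have hlt : Module.finrank K (A ⊓ B' : Submodule K Ω) < Module.finrank K A := by
          apply Submodule.finrank_lt_finrank_of_lt
          refine lt_of_le_of_ne inf_le_left ?_
          intro h
          exact haB' ((inf_eq_left.mp h) ha)
        have hle : (A ⊓ B') * (A ⊔ B') ≤ A * B' := by
          rw [Submodule.mul_le]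
          intro x hx y hy
          obtain ⟨p, hp, q, hq, rfl⟩ := Submodule.mem_sup.mp hy
          rw [mul_add]
          refine Submodule.add_mem _ ?_ (Submodule.mul_mem_mul hx.1 hq)
          rw [mul_comm x p]
          exact Submodule.mul_mem_mul hp hx.2
        have hne1 : A ⊓ B' ≠ ⊥ := fun h => by
          have : (1 : Ω) ∈ A ⊓ B' := ⟨h1, hB'1⟩
          rw [h] at this
          exact one_ne_zero ((Submodule.mem_bot K).mp this)
        have hne2 : A ⊔ B' ≠ ⊥ := fun h => by
          have : (1 : Ω) ∈ A ⊔ B' := Submodule.mem_sup_left h1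
          rw [h] at this
          exact one_ne_zero ((Submodule.mem_bot K).mp this)
        have h4 := Submodule.finrank_mono hle
        have h5 : Module.finrank K (A * B' : Submodule K Ω)
            = Module.finrank K (A * B : Submodule K Ω) := by
          rw [mul_scale, finrank_scale hbi]
        have h6 : Module.finrank K B' = Module.finrank K B := finrank_scale hbi B
        have h7 := Submodule.finrank_sup_add_finrank_inf_eq A B'
        rcases ih (A ⊓ B') (A ⊔ B') (by omega) hne1 hne2 with h8 | h8
        · left; omega
        · right; omega
    have hi : a0⁻¹ ≠ 0 := inv_ne_zero ha0'
    have := key (A.map (LinearMap.mulLeft K a0⁻¹)) ⟨a0, ha0, by simp [ha0']⟩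
      (by rw [finrank_scale hi]; exact hA)
    rwa [mul_comm _ B, mul_scale, finrank_scale hi, finrank_scale hi, mul_comm B A] at this

/-- A subspace `W` with `dim Ω ≤ 2 dim W - 1` satisfies `W · W = Ω`. -/
theorem sq_eq_top [FiniteDimensional K Ω]
    (hprim : ∀ G : IntermediateField K Ω, G = ⊥ ∨ G = ⊤) {W : Submodule K Ω}
    (hW : W ≠ ⊥) (hd : Module.finrank K Ω + 1 ≤ 2 * Module.finrank K W) : W * W = ⊤ := by
  apply Submodule.eq_top_of_finrank_eq
  have h1 := lin_cauchy_davenport hprim _ W W le_rfl hW hW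
  have h2 := Submodule.finrank_le (W * W)
  omega

end CauchyDavenport

/-- An element of an algebraic extension of a field of characteristic zero which is fixed by all
embeddings into an algebraically closed field lies in the base field. -/
theorem mem_of_fixed {K E F : Type*} [Field K] [CharZero K] [Field E] [Field F] [Algebra K E]
    [Algebra E F] [Algebra K F] [IsScalarTower K E F] [Algebra.IsAlgebraic K E] [IsAlgClosed F]
    (g : E) (hg : ∀ σ : E →ₐ[K] F, σ g = algebraMap E F g) : g ∈ (algebraMap K E).range := by
  classical
  by_contra hgr
  have hintg : IsIntegral K g := Algebra.IsIntegral.isIntegral g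
  have hdeg : 2 ≤ (minpoly K g).natDegree := by
    have h1 := minpoly.natDegree_pos hintg
    by_contra h2
    exact hgr (minpoly.natDegree_eq_one_iff.mp (by omega))
  have hsep : ((minpoly K g).map (algebraMap K F)).Separable :=
    (minpoly.irreducible hintg).separable.map
  have hcard : ((minpoly K g).map (algebraMap K F)).roots.toFinset.card
      = (minpoly K g).natDegree := by
    rw [Multiset.toFinset_card_of_nodup (Polynomial.nodup_roots hsep)]
    rw [← (IsAlgClosed.splits _).natDegree_eq_card_roots, Polynomial.natDegree_map]
  obtain ⟨ρ, hρ, hne⟩ := Finset.exists_mem_ne (s := ((minpoly K g).map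
    (algebraMap K F)).roots.toFinset) (by omega) (algebraMap E F g)
  rw [Multiset.mem_toFinset, Polynomial.mem_roots', Polynomial.IsRoot, Polynomial.eval_map_algebraMap]
    at hρ
  obtain ⟨σ, hσ⟩ := IntermediateField.exists_algHom_of_splits_of_aeval (F := K) (E := E) (K := F)
    (fun x => ⟨Algebra.IsIntegral.isIntegral x, IsAlgClosed.splits _⟩) hρ.2
  exact hne (by rw [← hσ]; exact hg σ)

end RaoGenus

namespace RaoGenus

open MvPolynomial

/-! ### Tensor products of domains over the complex numbers -/

open scoped TensorProduct in
/-- A form of the Nullstellensatz: a nonzero element of a finitely generated complex domain is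
nonzero at some closed point. -/
lemma exists_point {B : Type*} [CommRing B] [IsDomain B] [Algebra ℂ B] [Algebra.FiniteType ℂ B]
    {x : B} (hx : x ≠ 0) : ∃ φ : B →ₐ[ℂ] ℂ, φ x ≠ 0 := by
  have : IsJacobsonRing B := isJacobsonRing_of_finiteType (A := ℂ)
  have hj : (⊥ : Ideal B).jacobson = ⊥ :=
    (isJacobsonRing_iff_prime_eq.mp this) ⊥ Ideal.isPrime_bot
  have hx' : x ∉ (⊥ : Ideal B).jacobson := by rw [hj]; exact hx
  rw [Ideal.jacobson, Ideal.mem_sInf] at hx'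
  push Not at hx'
  obtain ⟨m, ⟨_, hm⟩, hxm⟩ := hx'
  letI : Field (B ⧸ m) := Ideal.Quotient.field m
  have hfin : Module.Finite ℂ (B ⧸ m) := finite_of_finite_type_of_isJacobsonRing ℂ (B ⧸ m)
  have hbij : Function.Bijective (algebraMap ℂ (B ⧸ m)) :=
    IsAlgClosed.algebraMap_bijective_of_isIntegral
  let e : ℂ ≃ₐ[ℂ] (B ⧸ m) := AlgEquiv.ofBijective (Algebra.ofId ℂ _) hbij
  refine ⟨e.symm.toAlgHom.comp (Ideal.Quotient.mkₐ ℂ m), ?_⟩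
  intro h
  apply hxm
  have : e.symm (Ideal.Quotient.mk m x) = 0 := h
  rw [map_eq_zero_iff e.symm e.symm.injective] at this
  exact Ideal.Quotient.eq_zero_iff_mem.mp this

open scoped TensorProduct in
/-- The tensor product over `ℂ` of two domains, one of them finitely generated, is a domain: after
specialising the first factor at a closed point one is left with the second one. -/
theorem tensor_domain {B D : Type*} [CommRing B] [IsDomain B] [Algebra ℂ B] [Algebra.FiniteType ℂ B]
    [CommRing D] [IsDomain D] [Algebra ℂ D] : NoZeroDivisors (B ⊗[ℂ] D) := by
  constructor
  intro f g hfg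
  by_contra! hne
  obtain ⟨hf, hg⟩ := hne
  let e := Module.Basis.ofVectorSpace ℂ D
  let E := Algebra.TensorProduct.basis B e
  have hrep : ∀ (φ : B →ₐ[ℂ] ℂ) (z : B ⊗[ℂ] D) (i),
      e.repr (Algebra.TensorProduct.lift ((Algebra.ofId ℂ D).comp φ) (AlgHom.id ℂ D)
        (fun _ _ => Commute.all _ _) z) i = φ (E.repr z i) := by
    intro φ z i
    induction z with
    | zero => simp
    | add a b ha hb => simp only [map_add, Finsupp.add_apply, ha, hb]
    | tmul b d =>
      rw [Algebra.TensorProduct.lift_tmul, Algebra.TensorProduct.basis_repr_tmul]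
      simp only [AlgHom.comp_apply, Algebra.ofId_apply, AlgHom.id_apply]
      rw [← Algebra.smul_def, map_smul]
      simp [mul_comm]
  have hex : ∀ z : B ⊗[ℂ] D, z ≠ 0 → ∃ i, E.repr z i ≠ 0 := by
    intro z hz
    by_contra! h
    apply hz
    have : E.repr z = 0 := Finsupp.ext h
    exact (map_eq_zero_iff _ E.repr.injective).mp this
  obtain ⟨i, hi⟩ := hex f hf
  obtain ⟨j, hj⟩ := hex g hg
  obtain ⟨φ, hφ⟩ := exists_point (mul_ne_zero hi hj)
  rw [map_mul] at hφ
  have h0 := congrArg (Algebra.TensorProduct.lift ((Algebra.ofId ℂ D).comp φ) (AlgHom.id ℂ D)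
        (fun _ _ => Commute.all _ _)) hfg
  rw [map_mul, map_zero] at h0
  rcases mul_eq_zero.mp h0 with h | h
  · apply hφ
    rw [← hrep, h]; simp
  · apply hφ
    rw [← hrep φ g, h]; simp

end RaoGenus

namespace RaoGenus

open MvPolynomial

/-! ### The generic projection -/

section GenericProjection

variable {n : ℕ} {A : Type} [CommRing A] [Algebra ℂ A]

/-- Polynomials in indeterminates `Uᵢⱼ` and `ωᵢ`. -/
abbrev PP (n : ℕ) : Type := MvPolynomial ((Fin 3 × Fin n) ⊕ Fin 3) ℂ

/-- Polynomials in indeterminates `Uᵢⱼ` with coefficients in `A`. -/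
abbrev BB (n : ℕ) (A : Type) [CommRing A] : Type := MvPolynomial (Fin 3 × Fin n) A

/-- The linear forms `∑ⱼ uᵢⱼ xⱼ` in elements `x` of an algebra. -/
noncomputable def yform (x : Fin n → A) (u : Fin 3 × Fin n → ℂ) (i : Fin 3) : A :=
  ∑ j, u (i, j) • x j

/-- A system of generators `x` of a complex algebra `A` and complex numbers `u` such that the three
linear forms `∑ⱼ uᵢⱼ xⱼ` are a Noether normalisation of `A`. -/
structure NData (x : Fin n → A) (u : Fin 3 × Fin n → ℂ) : Prop where
  gen : Algebra.adjoin ℂ (Set.range x) = ⊤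
  ind : AlgebraicIndependent ℂ (yform x u)
  int : (aeval (yform x u) : MPoly 3 →ₐ[ℂ] A).toRingHom.IsIntegral

/-- The universal linear forms `wᵢ = ∑ⱼ Uᵢⱼ xⱼ` with indeterminate coefficients. -/
noncomputable def wform (x : Fin n → A) (i : Fin 3) : BB n A :=
  ∑ j, X (i, j) * C (x j)

lemma aeval_inj_of_sum {σ τ : Type*} {y : τ → A} (hy : AlgebraicIndependent ℂ y)
    {p : MvPolynomial (σ ⊕ τ) ℂ}
    (hp : aeval (Sum.elim (X : σ → MvPolynomial σ A) (fun i => C (y i))) p = 0) : p = 0 := by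
  have h1 := hy.sumElim_comp (algebraicIndependent_X σ A)
  exact (injective_iff_map_eq_zero _).mp h1 p hp

/-- The universal linear forms are algebraically independent of their coefficients.  A relation
is expanded around the given Noether normalisation `u`, and its initial form is a relation
between the indeterminates and `∑ⱼ uᵢⱼ xⱼ`. -/
theorem wform_indep [IsDomain A] {x : Fin n → A} {u : Fin 3 × Fin n → ℂ} (h : NData x u)
    {p : PP n}
    (hp : aeval (Sum.elim (X : _ → BB n A) (wform x)) p = 0) : p = 0 := by
  by_contra hp0
  let S : PP n →ₐ[ℂ] Polynomial (PP n) := aeval (Sum.elim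
    (fun q => Polynomial.C (C (u q)) + Polynomial.X * Polynomial.C (X (Sum.inl q)))
    (fun i => Polynomial.C (X (Sum.inr i))))
  have hS0 : S p ≠ 0 := by
    intro h0
    let back : Polynomial (PP n) →ₐ[ℂ] (PP n) := Polynomial.aevalTower
      (aeval (Sum.elim (fun q => X (Sum.inl q) - C (u q)) (fun i => X (Sum.inr i)))) 1
    have hb : back.comp S = AlgHom.id ℂ (PP n) := by
      apply MvPolynomial.algHom_ext
      rintro (i | i)
      · simp [back, S]
      · simp [back, S]
    have := congrArg back h0
    rw [map_zero, ← AlgHom.comp_apply, hb] at this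
    exact hp0 this
  obtain ⟨Q1, hQ1, hQ1'⟩ := Polynomial.exists_eq_pow_rootMultiplicity_mul_and_not_dvd (S p) hS0 0
  rw [Polynomial.C_0, sub_zero] at hQ1 hQ1'
  let T : (BB n A) →ₐ[ℂ] Polynomial (BB n A) := aevalTower
    ((Polynomial.CAlgHom (R := ℂ) (A := BB n A)).comp (IsScalarTower.toAlgHom ℂ A (BB n A)))
    (fun q => Polynomial.C (C (algebraMap ℂ A (u q))) + Polynomial.X * Polynomial.C (X q))
  let f : PP n →ₐ[ℂ] Polynomial (BB n A) := aeval (Sum.elim (fun q => Polynomial.C (X q))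
    (fun i => Polynomial.C (C (yform x u i)) + Polynomial.X * Polynomial.C (wform x i)))
  let Ev : Polynomial (PP n) →ₐ[ℂ] Polynomial (BB n A) := Polynomial.aevalTower f Polynomial.X
  have hcomp : Ev.comp S = T.comp (aeval (Sum.elim (X : _ → BB n A) (wform x))) := by
    apply MvPolynomial.algHom_ext
    rintro (q | i)
    · have : f (C (u q)) = Polynomial.C (C (algebraMap ℂ A (u q))) := by
        have := f.commutes (u q)
        exact this
      simp [Ev, S, T, this]
      simp [f]
    · simp only [AlgHom.comp_apply, S, aeval_X, Sum.elim_inr, Ev, Polynomial.aevalTower_C, f, wform,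
        yform, T, map_sum, map_mul, aevalTower_X, aevalTower_C]
      rw [Finset.mul_sum, ← Finset.sum_add_distrib]
      refine Finset.sum_congr rfl fun j _ => ?_
      have h2 : (Polynomial.CAlgHom (R := ℂ) (A := BB n A))
          (IsScalarTower.toAlgHom ℂ A (BB n A) (x j)) = Polynomial.C (C (x j)) := rfl
      rw [h2, Algebra.smul_def]
      simp only [map_mul]
      ring
  have hE0 : Ev (S p) = 0 := by
    rw [← AlgHom.comp_apply, hcomp, AlgHom.comp_apply, hp, map_zero]
  have hEQ : Ev Q1 = 0 := by
    rw [hQ1, map_mul, map_pow] at hE0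
    have : Ev Polynomial.X = Polynomial.X := by simp [Ev]
    rw [this] at hE0
    rcases mul_eq_zero.mp hE0 with h3 | h3
    · exact absurd h3 (pow_ne_zero _ Polynomial.X_ne_zero)
    · exact h3
  have hcc : Polynomial.constantCoeff.comp Ev.toRingHom =
      (aeval (Sum.elim (X : _ → BB n A) (fun i => C (yform x u i))) : PP n →ₐ[ℂ] BB n A).toRingHom.comp
        Polynomial.constantCoeff := by
    apply Polynomial.ringHom_ext
    · intro a
      have : (Polynomial.constantCoeff.comp f.toRingHom) =
        (aeval (Sum.elim (X : _ → BB n A) (fun i => C (yform x u i))) : PP n →ₐ[ℂ] BB n A).toRingHom := by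
        apply MvPolynomial.ringHom_ext
        · intro r
          have h4 : f (C r) = algebraMap ℂ _ r := f.commutes r
          have h5 : (aeval (Sum.elim (X : _ → BB n A) (fun i => C (yform x u i))) : PP n →ₐ[ℂ] BB n A) (C r)
            = algebraMap ℂ _ r := AlgHom.commutes _ r
          simp only [AlgHom.toRingHom_eq_coe, RingHom.comp_apply, RingHom.coe_coe, h4, h5]
          rw [Polynomial.algebraMap_apply]
          simp
        · rintro (q | i)
          · simp [f]
          · simp [f]
      have h6 := RingHom.congr_fun this a
      simpa [Ev] using h6
    · simp [Ev]
  have h7 := RingHom.congr_fun hcc Q1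
  rw [RingHom.comp_apply, AlgHom.toRingHom_eq_coe, RingHom.coe_coe, hEQ, map_zero] at h7
  have h8 := aeval_inj_of_sum h.ind h7.symm
  exact hQ1' (Polynomial.X_dvd_iff.mpr (by simpa using h8))

end GenericProjection

end RaoGenus

namespace RaoGenus

open MvPolynomial

section GenericField

variable {n : ℕ} {A Ω : Type} [CommRing A] [IsDomain A] [Algebra ℂ A] [Field Ω] [Algebra ℂ Ω]
  [Algebra (BB n A) Ω] [IsScalarTower ℂ (BB n A) Ω] [IsFractionRing (BB n A) Ω]

/-- The inclusion of the coefficient ring `A` in the field of fractions of `A[U]`. -/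
noncomputable def kap (n : ℕ) (A Ω : Type) [CommRing A] [Algebra ℂ A] [Field Ω] [Algebra ℂ Ω]
    [Algebra (BB n A) Ω] [IsScalarTower ℂ (BB n A) Ω] : A →ₐ[ℂ] Ω :=
  (IsScalarTower.toAlgHom ℂ (BB n A) Ω).comp (IsScalarTower.toAlgHom ℂ A (BB n A))

lemma kap_apply {n : ℕ} {A Ω : Type} [CommRing A] [Algebra ℂ A] [Field Ω] [Algebra ℂ Ω]
    [Algebra (BB n A) Ω] [IsScalarTower ℂ (BB n A) Ω] (a : A) : kap n A Ω a = algebraMap (BB n A) Ω (C a) := rfl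

/-- The family `(Uᵢⱼ, wᵢ)` in the field of fractions of `A[U]`. -/
noncomputable def uw (Ω : Type) [Field Ω] [Algebra (BB n A) Ω] (x : Fin n → A) :
    (Fin 3 × Fin n) ⊕ Fin 3 → Ω :=
  fun q => algebraMap (BB n A) Ω (Sum.elim X (wform x) q)

lemma uw_indep {x : Fin n → A} {u : Fin 3 × Fin n → ℂ} (h : NData x u) :
    AlgebraicIndependent ℂ (uw Ω x) := by
  refine (injective_iff_map_eq_zero _).mpr fun p hp => wform_indep h (p := p) ?_
  have h1 : (aeval (uw Ω x) : PP n →ₐ[ℂ] Ω) =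
      (IsScalarTower.toAlgHom ℂ (BB n A) Ω).comp (aeval (Sum.elim X (wform x))) := by
    apply MvPolynomial.algHom_ext
    intro q
    simp [uw]
  rw [h1] at hp
  exact IsFractionRing.injective (BB n A) Ω (by rw [map_zero]; exact hp)

lemma yform_trans {x : Fin n → A} {u : Fin 3 × Fin n → ℂ} (h : NData x u) :
    IsTranscendenceBasis ℂ (yform x u) := by
  rw [isTranscendenceBasis_iff_algebraicIndependent_isAlgebraic]
  refine ⟨h.ind, ⟨fun a => ?_⟩⟩
  obtain ⟨p, hp, hpa⟩ := h.int a
  let y' : Fin 3 → Algebra.adjoin ℂ (Set.range (yform x u)) :=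
    fun i => ⟨yform x u i, Algebra.subset_adjoin ⟨i, rfl⟩⟩
  have hcomp : (aeval (yform x u) : MPoly 3 →ₐ[ℂ] A) =
      (Algebra.adjoin ℂ (Set.range (yform x u))).val.comp (aeval y') := by
    apply MvPolynomial.algHom_ext
    intro i
    simp [y']
  have hintg : IsIntegral (Algebra.adjoin ℂ (Set.range (yform x u))) a := by
    refine ⟨p.map (aeval y' : MPoly 3 →ₐ[ℂ] _).toRingHom, hp.map _, ?_⟩
    rw [Polynomial.eval₂_map]
    rw [hcomp] at hpa
    exact hpa
  exact hintg.isAlgebraic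

lemma trdeg_field {x : Fin n → A} {u : Fin 3 × Fin n → ℂ} (h : NData x u) :
    Algebra.trdeg ℂ Ω = Cardinal.mk ((Fin 3 × Fin n) ⊕ Fin 3) := by
  have h1 := (yform_trans h).sumElim_comp (IsTranscendenceBasis.mvPolynomial (Fin 3 × Fin n) A)
  have : Algebra.IsAlgebraic (BB n A) Ω := IsLocalization.isAlgebraic Ω (nonZeroDivisors (BB n A))
  have h2 := h1.algebraMap_comp (A := Ω)
  exact h2.cardinalMk_eq_trdeg.symm

lemma uw_trans {x : Fin n → A} {u : Fin 3 × Fin n → ℂ} (h : NData x u) :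
    IsTranscendenceBasis ℂ (uw Ω x) :=
  (uw_indep h).isTranscendenceBasis_of_trdeg_le_of_finite (trdeg_field h).le

/-- The field generated over `ℂ` by the `Uᵢⱼ` and `wᵢ`. -/
noncomputable def KK (Ω : Type) [Field Ω] [Algebra ℂ Ω] [Algebra (BB n A) Ω] (x : Fin n → A) :
    IntermediateField ℂ Ω := IntermediateField.adjoin ℂ (Set.range (uw Ω x))

lemma KK_alg {x : Fin n → A} {u : Fin 3 × Fin n → ℂ} (h : NData x u) :
    Algebra.IsAlgebraic (KK Ω x) Ω := (uw_trans h).isAlgebraic_field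

lemma kap_gen {x : Fin n → A} (hgen : Algebra.adjoin ℂ (Set.range x) = ⊤) (F : Subfield Ω)
    (hC : ∀ c : ℂ, algebraMap ℂ Ω c ∈ F) (hU : ∀ q, algebraMap (BB n A) Ω (X q) ∈ F)
    (hx : ∀ j, kap n A Ω (x j) ∈ F) (z : Ω) : z ∈ F := by
  have hA : ∀ a : A, kap n A Ω a ∈ F := by
    intro a
    have ha : a ∈ Algebra.adjoin ℂ (Set.range x) := by rw [hgen]; exact Algebra.mem_top
    induction ha using Algebra.adjoin_induction with
    | mem a ha => obtain ⟨j, rfl⟩ := ha; exact hx j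
    | algebraMap c => rw [AlgHom.commutes]; exact hC c
    | add a b _ _ ha hb => rw [map_add]; exact F.add_mem ha hb
    | mul a b _ _ ha hb => rw [map_mul]; exact F.mul_mem ha hb
  have hB : ∀ b : BB n A, algebraMap (BB n A) Ω b ∈ F := by
    intro b
    induction b using MvPolynomial.induction_on with
    | C a => exact hA a
    | add a b ha hb => rw [map_add]; exact F.add_mem ha hb
    | mul_X a q ha => rw [map_mul]; exact F.mul_mem ha (hU q)
  obtain ⟨b, c, _, rfl⟩ := IsFractionRing.div_surjective (A := BB n A) z
  exact F.div_mem (hB b) (hB c)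

lemma uw_mem_KK (x : Fin n → A) (q) : uw Ω x q ∈ KK Ω x :=
  IntermediateField.subset_adjoin _ _ ⟨q, rfl⟩

/-- The `KK`-algebra generated by `A` is all of `Ω`. -/
lemma adjoin_kap {x : Fin n → A} {u : Fin 3 × Fin n → ℂ} (h : NData x u) :
    Algebra.adjoin (KK Ω x) (Set.range fun j => kap n A Ω (x j)) = ⊤ := by
  have := KK_alg (Ω := Ω) h
  set T := Algebra.adjoin (KK Ω x) (Set.range fun j => kap n A Ω (x j)) with hT
  have hf : IsField T := Subalgebra.isField_of_algebraic T
  let G : IntermediateField (KK Ω x) Ω := T.toIntermediateField' hf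
  rw [eq_top_iff]
  intro z _
  have : z ∈ G.toSubfield := by
    refine kap_gen h.gen _ (fun c => ?_) (fun q => ?_) (fun j => ?_) z
    · exact T.algebraMap_mem ⟨algebraMap ℂ Ω c, (KK Ω x).algebraMap_mem c⟩
    · exact T.algebraMap_mem ⟨_, uw_mem_KK x (Sum.inl q)⟩
    · exact Algebra.subset_adjoin ⟨j, rfl⟩
  exact this

lemma KK_finite {x : Fin n → A} {u : Fin 3 × Fin n → ℂ} (h : NData x u) :
    FiniteDimensional (KK Ω x) Ω := by
  have := KK_alg (Ω := Ω) h
  have h1 := fg_adjoin_of_finite (R := KK Ω x) (Set.finite_range fun j => kap n A Ω (x j))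
    (fun z _ => Algebra.IsIntegral.isIntegral z)
  rw [adjoin_kap h] at h1
  exact ⟨h1⟩

lemma span_kap {x : Fin n → A} {u : Fin 3 × Fin n → ℂ} (h : NData x u) :
    Submodule.span (KK Ω x) (Set.range (kap n A Ω)) = ⊤ := by
  have h1 := congrArg Subalgebra.toSubmodule (adjoin_kap (Ω := Ω) h)
  rw [Algebra.adjoin_eq_span, Algebra.top_toSubmodule] at h1
  rw [eq_top_iff, ← h1]
  apply Submodule.span_mono
  intro z hz
  have : (Submonoid.closure (Set.range fun j => kap n A Ω (x j)))
      ≤ MonoidHom.mrange (kap n A Ω).toMonoidHom := by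
    rw [Submonoid.closure_le]
    rintro _ ⟨j, rfl⟩
    exact ⟨x j, rfl⟩
  obtain ⟨a, rfl⟩ := this hz
  exact ⟨a, rfl⟩

lemma KK_ratio (x : Fin n → A) {z : Ω} (hz : z ∈ KK Ω x) :
    ∃ p q : PP n, aeval (uw Ω x) q ≠ 0 ∧ z * aeval (uw Ω x) q = aeval (uw Ω x) p := by
  rw [KK, IntermediateField.mem_adjoin_range_iff] at hz
  obtain ⟨p, q, rfl⟩ := hz
  by_cases hq : aeval (uw Ω x) q = 0
  · exact ⟨0, 1, by simp, by simp [hq]⟩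
  · exact ⟨p, q, hq, div_mul_cancel₀ _ hq⟩

lemma aeval_mem_KK (x : Fin n → A) (p : PP n) : aeval (uw Ω x) p ∈ KK Ω x := by
  rw [KK, IntermediateField.mem_adjoin_range_iff]
  exact ⟨p, 1, by simp⟩

end GenericField

end RaoGenus

namespace RaoGenus

open scoped TensorProduct
open MvPolynomial

/-! ### The generic projection has no intermediate fields -/

lemma integral_transfer {R R' S S' : Type*} [CommRing R] [CommRing R'] [CommRing S] [CommRing S']
    (f : R →+* S) (g : R' →+* S') (a : R →+* R') (b : S →+* S') (hc : g.comp a = b.comp f) {s : S}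
    (hs : f.IsIntegralElem s) : g.IsIntegralElem (b s) := by
  obtain ⟨p, hp, hps⟩ := hs
  refine ⟨p.map a, hp.map a, ?_⟩
  rw [Polynomial.eval₂_map, hc, ← Polynomial.hom_eval₂, hps, map_zero]

section Primitive

variable {n : ℕ} {A Ω F : Type} [CommRing A] [IsDomain A] [Algebra ℂ A] [Field Ω] [Algebra ℂ Ω]
  [Algebra (BB n A) Ω] [IsScalarTower ℂ (BB n A) Ω] [IsFractionRing (BB n A) Ω]
  [Field F] [Algebra ℂ F] [Algebra Ω F] [IsScalarTower ℂ Ω F]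

/-- The indeterminates `Uᵢⱼ` with `j ≠ j₀`. -/
abbrev Vj (n : ℕ) (j0 : Fin n) : Type := Fin 3 × {j : Fin n // j ≠ j0}

/-- The map `A[Uᵢⱼ : j ≠ j₀] ⊗ A → F` given on the first factor by the inclusion of `A[U]` in `F`
and on the second factor by `σ`. -/
noncomputable def PsiJ (j0 : Fin n) (σ : Ω →ₐ[ℂ] F) :
    MvPolynomial (Vj n j0) A ⊗[ℂ] A →ₐ[ℂ] F :=
  Algebra.TensorProduct.lift
    (aevalTower ((IsScalarTower.toAlgHom ℂ Ω F).comp (kap n A Ω))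
      (fun q => algebraMap Ω F (algebraMap (BB n A) Ω (X (q.1, q.2.1)))))
    (σ.comp (kap n A Ω)) (fun _ _ => Commute.all _ _)

/-- The Noether normalisation of `A[Uᵢⱼ : j ≠ j₀] ⊗ A`. -/
noncomputable def noe (x : Fin n → A) (u : Fin 3 × Fin n → ℂ) (j0 : Fin n) :
    MvPolynomial (Vj n j0 ⊕ (Fin 3 ⊕ Fin 3)) ℂ →ₐ[ℂ] MvPolynomial (Vj n j0) A ⊗[ℂ] A :=
  aeval (Sum.elim (fun q => X q ⊗ₜ 1) (Sum.elim (fun i => C (yform x u i) ⊗ₜ 1)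
    (fun i => 1 ⊗ₜ yform x u i)))

lemma noe_integral {x : Fin n → A} {u : Fin 3 × Fin n → ℂ} (h : NData x u) (j0 : Fin n) :
    (noe x u j0).toRingHom.IsIntegral := by
  have hr : ∀ a : A, (noe x u j0).toRingHom.IsIntegralElem (1 ⊗ₜ a) := by
    intro a
    refine integral_transfer _ _ (rename (Sum.inr ∘ Sum.inr) : MPoly 3 →ₐ[ℂ] _).toRingHom
      (Algebra.TensorProduct.includeRight : A →ₐ[ℂ] MvPolynomial (Vj n j0) A ⊗[ℂ] A).toRingHom
      ?_ (h.int a)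
    have : (noe x u j0).comp (rename (Sum.inr ∘ Sum.inr) : MPoly 3 →ₐ[ℂ] _) =
      (Algebra.TensorProduct.includeRight : A →ₐ[ℂ] MvPolynomial (Vj n j0) A ⊗[ℂ] A).comp
        (aeval (yform x u)) := by
      apply MvPolynomial.algHom_ext
      intro i
      simp [noe]
    exact congrArg AlgHom.toRingHom this
  have hl : ∀ a : A, (noe x u j0).toRingHom.IsIntegralElem (C a ⊗ₜ 1) := by
    intro a
    refine integral_transfer _ _ (rename (Sum.inr ∘ Sum.inl) : MPoly 3 →ₐ[ℂ] _).toRingHom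
      ((Algebra.TensorProduct.includeLeft : _ →ₐ[ℂ] MvPolynomial (Vj n j0) A ⊗[ℂ] A).comp
        (IsScalarTower.toAlgHom ℂ A (MvPolynomial (Vj n j0) A))).toRingHom
      ?_ (h.int a)
    have : (noe x u j0).comp (rename (Sum.inr ∘ Sum.inl) : MPoly 3 →ₐ[ℂ] _) =
      ((Algebra.TensorProduct.includeLeft : _ →ₐ[ℂ] MvPolynomial (Vj n j0) A ⊗[ℂ] A).comp
        (IsScalarTower.toAlgHom ℂ A (MvPolynomial (Vj n j0) A))).comp
        (aeval (yform x u)) := by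
      apply MvPolynomial.algHom_ext
      intro i
      simp [noe, algebraMap_eq]
    exact congrArg AlgHom.toRingHom this
  have hX : ∀ q, (noe x u j0).toRingHom.IsIntegralElem (X q ⊗ₜ 1) := by
    intro q
    have : (noe x u j0).toRingHom (X (Sum.inl q)) = X q ⊗ₜ 1 := by
      simp [noe]
    rw [← this]
    exact RingHom.isIntegralElem_map _
  have hL : ∀ b : MvPolynomial (Vj n j0) A, (noe x u j0).toRingHom.IsIntegralElem (b ⊗ₜ 1) := by
    intro b
    induction b using MvPolynomial.induction_on with
    | C a => exact hl a
    | add a b ha hb => rw [TensorProduct.add_tmul]; exact ha.add _ hb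
    | mul_X a q ha =>
      have : (a * X q) ⊗ₜ[ℂ] (1 : A) = (a ⊗ₜ 1) * (X q ⊗ₜ 1) := by simp
      rw [this]; exact ha.mul _ (hX q)
  intro z
  induction z with
  | zero => exact RingHom.isIntegralElem_zero _
  | add a b ha hb => exact ha.add _ hb
  | tmul b a =>
    have : b ⊗ₜ[ℂ] a = (b ⊗ₜ 1) * (1 ⊗ₜ a) := by simp
    rw [this]; exact (hL b).mul _ (hr a)

/-- The relation `∑ⱼ Uᵢⱼ (xⱼ - σ xⱼ) = 0`. -/
lemma sigma_rel {x : Fin n → A} {σ : Ω →ₐ[ℂ] F}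
    (hσ : ∀ q, σ (uw Ω x q) = algebraMap Ω F (uw Ω x q)) (i : Fin 3) :
    ∑ j, algebraMap Ω F (algebraMap (BB n A) Ω (X (i, j))) *
      (algebraMap Ω F (kap n A Ω (x j)) - σ (kap n A Ω (x j))) = 0 := by
  have h1 := hσ (Sum.inr i)
  have hU : ∀ q, σ (algebraMap (BB n A) Ω (X q)) = algebraMap Ω F (algebraMap (BB n A) Ω (X q)) :=
    fun q => hσ (Sum.inl q)
  simp only [uw, Sum.elim_inr, wform, map_sum, map_mul, hU, ← kap_apply] at h1
  simp only [mul_sub, Finset.sum_sub_distrib, h1, sub_self]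

/-- The transcendence basis of `F` given by the `Uᵢⱼ` with `j ≠ j₀`, the forms `∑ⱼ uᵢⱼ xⱼ` and
their images under `σ`. -/
noncomputable def zfam (x : Fin n → A) (u : Fin 3 × Fin n → ℂ) (j0 : Fin n) (σ : Ω →ₐ[ℂ] F) :
    Vj n j0 ⊕ (Fin 3 ⊕ Fin 3) → F := fun q => PsiJ j0 σ (noe x u j0 (X q))

lemma aeval_zfam (x : Fin n → A) (u : Fin 3 × Fin n → ℂ) (j0 : Fin n) (σ : Ω →ₐ[ℂ] F) :
    (aeval (zfam x u j0 σ) : MvPolynomial (Vj n j0 ⊕ (Fin 3 ⊕ Fin 3)) ℂ →ₐ[ℂ] F) =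
      (PsiJ j0 σ).comp (noe x u j0) := by
  apply MvPolynomial.algHom_ext
  intro q
  simp [zfam]

lemma zfam_algebraic [Algebra.IsAlgebraic Ω F] {x : Fin n → A} {u : Fin 3 × Fin n → ℂ}
    (h : NData x u) {j0 : Fin n} {σ : Ω →ₐ[ℂ] F}
    (hσ : ∀ q, σ (uw Ω x q) = algebraMap Ω F (uw Ω x q))
    (hne : σ (kap n A Ω (x j0)) ≠ algebraMap Ω F (kap n A Ω (x j0))) :
    Algebra.IsAlgebraic (Algebra.adjoin ℂ (Set.range (zfam x u j0 σ))) F := by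
  set R0 := Algebra.adjoin ℂ (Set.range (zfam x u j0 σ)) with hR0
  let z' : Vj n j0 ⊕ (Fin 3 ⊕ Fin 3) → R0 :=
    fun q => ⟨zfam x u j0 σ q, Algebra.subset_adjoin ⟨q, rfl⟩⟩
  have hcomp : (aeval (zfam x u j0 σ) : MvPolynomial (Vj n j0 ⊕ (Fin 3 ⊕ Fin 3)) ℂ →ₐ[ℂ] F) =
      R0.val.comp (aeval z') := by
    apply MvPolynomial.algHom_ext
    intro i
    simp [z']
  have hintg : ∀ t, IsAlgebraic R0 (PsiJ (A := A) j0 σ t) := by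
    intro t
    refine IsIntegral.isAlgebraic (?_ : (algebraMap R0 F).IsIntegralElem _)
    refine integral_transfer (noe x u j0).toRingHom _ (aeval z').toRingHom (PsiJ j0 σ).toRingHom
      ?_ (noe_integral h j0 t)
    exact congrArg AlgHom.toRingHom (hcomp.symm.trans (aeval_zfam x u j0 σ))
  have hx : ∀ a : A, IsAlgebraic R0 (algebraMap Ω F (kap n A Ω a)) := by
    intro a
    have := hintg (C a ⊗ₜ 1)
    simpa [PsiJ] using this
  have hx' : ∀ a : A, IsAlgebraic R0 (σ (kap n A Ω a)) := by
    intro a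
    have := hintg (1 ⊗ₜ a)
    simpa [PsiJ] using this
  have hU : ∀ (i : Fin 3) (j : Fin n), j ≠ j0 →
      IsAlgebraic R0 (algebraMap Ω F (algebraMap (BB n A) Ω (X (i, j)))) := by
    intro i j hj
    have := hintg (X (i, ⟨j, hj⟩) ⊗ₜ 1)
    simpa [PsiJ] using this
  let Z : Subfield F :=
    { carrier := {t | IsAlgebraic R0 t}
      mul_mem' := fun ha hb => IsAlgebraic.mul ha hb
      one_mem' := isAlgebraic_one
      add_mem' := fun ha hb => IsAlgebraic.add ha hb
      zero_mem' := isAlgebraic_zero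
      neg_mem' := fun ha => IsAlgebraic.neg ha
      inv_mem' := fun t ht => IsAlgebraic.inv ht }
  have hZ : ∀ w : Ω, algebraMap Ω F w ∈ Z := by
    intro w
    have hw : w ∈ Z.comap (algebraMap Ω F) := by
      refine kap_gen h.gen _ (fun c => ?_) ?_ (fun j => hx _) w
      · have : algebraMap Ω F (algebraMap ℂ Ω c) = algebraMap R0 F (algebraMap ℂ R0 c) := by
          rw [← IsScalarTower.algebraMap_apply, ← IsScalarTower.algebraMap_apply]
        change IsAlgebraic R0 _
        rw [this]
        exact isAlgebraic_algebraMap _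
      · rintro ⟨i, j⟩
        by_cases hj : j = j0
        · subst hj
          have h1 := sigma_rel hσ i
          rw [← Finset.add_sum_erase _ _ (Finset.mem_univ j)] at h1
          have h2 : algebraMap Ω F (kap n A Ω (x j)) - σ (kap n A Ω (x j)) ≠ 0 :=
            sub_ne_zero.mpr hne.symm
          have h3 := eq_neg_of_add_eq_zero_left h1
          rw [← eq_div_iff h2] at h3
          change algebraMap Ω F _ ∈ Z
          rw [h3]
          refine Z.div_mem (Z.neg_mem (Z.sum_mem fun k hk => Z.mul_mem ?_ (Z.sub_mem ?_ ?_)))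
            (Z.sub_mem ?_ ?_)
          · exact hU i k (Finset.ne_of_mem_erase hk)
          · exact hx _
          · exact hx' _
          · exact hx _
          · exact hx' _
        · exact hU i j hj
    exact hw
  refine ⟨fun f => ?_⟩
  let ZA : Subalgebra R0 F := Subalgebra.algebraicClosure R0 F
  have hZA : Algebra.IsAlgebraic R0 ZA := inferInstance
  obtain ⟨p, hp0, hp⟩ := Algebra.IsAlgebraic.isAlgebraic (R := Ω) f
  let toZ : Ω →+* ZA := (algebraMap Ω F).codRestrict ZA hZ
  have hf : IsAlgebraic ZA f := by
    refine ⟨p.map toZ, ?_, ?_⟩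
    · rwa [Ne, Polynomial.map_eq_zero_iff toZ.injective]
    · rw [Polynomial.aeval_def, Polynomial.eval₂_map]
      exact hp
  exact hf.restrictScalars R0

lemma zfam_indep [Algebra.IsAlgebraic Ω F] {x : Fin n → A} {u : Fin 3 × Fin n → ℂ}
    (h : NData x u) {j0 : Fin n} {σ : Ω →ₐ[ℂ] F}
    (hσ : ∀ q, σ (uw Ω x q) = algebraMap Ω F (uw Ω x q))
    (hne : σ (kap n A Ω (x j0)) ≠ algebraMap Ω F (kap n A Ω (x j0))) :
    AlgebraicIndependent ℂ (zfam x u j0 σ) := by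
  have := zfam_algebraic h hσ hne
  refine (Algebra.IsAlgebraic.isTranscendenceBasis_of_le_trdeg_of_finite ℂ _ ?_).1
  have h1 := ((uw_trans (Ω := Ω) h).algebraMap_comp (A := F)).cardinalMk_eq_trdeg
  rw [← h1]
  simp only [Cardinal.mk_fintype, Fintype.card_sum, Fintype.card_prod, Fintype.card_fin]
  rw [Nat.cast_le]
  have h2 : Fintype.card {j : Fin n // j ≠ j0} = n - 1 := by
    rw [Fintype.card_subtype_compl, Fintype.card_fin]; simp
  have h3 : 0 < n := Fin.pos j0
  simp only [Ne] at h2 ⊢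
  rw [h2]
  omega

/-- If `σ` moves `x_{j₀}`, then `A[Uᵢⱼ : j ≠ j₀] ⊗ A` embeds in `F` by means of `σ`: it is a domain,
integral over a polynomial ring which embeds for dimension reasons. -/
theorem PsiJ_injective [Algebra.IsAlgebraic Ω F] {x : Fin n → A} {u : Fin 3 × Fin n → ℂ}
    (h : NData x u) {j0 : Fin n} {σ : Ω →ₐ[ℂ] F}
    (hσ : ∀ q, σ (uw Ω x q) = algebraMap Ω F (uw Ω x q))
    (hne : σ (kap n A Ω (x j0)) ≠ algebraMap Ω F (kap n A Ω (x j0))) :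
    Function.Injective (PsiJ (A := A) j0 σ) := by
  have hft : Algebra.FiniteType ℂ A := ⟨by
    rw [← h.gen]
    exact (Subalgebra.fg_def.mpr ⟨_, Set.finite_range x, rfl⟩)⟩
  have hft2 : Algebra.FiniteType ℂ (MvPolynomial (Vj n j0) A) := 
    Algebra.FiniteType.trans hft inferInstance
  have := tensor_domain (B := MvPolynomial (Vj n j0) A) (D := A)
  have : Nontrivial (MvPolynomial (Vj n j0) A ⊗[ℂ] A) := (PsiJ (A := A) j0 σ).toRingHom.domain_nontrivial
  have : IsDomain (MvPolynomial (Vj n j0) A ⊗[ℂ] A) := NoZeroDivisors.to_isDomain _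
  letI := (noe x u j0).toRingHom.toAlgebra
  have : Algebra.IsIntegral (MvPolynomial (Vj n j0 ⊕ (Fin 3 ⊕ Fin 3)) ℂ)
    (MvPolynomial (Vj n j0) A ⊗[ℂ] A) := ⟨noe_integral h j0⟩
  have h0 : RingHom.ker (PsiJ (A := A) j0 σ).toRingHom = ⊥ := by
    apply Ideal.eq_bot_of_comap_eq_bot (R := MvPolynomial (Vj n j0 ⊕ (Fin 3 ⊕ Fin 3)) ℂ)
    rw [eq_bot_iff]
    intro p hp
    have hi := zfam_indep h hσ hne
    have : aeval (zfam x u j0 σ) p = 0 := by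
      rw [aeval_zfam]; exact hp
    exact (injective_iff_map_eq_zero _).mp hi p this
  exact (RingHom.injective_iff_ker_eq_bot _).mpr h0

end Primitive

end RaoGenus

namespace RaoGenus

open scoped TensorProduct
open MvPolynomial

section Primitive2

variable {n : ℕ} {A Ω F : Type} [CommRing A] [IsDomain A] [Algebra ℂ A] [Field Ω] [Algebra ℂ Ω]
  [Algebra (BB n A) Ω] [IsScalarTower ℂ (BB n A) Ω] [IsFractionRing (BB n A) Ω]
  [Field F] [Algebra ℂ F] [Algebra Ω F] [IsScalarTower ℂ Ω F]

/-- The element `x_{j₀} ⊗ 1 - 1 ⊗ x_{j₀}`. -/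
noncomputable def dlt (x : Fin n → A) (j0 : Fin n) : MvPolynomial (Vj n j0) A ⊗[ℂ] A :=
  C (x j0) ⊗ₜ 1 - 1 ⊗ₜ x j0

lemma PsiJ_left (j0 : Fin n) (σ : Ω →ₐ[ℂ] F) (a : A) :
    PsiJ j0 σ (C a ⊗ₜ 1) = algebraMap Ω F (kap n A Ω a) := by simp [PsiJ]

lemma PsiJ_right (j0 : Fin n) (σ : Ω →ₐ[ℂ] F) (a : A) :
    PsiJ j0 σ (1 ⊗ₜ a) = σ (kap n A Ω a) := by simp [PsiJ]

lemma PsiJ_X (j0 : Fin n) (σ : Ω →ₐ[ℂ] F) (q : Vj n j0) :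
    PsiJ (A := A) j0 σ (X q ⊗ₜ 1) =
      algebraMap Ω F (algebraMap (BB n A) Ω (X (q.1, q.2.1))) := by simp [PsiJ]

lemma PsiJ_dlt (x : Fin n → A) (j0 : Fin n) (σ : Ω →ₐ[ℂ] F) :
    PsiJ j0 σ (dlt x j0) = algebraMap Ω F (kap n A Ω (x j0)) - σ (kap n A Ω (x j0)) := by
  rw [dlt, map_sub, PsiJ_left, PsiJ_right]

/-- A quantity depending on `σ` which, after multiplication by a power of `x_{j₀} - σ x_{j₀}`,
comes from one element of `A[Uᵢⱼ : j ≠ j₀] ⊗ A` for all `σ` at once. -/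
def Rep (x : Fin n → A) (j0 : Fin n) (φ : (Ω →ₐ[ℂ] F) → F) : Prop :=
  ∃ (N : ℕ) (t : MvPolynomial (Vj n j0) A ⊗[ℂ] A), ∀ σ : Ω →ₐ[ℂ] F,
    (∀ q, σ (uw Ω x q) = algebraMap Ω F (uw Ω x q)) →
      PsiJ j0 σ (dlt x j0) ^ N * φ σ = PsiJ j0 σ t

lemma Rep.add {x : Fin n → A} {j0 : Fin n} {φ ψ : (Ω →ₐ[ℂ] F) → F} (hφ : Rep x j0 φ)
    (hψ : Rep x j0 ψ) : Rep x j0 (fun σ => φ σ + ψ σ) := by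
  obtain ⟨N, t, h⟩ := hφ
  obtain ⟨N', t', h'⟩ := hψ
  refine ⟨N + N', dlt x j0 ^ N' * t + dlt x j0 ^ N * t', fun σ hσ => ?_⟩
  rw [map_add, map_mul, map_mul, ← h σ hσ, ← h' σ hσ, map_pow, map_pow]
  ring

lemma Rep.mul {x : Fin n → A} {j0 : Fin n} {φ ψ : (Ω →ₐ[ℂ] F) → F} (hφ : Rep x j0 φ)
    (hψ : Rep x j0 ψ) : Rep x j0 (fun σ => φ σ * ψ σ) := by
  obtain ⟨N, t, h⟩ := hφ
  obtain ⟨N', t', h'⟩ := hψ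
  refine ⟨N + N', t * t', fun σ hσ => ?_⟩
  rw [map_mul, ← h σ hσ, ← h' σ hσ]
  ring

lemma Rep.sub {x : Fin n → A} {j0 : Fin n} {φ ψ : (Ω →ₐ[ℂ] F) → F} (hφ : Rep x j0 φ)
    (hψ : Rep x j0 ψ) : Rep x j0 (fun σ => φ σ - ψ σ) := by
  obtain ⟨N, t, h⟩ := hφ
  obtain ⟨N', t', h'⟩ := hψ
  refine ⟨N + N', dlt x j0 ^ N' * t - dlt x j0 ^ N * t', fun σ hσ => ?_⟩
  rw [map_sub, map_mul, map_mul, ← h σ hσ, ← h' σ hσ, map_pow, map_pow]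
  ring

lemma Rep.congr {x : Fin n → A} {j0 : Fin n} {φ ψ : (Ω →ₐ[ℂ] F) → F} (hφ : Rep x j0 φ)
    (he : ∀ σ : Ω →ₐ[ℂ] F, (∀ q, σ (uw Ω x q) = algebraMap Ω F (uw Ω x q)) → φ σ = ψ σ) :
    Rep x j0 ψ := by
  obtain ⟨N, t, h⟩ := hφ
  exact ⟨N, t, fun σ hσ => by rw [← he σ hσ, h σ hσ]⟩

lemma rep_U (x : Fin n → A) (j0 : Fin n) (q : Fin 3 × Fin n) :
    Rep (Ω := Ω) (F := F) x j0 (fun _ => algebraMap Ω F (algebraMap (BB n A) Ω (X q))) := by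
  obtain ⟨i, j⟩ := q
  by_cases hj : j = j0
  · subst hj
    refine ⟨1, -∑ k : {k // k ≠ j}, (X (i, k) ⊗ₜ 1) * (C (x k) ⊗ₜ 1 - 1 ⊗ₜ x k), fun σ hσ => ?_⟩
    have h1 := sigma_rel hσ i
    rw [← Finset.add_sum_erase _ _ (Finset.mem_univ j)] at h1
    have h3 := eq_neg_of_add_eq_zero_left h1
    rw [pow_one, PsiJ_dlt, mul_comm, h3, map_neg, map_sum]
    congr 1
    rw [Finset.sum_subtype (p := fun k => k ≠ j) (Finset.univ.erase j) (by simp)]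
    refine Finset.sum_congr rfl fun k _ => ?_
    rw [map_mul, map_sub, PsiJ_X, PsiJ_left, PsiJ_right]
  · refine ⟨0, X (i, ⟨j, hj⟩) ⊗ₜ 1, fun σ _ => ?_⟩
    rw [PsiJ_X, pow_zero, one_mul]

lemma rep_left (x : Fin n → A) (j0 : Fin n) (b : BB n A) :
    Rep (Ω := Ω) (F := F) x j0 (fun _ => algebraMap Ω F (algebraMap (BB n A) Ω b)) := by
  induction b using MvPolynomial.induction_on with
  | C a => exact ⟨0, C a ⊗ₜ 1, fun σ _ => by rw [PsiJ_left, pow_zero, one_mul, kap_apply]⟩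
  | add a b ha hb => exact (ha.add hb).congr fun σ _ => by simp only [map_add]
  | mul_X a q ha => exact (ha.mul (rep_U x j0 q)).congr fun σ _ => by simp only [map_mul]

lemma rep_right (x : Fin n → A) (j0 : Fin n) (b : BB n A) :
    Rep (Ω := Ω) (F := F) x j0 (fun σ => σ (algebraMap (BB n A) Ω b)) := by
  induction b using MvPolynomial.induction_on with
  | C a => exact ⟨0, 1 ⊗ₜ a, fun σ _ => by rw [PsiJ_right, pow_zero, one_mul, kap_apply]⟩
  | add a b ha hb => exact (ha.add hb).congr fun σ _ => by simp only [map_add]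
  | mul_X a q ha =>
    refine (ha.mul (rep_U x j0 q)).congr fun σ hσ => ?_
    have h1 : σ (algebraMap (BB n A) Ω (X q)) = algebraMap Ω F (algebraMap (BB n A) Ω (X q)) :=
      hσ (Sum.inl q)
    simp only [map_mul, h1]

lemma exists_moved {x : Fin n → A} {u : Fin 3 × Fin n → ℂ} (h : NData x u) {σ : Ω →ₐ[ℂ] F}
    (hσ : ∀ q, σ (uw Ω x q) = algebraMap Ω F (uw Ω x q))
    (hne : ∃ z, σ z ≠ algebraMap Ω F z) :
    ∃ j, σ (kap n A Ω (x j)) ≠ algebraMap Ω F (kap n A Ω (x j)) := by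
  by_contra! hall
  obtain ⟨z, hz⟩ := hne
  apply hz
  have : z ∈ RingHom.eqLocusField σ.toRingHom (algebraMap Ω F) := by
    refine kap_gen h.gen _ (fun c => ?_) (fun q => hσ (Sum.inl q)) (fun j => hall j) z
    change σ _ = _
    rw [AlgHom.commutes, ← IsScalarTower.algebraMap_apply]
  exact this

lemma exists_nonconst {x : Fin n → A} {u : Fin 3 × Fin n → ℂ} (h : NData x u) :
    ∃ j, x j ∉ (algebraMap ℂ A).range := by
  by_contra! hall
  have hy : yform x u 0 ∈ (algebraMap ℂ A).range := by
    refine Subring.sum_mem _ fun j _ => ?_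
    rw [Algebra.smul_def]
    exact Subring.mul_mem _ ⟨_, rfl⟩ (hall j)
  obtain ⟨c, hc⟩ := hy
  have h1 : (X 0 - C c : MPoly 3) = 0 := by
    apply (injective_iff_map_eq_zero _).mp h.ind
    rw [map_sub, aeval_X, ← hc, ← algebraMap_eq, AlgHom.commutes, sub_self]
  have h2 := congrArg (eval (fun _ => c + 1)) h1
  simp at h2

lemma finiteType_of_NData {x : Fin n → A} {u : Fin 3 × Fin n → ℂ} (h : NData x u) :
    Algebra.FiniteType ℂ A := ⟨by
  rw [← h.gen]
  exact (Subalgebra.fg_def.mpr ⟨_, Set.finite_range x, rfl⟩)⟩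

/-- A nontrivial embedding `σ` moves every nonconstant coordinate `x_j`. -/
lemma moved_all [Algebra.IsAlgebraic Ω F] {x : Fin n → A} {u : Fin 3 × Fin n → ℂ} (h : NData x u)
    {σ : Ω →ₐ[ℂ] F} (hσ : ∀ q, σ (uw Ω x q) = algebraMap Ω F (uw Ω x q))
    (hne : ∃ z, σ z ≠ algebraMap Ω F z) {j1 : Fin n} (hj1 : x j1 ∉ (algebraMap ℂ A).range) :
    σ (kap n A Ω (x j1)) ≠ algebraMap Ω F (kap n A Ω (x j1)) := by
  obtain ⟨j0, hj0⟩ := exists_moved h hσ hne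
  have hinj := PsiJ_injective h hσ hj0
  intro heq
  apply hj1
  have h1 : (C (x j1) ⊗ₜ 1 : MvPolynomial (Vj n j0) A ⊗[ℂ] A) = 1 ⊗ₜ x j1 := by
    apply hinj
    rw [PsiJ_left, PsiJ_right, heq]
  have := finiteType_of_NData h
  obtain ⟨φ, -⟩ := exists_point (B := MvPolynomial (Vj n j0) A) (one_ne_zero)
  have h2 := congrArg (Algebra.TensorProduct.lift ((Algebra.ofId ℂ A).comp φ) (AlgHom.id ℂ A)
        (fun _ _ => Commute.all _ _)) h1
  rw [Algebra.TensorProduct.lift_tmul, Algebra.TensorProduct.lift_tmul] at h2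
  simp only [map_one, one_mul, mul_one, AlgHom.id_apply, AlgHom.comp_apply] at h2
  exact ⟨_, h2⟩

/-- An element fixed by one nontrivial embedding is fixed by all embeddings. -/
lemma fixed_all [Algebra.IsAlgebraic Ω F] {x : Fin n → A} {u : Fin 3 × Fin n → ℂ} (h : NData x u)
    {σ : Ω →ₐ[ℂ] F} (hσ : ∀ q, σ (uw Ω x q) = algebraMap Ω F (uw Ω x q))
    (hne : ∃ z, σ z ≠ algebraMap Ω F z) {g : Ω} (hg : σ g = algebraMap Ω F g)
    {τ : Ω →ₐ[ℂ] F} (hτ : ∀ q, τ (uw Ω x q) = algebraMap Ω F (uw Ω x q)) :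
    τ g = algebraMap Ω F g := by
  by_contra hτg
  obtain ⟨j1, hj1⟩ := exists_nonconst h
  have hσ1 := moved_all h hσ hne hj1
  have hτ1 := moved_all h hτ ⟨g, hτg⟩ hj1
  obtain ⟨b, c, hc, rfl⟩ := IsFractionRing.div_surjective (A := BB n A) g
  have hc0 : algebraMap (BB n A) Ω c ≠ 0 :=
    IsFractionRing.to_map_ne_zero_of_mem_nonZeroDivisors hc
  obtain ⟨N, t, ht⟩ := ((rep_right (Ω := Ω) (F := F) x j1 b).mul (rep_left x j1 c)).sub
    ((rep_left x j1 b).mul (rep_right x j1 c))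
  have key : ∀ ρ : Ω →ₐ[ℂ] F, (∀ q, ρ (uw Ω x q) = algebraMap Ω F (uw Ω x q)) →
      (ρ (algebraMap (BB n A) Ω b / algebraMap (BB n A) Ω c)
        = algebraMap Ω F (algebraMap (BB n A) Ω b / algebraMap (BB n A) Ω c) ↔
      ρ (algebraMap (BB n A) Ω b) * algebraMap Ω F (algebraMap (BB n A) Ω c)
        - algebraMap Ω F (algebraMap (BB n A) Ω b) * ρ (algebraMap (BB n A) Ω c) = 0) := by
    intro ρ _
    have h1 : ρ (algebraMap (BB n A) Ω c) ≠ 0 := (map_ne_zero ρ).mpr hc0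
    have h2 : algebraMap Ω F (algebraMap (BB n A) Ω c) ≠ 0 := (map_ne_zero _).mpr hc0
    rw [map_div₀, map_div₀, div_eq_div_iff h1 h2, sub_eq_zero]
  have h1 := ht σ hσ
  beta_reduce at h1
  rw [(key σ hσ).mp hg, mul_zero] at h1
  have ht0 : t = 0 := by
    apply PsiJ_injective h hσ hσ1
    rw [map_zero, ← h1]
  have h2 := ht τ hτ
  beta_reduce at h2
  rw [ht0, map_zero] at h2
  rcases mul_eq_zero.mp h2 with h3 | h3
  · rw [PsiJ_dlt] at h3
    exact hτ1 (sub_eq_zero.mp (eq_zero_of_pow_eq_zero h3)).symm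
  · exact hτg ((key τ hτ).mpr h3)

end Primitive2

/-- The field of fractions of `A[U]` has no proper intermediate fields over the field generated by
the `Uᵢⱼ` and `wᵢ`. -/
theorem primitive {n : ℕ} {A Ω : Type} [CommRing A] [IsDomain A] [Algebra ℂ A] [Field Ω]
    [Algebra ℂ Ω] [Algebra (BB n A) Ω] [IsScalarTower ℂ (BB n A) Ω] [IsFractionRing (BB n A) Ω]
    {x : Fin n → A} {u : Fin 3 × Fin n → ℂ} (h : NData x u)
    (G : IntermediateField (KK Ω x) Ω) : G = ⊥ ∨ G = ⊤ := by
  have := KK_alg (Ω := Ω) h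
  have hres : ∀ ρ : Ω →ₐ[KK Ω x] AlgebraicClosure Ω, ∀ q,
      ρ (uw Ω x q) = algebraMap Ω (AlgebraicClosure Ω) (uw Ω x q) := by
    intro ρ q
    have h1 := ρ.commutes ⟨_, uw_mem_KK x q⟩
    rw [IsScalarTower.algebraMap_apply (KK Ω x) Ω (AlgebraicClosure Ω)] at h1
    exact h1
  by_cases hG : G = ⊤
  · exact Or.inr hG
  left
  obtain ⟨z, hz⟩ : ∃ z, z ∉ G := by
    by_contra! hall
    exact hG (eq_top_iff.mpr fun z _ => hall z)
  obtain ⟨σ, hσ⟩ : ∃ σ : Ω →ₐ[G] AlgebraicClosure Ω, σ z ≠ algebraMap Ω _ z := by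
    by_contra! hall
    obtain ⟨g, hg⟩ := mem_of_fixed (K := G) (E := Ω) (F := AlgebraicClosure Ω) z hall
    exact hz (by rw [← hg]; exact g.2)
  rw [eq_bot_iff]
  intro g hg
  rw [IntermediateField.mem_bot]
  have hσg : σ g = algebraMap Ω (AlgebraicClosure Ω) g := by
    have h1 := σ.commutes ⟨g, hg⟩
    rw [IsScalarTower.algebraMap_apply G Ω (AlgebraicClosure Ω)] at h1
    exact h1
  refine mem_of_fixed (K := KK Ω x) (E := Ω) (F := AlgebraicClosure Ω) g fun τ => ?_
  exact fixed_all (F := AlgebraicClosure Ω) h (σ := (σ.restrictScalars (KK Ω x)).restrictScalars ℂ)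
    (hres (σ.restrictScalars (KK Ω x))) ⟨z, hσ⟩ hσg (τ := τ.restrictScalars ℂ) (hres τ)

end RaoGenus

namespace RaoGenus

open MvPolynomial

/-! ### Specialising the universal zero-dimensional section -/

section Spec

variable {n : ℕ}

/-- The coordinate functions on the affine cone. -/
noncomputable abbrev xI (I : Ideal (MPoly n)) : Fin n → MPoly n ⧸ I :=
  fun j => Ideal.Quotient.mk I (X j)

/-- The ideal of the intersection of the cone with the affine linear space `wᵢ(u) = ωᵢ`. -/
noncomputable def eE (I : Ideal (MPoly n)) (u : Fin 3 × Fin n → ℂ) (ω : Fin 3 → ℂ) :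
    Ideal (MPoly n) :=
  I ⊔ Ideal.span (Set.range fun i : Fin 3 => lin (fun j => u (i, j)) - C (ω i))

/-- Polynomials in the coordinates with coefficients depending on the parameters. -/
abbrev TT (n : ℕ) := MvPolynomial (Fin n) (PP n)

/-- Specialisation of the parameters. -/
noncomputable def sp (n : ℕ) (u : Fin 3 × Fin n → ℂ) (ω : Fin 3 → ℂ) : TT n →+* MPoly n :=
  MvPolynomial.map (eval (Sum.elim u ω))

variable {I : Ideal (MPoly n)} {Ω : Type} [Field Ω] [Algebra ℂ Ω]
  [Algebra (BB n (MPoly n ⧸ I)) Ω] [IsScalarTower ℂ (BB n (MPoly n ⧸ I)) Ω]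

/-- Evaluation of a polynomial with parameters at the generic point. -/
noncomputable def Phi (I : Ideal (MPoly n)) (Ω : Type) [Field Ω] [Algebra ℂ Ω]
    [Algebra (BB n (MPoly n ⧸ I)) Ω] [IsScalarTower ℂ (BB n (MPoly n ⧸ I)) Ω] : TT n →+* Ω :=
  eval₂Hom (aeval (uw Ω (xI I)) : PP n →ₐ[ℂ] Ω).toRingHom
    fun j => kap n (MPoly n ⧸ I) Ω (xI I j)

lemma Phi_C (p : PP n) : Phi I Ω (C p) = aeval (uw Ω (xI I)) p := by
  simp [Phi]

lemma Phi_X (j : Fin n) : Phi I Ω (X j) = kap n (MPoly n ⧸ I) Ω (xI I j) := by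
  simp [Phi]

lemma Phi_map (a : MPoly n) :
    Phi I Ω (MvPolynomial.map C a) = kap n (MPoly n ⧸ I) Ω (Ideal.Quotient.mk I a) := by
  induction a using MvPolynomial.induction_on with
  | C c =>
    rw [map_C, Phi_C]
    have h1 : Ideal.Quotient.mk I (C c) = algebraMap ℂ (MPoly n ⧸ I) c := rfl
    rw [h1, AlgHom.commutes]
    exact (aeval (uw Ω (xI I))).commutes c
  | add a b ha hb => simp only [map_add, ha, hb]
  | mul_X a j ha => simp only [map_mul, ha, map_X, Phi_X]

lemma sp_C (u : Fin 3 × Fin n → ℂ) (ω : Fin 3 → ℂ) (p : PP n) :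
    sp n u ω (C p) = C (eval (Sum.elim u ω) p) := by simp [sp]

lemma sp_X (u : Fin 3 × Fin n → ℂ) (ω : Fin 3 → ℂ) (j : Fin n) :
    sp n u ω (X j) = X j := by simp [sp]

lemma sp_map (u : Fin 3 × Fin n → ℂ) (ω : Fin 3 → ℂ) (a : MPoly n) :
    sp n u ω (MvPolynomial.map C a) = a := by
  rw [sp, MvPolynomial.map_map]
  have : (eval (Sum.elim u ω)).comp (C : ℂ →+* PP n) = RingHom.id ℂ := by
    ext; simp
  rw [this, MvPolynomial.map_id]

/-- Evaluation of `A[U]` on the linear section. -/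
noncomputable def thE (I : Ideal (MPoly n)) (u : Fin 3 × Fin n → ℂ) (ω : Fin 3 → ℂ) :
    BB n (MPoly n ⧸ I) →+* MPoly n ⧸ eE I u ω :=
  eval₂Hom (Ideal.Quotient.factor (le_sup_left : I ≤ eE I u ω))
    fun q => Ideal.Quotient.mk _ (C (u q))

lemma thE_C (u : Fin 3 × Fin n → ℂ) (ω : Fin 3 → ℂ) (a : MPoly n) :
    thE I u ω (C (Ideal.Quotient.mk I a)) = Ideal.Quotient.mk _ a := by
  simp only [thE, coe_eval₂Hom, eval₂_C]
  exact Ideal.Quotient.factor_mk _ _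

lemma thE_w (u : Fin 3 × Fin n → ℂ) (ω : Fin 3 → ℂ) (i : Fin 3) :
    thE I u ω (wform (xI I) i) = Ideal.Quotient.mk _ (C (ω i)) := by
  have h1 : thE I u ω (wform (xI I) i)
      = Ideal.Quotient.mk (eE I u ω) (lin (fun j => u (i, j))) := by
    simp only [wform, map_sum, map_mul, thE_C, lin]
    refine Finset.sum_congr rfl fun j _ => ?_
    simp [thE]
  rw [h1]
  refine Ideal.Quotient.eq.mpr ?_
  exact Ideal.mem_sup_right (Ideal.subset_span ⟨i, rfl⟩)

lemma thE_gen (u : Fin 3 × Fin n → ℂ) (ω : Fin 3 → ℂ) (p : PP n) :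
    thE I u ω (aeval (Sum.elim X (wform (xI I))) p)
      = Ideal.Quotient.mk _ (C (eval (Sum.elim u ω) p)) := by
  induction p using MvPolynomial.induction_on with
  | C c =>
    rw [aeval_C, eval_C]
    have h1 : algebraMap ℂ (BB n (MPoly n ⧸ I)) c = C (Ideal.Quotient.mk I (C c)) := rfl
    rw [h1, thE_C]
  | add a b ha hb => simp only [map_add, ha, hb]
  | mul_X a q ha =>
    rw [map_mul, map_mul, ha, aeval_X, map_mul, map_mul, map_mul, eval_X]
    congr 1
    rcases q with q | i
    · simp [thE]
    · rw [Sum.elim_inr, thE_w, Sum.elim_inr]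

/-- A relation valid at the generic point specialises. -/
theorem sp_mem [I.IsPrime] [IsFractionRing (BB n (MPoly n ⧸ I)) Ω] {F : TT n}
    (hF : Phi I Ω F = 0) (u : Fin 3 × Fin n → ℂ) (ω : Fin 3 → ℂ) : sp n u ω F ∈ eE I u ω := by
  set Ψ : TT n →+* BB n (MPoly n ⧸ I) :=
    eval₂Hom (aeval (Sum.elim X (wform (xI I))) : PP n →ₐ[ℂ] BB n (MPoly n ⧸ I)).toRingHom
      (fun j => C (xI I j)) with hΨ
  have h1 : ∀ F, Phi I Ω F = algebraMap (BB n (MPoly n ⧸ I)) Ω (Ψ F) := by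
    intro F
    induction F using MvPolynomial.induction_on with
    | C p =>
      rw [Phi_C]
      simp only [hΨ, coe_eval₂Hom, eval₂_C]
      have h3 : (aeval (uw Ω (xI I)) : PP n →ₐ[ℂ] Ω)
          = (IsScalarTower.toAlgHom ℂ (BB n (MPoly n ⧸ I)) Ω).comp
            (aeval (Sum.elim X (wform (xI I)))) := by
        apply MvPolynomial.algHom_ext
        intro q
        simp [uw]
      rw [h3]; rfl
    | add a b ha hb => simp only [map_add, ha, hb]
    | mul_X a j ha =>
      rw [map_mul, map_mul, map_mul, ha, Phi_X, kap_apply]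
      simp [hΨ]
  have h2 : Ψ F = 0 := by
    have := h1 F
    rw [hF] at this
    exact (IsFractionRing.injective (BB n (MPoly n ⧸ I)) Ω) (by rw [map_zero, ← this])
  have h3 : ∀ F, thE I u ω (Ψ F) = Ideal.Quotient.mk _ (sp n u ω F) := by
    intro F
    induction F using MvPolynomial.induction_on with
    | C p =>
      rw [sp_C, ← thE_gen]
      simp [hΨ]
    | add a b ha hb => simp only [map_add, ha, hb]
    | mul_X a j ha =>
      rw [map_mul, map_mul, map_mul, map_mul, ha, sp_X]
      congr 1
      simp only [hΨ, coe_eval₂Hom, eval₂_X]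
      rw [thE_C]
  rw [← Ideal.Quotient.eq_zero_iff_mem, ← h3, h2, map_zero]

end Spec

section Denom

variable {n : ℕ} {A Ω : Type} [CommRing A] [IsDomain A] [Algebra ℂ A] [Field Ω] [Algebra ℂ Ω]
  [Algebra (BB n A) Ω] [IsScalarTower ℂ (BB n A) Ω] [IsFractionRing (BB n A) Ω]

/-- Common denominators for finitely many elements of the field of parameters. -/
lemma common_denom (x : Fin n → A) {τ : Type} [Finite τ] (z : τ → Ω) (hz : ∀ t, z t ∈ KK Ω x) :
    ∃ (q : PP n) (c : τ → PP n), aeval (uw Ω x) q ≠ 0 ∧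
      ∀ t, aeval (uw Ω x) q * z t = aeval (uw Ω x) (c t) := by
  classical
  cases nonempty_fintype τ
  choose p q hq hp using fun t => KK_ratio x (hz t)
  refine ⟨∏ t, q t, fun t => p t * ∏ t' ∈ Finset.univ.erase t, q t', ?_, fun t => ?_⟩
  · rw [map_prod]; exact Finset.prod_ne_zero_iff.mpr fun t _ => hq t
  · rw [← Finset.mul_prod_erase _ _ (Finset.mem_univ t), map_mul, map_mul, ← hp t]
    ring

/-- Common denominators for finitely many combinations of given elements. -/
lemma common_span (x : Fin n → A) {τ ι : Type} [Finite τ] [Fintype ι] (b : ι → Ω) (z : τ → Ω)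
    (hz : ∀ t, z t ∈ Submodule.span (KK Ω x) (Set.range b)) :
    ∃ (q : PP n) (c : τ → ι → PP n), aeval (uw Ω x) q ≠ 0 ∧
      ∀ t, aeval (uw Ω x) q * z t = ∑ k, aeval (uw Ω x) (c t k) * b k := by
  choose e he using fun t => (Submodule.mem_span_range_iff_exists_fun _).mp (hz t)
  obtain ⟨q, c, hq, hc⟩ := common_denom x (fun t : τ × ι => (e t.1 t.2 : Ω)) (fun t => (e t.1 t.2).2)
  refine ⟨q, fun t k => c (t, k), hq, fun t => ?_⟩
  rw [← he t, Finset.mul_sum]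
  refine Finset.sum_congr rfl fun k _ => ?_
  rw [← hc (t, k), mul_assoc]
  rfl

end Denom
end RaoGenus

namespace RaoGenus

open MvPolynomial

/-! ### Multiplication tables and their specialisation -/

section Table

variable {n : ℕ} {I : Ideal (MPoly n)} {Ω : Type} [Field Ω] [Algebra ℂ Ω]
  [Algebra (BB n (MPoly n ⧸ I)) Ω] [IsScalarTower ℂ (BB n (MPoly n ⧸ I)) Ω]

/-- The value of a polynomial at the generic point. -/
noncomputable def kp (I : Ideal (MPoly n)) (Ω : Type) [Field Ω] [Algebra ℂ Ω]
    [Algebra (BB n (MPoly n ⧸ I)) Ω] [IsScalarTower ℂ (BB n (MPoly n ⧸ I)) Ω] :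
    MPoly n →ₐ[ℂ] Ω :=
  (kap n (MPoly n ⧸ I) Ω).comp (Ideal.Quotient.mkₐ ℂ I)

lemma kp_apply (a : MPoly n) : kp I Ω a = kap n (MPoly n ⧸ I) Ω (Ideal.Quotient.mk I a) := rfl

lemma Phi_map' (a : MPoly n) : Phi I Ω (MvPolynomial.map C a) = kp I Ω a := by
  rw [Phi_map, kp_apply]

/-- `g` is a common denominator for expressing all polynomials through the `βₖ`. -/
def TableFor (I : Ideal (MPoly n)) (Ω : Type) [Field Ω] [Algebra ℂ Ω]
    [Algebra (BB n (MPoly n ⧸ I)) Ω] [IsScalarTower ℂ (BB n (MPoly n ⧸ I)) Ω]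
    {ι : Type} [Fintype ι] (β : ι → MPoly n) (g : PP n) : Prop :=
  ∀ a : MPoly n, ∃ (N : ℕ) (c : ι → PP n), aeval (uw Ω (xI I)) g ^ N * kp I Ω a
    = ∑ k, aeval (uw Ω (xI I)) (c k) * kp I Ω (β k)

variable [I.IsPrime] [IsFractionRing (BB n (MPoly n ⧸ I)) Ω] {ι : Type} [Fintype ι]
  {β : ι → MPoly n}

lemma exists_table (hspan : Submodule.span (KK Ω (xI I)) (Set.range fun k => kp I Ω (β k)) = ⊤) :
    ∃ g : PP n, g ≠ 0 ∧ TableFor I Ω β g := by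
  obtain ⟨g, c, hg, hc⟩ := common_span (Ω := Ω) (xI I) (fun k => kp I Ω (β k))
    (fun t : Option (Fin n × ι) => t.elim 1 fun t => kp I Ω (X t.1) * kp I Ω (β t.2))
    (fun t => by rw [hspan]; trivial)
  refine ⟨g, by rintro rfl; simp at hg, fun a => ?_⟩
  induction a using MvPolynomial.induction_on with
  | C a =>
    refine ⟨1, fun k => C a * c none k, ?_⟩
    have h1 := hc none
    simp only [Option.elim_none, mul_one] at h1
    have h2 : kp I Ω (C a) = algebraMap ℂ Ω a := (kp I Ω).commutes a
    rw [pow_one, h1, h2, Finset.sum_mul]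
    refine Finset.sum_congr rfl fun k _ => ?_
    rw [map_mul, aeval_C]; ring
  | add a b ha hb =>
    obtain ⟨N, e, he⟩ := ha
    obtain ⟨N', e', he'⟩ := hb
    refine ⟨N + N', fun k => g ^ N' * e k + g ^ N * e' k, ?_⟩
    simp only [map_add, map_mul, map_pow, add_mul, Finset.sum_add_distrib, mul_assoc,
      ← Finset.mul_sum]
    rw [← he, ← he']; ring
  | mul_X a j ha =>
    obtain ⟨N, e, he⟩ := ha
    refine ⟨N + 1, fun l => ∑ k, e k * c (some (j, k)) l, ?_⟩
    calc aeval (uw Ω (xI I)) g ^ (N + 1) * kp I Ω (a * X j)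
        = aeval (uw Ω (xI I)) g * kp I Ω (X j) * (aeval (uw Ω (xI I)) g ^ N * kp I Ω a) := by
          rw [map_mul]; ring
      _ = ∑ k, aeval (uw Ω (xI I)) (e k) *
            (aeval (uw Ω (xI I)) g * (kp I Ω (X j) * kp I Ω (β k))) := by
          rw [he, Finset.mul_sum]
          exact Finset.sum_congr rfl fun k _ => by ring
      _ = ∑ k, ∑ l, aeval (uw Ω (xI I)) (e k) *
            (aeval (uw Ω (xI I)) (c (some (j, k)) l) * kp I Ω (β l)) := by
          refine Finset.sum_congr rfl fun k _ => ?_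
          have := hc (some (j, k))
          simp only [Option.elim_some] at this
          rw [this, Finset.mul_sum]
      _ = _ := by
          rw [Finset.sum_comm]
          refine Finset.sum_congr rfl fun l _ => ?_
          rw [map_sum, Finset.sum_mul]
          exact Finset.sum_congr rfl fun k _ => by rw [map_mul]; ring

/-- Relations with polynomial coefficients specialise. -/
lemma sp_rel {g : PP n} {a : MPoly n} {c : ι → PP n}
    (h : aeval (uw Ω (xI I)) g * kp I Ω a = ∑ k, aeval (uw Ω (xI I)) (c k) * kp I Ω (β k))
    (u : Fin 3 × Fin n → ℂ) (ω : Fin 3 → ℂ) :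
    C (eval (Sum.elim u ω) g) * a - ∑ k, C (eval (Sum.elim u ω) (c k)) * β k ∈ eE I u ω := by
  have h1 : Phi I Ω (C g * MvPolynomial.map C a - ∑ k, C (c k) * MvPolynomial.map C (β k)) = 0 := by
    simp only [map_sub, map_mul, map_sum, Phi_C, Phi_map']
    rw [h, sub_self]
  have h2 := sp_mem h1 u ω
  simpa only [map_sub, map_mul, map_sum, sp_C, sp_map] using h2

lemma sp_spans {g : PP n} {u : Fin 3 × Fin n → ℂ} {ω : Fin 3 → ℂ}
    (hg : eval (Sum.elim u ω) g ≠ 0) {a : MPoly n} {c : ι → PP n}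
    (h : aeval (uw Ω (xI I)) g * kp I Ω a = ∑ k, aeval (uw Ω (xI I)) (c k) * kp I Ω (β k)) :
    ∃ e : ι → ℂ, a - ∑ k, C (e k) * β k ∈ eE I u ω := by
  have h1 := Ideal.mul_mem_left _ (C (eval (Sum.elim u ω) g)⁻¹) (sp_rel h u ω)
  refine ⟨fun k => (eval (Sum.elim u ω) g)⁻¹ * eval (Sum.elim u ω) (c k), ?_⟩
  convert h1 using 1
  rw [mul_sub, ← mul_assoc, ← C_mul, inv_mul_cancel₀ hg, C_1, one_mul, Finset.mul_sum]
  congr 1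
  exact Finset.sum_congr rfl fun k _ => by rw [C_mul]; ring

lemma table_spans {g : PP n} (hT : TableFor I Ω β g) {u : Fin 3 × Fin n → ℂ} {ω : Fin 3 → ℂ}
    (hg : eval (Sum.elim u ω) g ≠ 0) (a : MPoly n) :
    ∃ e : ι → ℂ, a - ∑ k, C (e k) * β k ∈ eE I u ω := by
  obtain ⟨N, c, h⟩ := hT a
  refine sp_spans (Ω := Ω) (g := g ^ N) ?_ (c := c) (by rw [map_pow, h])
  rw [map_pow]; exact pow_ne_zero _ hg

/-- `v` is the specialisation of the coordinate vector of `z`. -/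
def Rel (I : Ideal (MPoly n)) {Ω : Type} [Field Ω] [Algebra ℂ Ω]
    [Algebra (BB n (MPoly n ⧸ I)) Ω] [IsScalarTower ℂ (BB n (MPoly n ⧸ I)) Ω]
    {ι : Type} [Fintype ι] (β : ι → MPoly n) (g : PP n) (u : Fin 3 × Fin n → ℂ) (ω : Fin 3 → ℂ)
    (z : Ω) (v : ι → ℂ) : Prop :=
  ∃ (N : ℕ) (c : ι → PP n),
    aeval (uw Ω (xI I)) g ^ N * z = ∑ k, aeval (uw Ω (xI I)) (c k) * kp I Ω (β k) ∧
    ∀ k, eval (Sum.elim u ω) g ^ N * v k = eval (Sum.elim u ω) (c k)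

variable {g : PP n} {u : Fin 3 × Fin n → ℂ} {ω : Fin 3 → ℂ}

lemma Rel.add {z z' : Ω} {v v' : ι → ℂ} (h : Rel I β g u ω z v) (h' : Rel I β g u ω z' v') :
    Rel I β g u ω (z + z') (v + v') := by
  obtain ⟨N, e, he, hv⟩ := h
  obtain ⟨N', e', he', hv'⟩ := h'
  refine ⟨N + N', fun k => g ^ N' * e k + g ^ N * e' k, ?_, fun k => ?_⟩
  · simp only [map_add, map_mul, map_pow, add_mul, Finset.sum_add_distrib, mul_assoc,
      ← Finset.mul_sum]
    rw [← he, ← he']; ring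
  · rw [map_add, map_mul, map_mul, ← hv, ← hv', map_pow, map_pow, Pi.add_apply]; ring

lemma Rel.smul (p : PP n) {z : Ω} {v : ι → ℂ} (h : Rel I β g u ω z v) :
    Rel I β g u ω (aeval (uw Ω (xI I)) p * z) (eval (Sum.elim u ω) p • v) := by
  obtain ⟨N, e, he, hv⟩ := h
  refine ⟨N, fun k => p * e k, ?_, fun k => ?_⟩
  · rw [mul_left_comm, he, Finset.mul_sum]
    exact Finset.sum_congr rfl fun k _ => by rw [map_mul]; ring
  · rw [map_mul, ← hv, Pi.smul_apply, smul_eq_mul]; ring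

lemma Rel.zero : Rel I β g u ω (0 : Ω) 0 := ⟨0, 0, by simp, by simp⟩

lemma Rel.sum {τ : Type} (s : Finset τ) {z : τ → Ω} {v : τ → ι → ℂ}
    (h : ∀ t ∈ s, Rel I β g u ω (z t) (v t)) : Rel I β g u ω (∑ t ∈ s, z t) (∑ t ∈ s, v t) := by
  classical
  induction s using Finset.induction_on with
  | empty => simpa using Rel.zero
  | insert a s ha ih =>
    rw [Finset.sum_insert ha, Finset.sum_insert ha]
    exact (h a (Finset.mem_insert_self _ _)).add
      (ih fun t ht => h t (Finset.mem_insert_of_mem ht))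

lemma Rel.exists (hT : TableFor I Ω β g) (hg : eval (Sum.elim u ω) g ≠ 0) (a : MPoly n) :
    ∃ v, Rel I β g u ω (kp I Ω a) v := by
  obtain ⟨N, c, h⟩ := hT a
  refine ⟨fun k => (eval (Sum.elim u ω) g ^ N)⁻¹ * eval (Sum.elim u ω) (c k), N, c, h, fun k => ?_⟩
  rw [mul_inv_cancel_left₀ (pow_ne_zero _ hg)]

lemma Rel.unique {u0 : Fin 3 × Fin n → ℂ} (hN : NData (xI I) u0)
    (hli : LinearIndependent (KK Ω (xI I)) fun k => kp I Ω (β k))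
    (hg : eval (Sum.elim u ω) g ≠ 0) {z : Ω} {v v' : ι → ℂ} (h : Rel I β g u ω z v)
    (h' : Rel I β g u ω z v') : v = v' := by
  obtain ⟨N, e, he, hv⟩ := h
  obtain ⟨N', e', he', hv'⟩ := h'
  have h1 : ∑ k, (⟨_, aeval_mem_KK (xI I) (g ^ N' * e k - g ^ N * e' k)⟩ : KK Ω (xI I))
      • kp I Ω (β k) = 0 := by
    have : ∀ k, (⟨_, aeval_mem_KK (xI I) (g ^ N' * e k - g ^ N * e' k)⟩ : KK Ω (xI I))
      • kp I Ω (β k) = aeval (uw Ω (xI I)) g ^ N' * (aeval (uw Ω (xI I)) (e k) * kp I Ω (β k))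
        - aeval (uw Ω (xI I)) g ^ N * (aeval (uw Ω (xI I)) (e' k) * kp I Ω (β k)) := by
      intro k
      rw [IntermediateField.smul_def, smul_eq_mul]
      simp only [map_sub, map_mul, map_pow]
      ring
    simp only [this, Finset.sum_sub_distrib, ← Finset.mul_sum]
    rw [← he, ← he']; ring
  have h2 := Fintype.linearIndependent_iff.mp hli _ h1
  funext k
  have h3 : g ^ N' * e k - g ^ N * e' k = 0 := by
    have := congrArg (Subtype.val) (h2 k)
    exact (uw_indep (Ω := Ω) hN) (by rw [map_zero]; exact this)
  have h4 := congrArg (eval (Sum.elim u ω)) h3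
  rw [map_sub, map_mul, map_mul, map_zero, ← hv, ← hv', map_pow, map_pow] at h4
  have h5 : eval (Sum.elim u ω) g ^ N' * eval (Sum.elim u ω) g ^ N * (v k - v' k) = 0 := by
    linear_combination h4
  exact sub_eq_zero.mp ((mul_eq_zero.mp h5).resolve_left
    (mul_ne_zero (pow_ne_zero _ hg) (pow_ne_zero _ hg)))

lemma kp_w (i : Fin 3) : ∑ j, aeval (uw Ω (xI I)) (X (Sum.inl (i, j)) : PP n) * kp I Ω (X j)
    = aeval (uw Ω (xI I)) (X (Sum.inr i) : PP n) := by
  simp only [aeval_X, uw, Function.comp, Sum.elim_inl, Sum.elim_inr, wform, map_sum, map_mul,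
    kp_apply, kap_apply]

lemma Rel.of_mem (hT : TableFor I Ω β g) (hg : eval (Sum.elim u ω) g ≠ 0) {a : MPoly n}
    (ha : a ∈ eE I u ω) : Rel I β g u ω (kp I Ω a) 0 := by
  obtain ⟨b, hb, c, hc, rfl⟩ := Submodule.mem_sup.mp ha
  obtain ⟨h, rfl⟩ := mem_span_range_iff.mp hc
  have hb0 : kp I Ω b = 0 := by
    rw [kp_apply, Ideal.Quotient.eq_zero_iff_mem.mpr hb, map_zero]
  rw [map_add, hb0, zero_add, map_sum]
  have : (0 : ι → ℂ) = ∑ i : Fin 3, 0 := by simp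
  rw [this]
  refine Rel.sum _ fun i _ => ?_
  have h1 : kp I Ω ((lin (fun j => u (i, j)) - C (ω i)) * h i)
      = ∑ j, aeval (uw Ω (xI I)) (C (u (i, j)) - X (Sum.inl (i, j)) : PP n) * kp I Ω (X j * h i)
        + aeval (uw Ω (xI I)) (X (Sum.inr i) - C (ω i) : PP n) * kp I Ω (h i) := by
    have hC : ∀ z : ℂ, kp I Ω (C z) = algebraMap ℂ Ω z := (kp I Ω).commutes
    simp only [map_mul, map_sub, ← kp_w (I := I) (Ω := Ω) i, lin, map_sum, sub_mul,
      Finset.sum_sub_distrib, Finset.sum_mul, hC, aeval_C]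
    simp only [mul_assoc]
    ring
  rw [h1]
  choose v hv using fun j => Rel.exists (Ω := Ω) hT hg (X j * h i)
  obtain ⟨w, hw⟩ := Rel.exists (Ω := Ω) hT hg (h i)
  have h2 := (Rel.sum Finset.univ fun j _ =>
    (hv j).smul (C (u (i, j)) - X (Sum.inl (i, j)) : PP n)).add
      (hw.smul (X (Sum.inr i) - C (ω i) : PP n))
  simpa using h2

/-- A basis at the generic point stays linearly independent after specialisation. -/
theorem table_indep {u0 : Fin 3 × Fin n → ℂ} (hN : NData (xI I) u0)
    (hli : LinearIndependent (KK Ω (xI I)) fun k => kp I Ω (β k))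
    (hT : TableFor I Ω β g) (hg : eval (Sum.elim u ω) g ≠ 0) {e : ι → ℂ}
    (he : ∑ k, C (e k) * β k ∈ eE I u ω) : e = 0 := by
  refine Rel.unique hN hli hg (z := kp I Ω (∑ k, C (e k) * β k)) ⟨0, fun k => C (e k), ?_, ?_⟩
    (Rel.of_mem hT hg he)
  · have hC : ∀ z : ℂ, kp I Ω (C z) = algebraMap ℂ Ω z := (kp I Ω).commutes
    simp [hC]
  · simp

end Table
end RaoGenus

namespace RaoGenus

open MvPolynomial

/-! ### The general linear section is reduced -/

section Unram

/-- An algebra generated by simple roots of polynomials over `ℂ` is reduced, being unramified. -/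
lemma radical_of_simple_roots {n : ℕ} (E : Ideal (MPoly n))
    (h : ∀ j : Fin n, ∃ (f : Polynomial ℂ) (b : MPoly n), Polynomial.aeval (X j : MPoly n) f ∈ E ∧
      b * Polynomial.aeval (X j : MPoly n) (Polynomial.derivative f) - 1 ∈ E) : E.IsRadical := by
  have hD : ∀ a : MPoly n, KaehlerDifferential.D ℂ (MPoly n ⧸ E) (Ideal.Quotient.mk E a) = 0 := by
    intro a
    induction a using MvPolynomial.induction_on with
    | C c => exact Derivation.map_algebraMap _ c
    | add a b ha hb => rw [map_add, map_add, ha, hb, add_zero]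
    | mul_X a j ha =>
      rw [map_mul, Derivation.leibniz, ha, smul_zero, add_zero]
      obtain ⟨f, b, h1, h2⟩ := h j
      have hmk : ∀ p : Polynomial ℂ, Ideal.Quotient.mk E (Polynomial.aeval (X j : MPoly n) p)
          = Polynomial.aeval (Ideal.Quotient.mk E (X j)) p := fun p =>
        (Polynomial.aeval_algHom_apply (Ideal.Quotient.mkₐ ℂ E) (X j) p).symm
      have h3 := (KaehlerDifferential.D ℂ (MPoly n ⧸ E)).map_aeval f (Ideal.Quotient.mk E (X j))
      rw [← hmk, ← hmk, Ideal.Quotient.eq_zero_iff_mem.mpr h1, map_zero] at h3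
      have h4 : Ideal.Quotient.mk E b * Ideal.Quotient.mk E
          (Polynomial.aeval (X j : MPoly n) (Polynomial.derivative f)) = 1 := by
        rw [← map_mul, ← map_one (Ideal.Quotient.mk E)]
        exact Ideal.Quotient.eq.mpr h2
      have h5 := congrArg (fun w => Ideal.Quotient.mk E b • w) h3
      simp only [smul_zero, smul_smul] at h5
      rw [h4, one_smul] at h5
      rw [← h5, smul_zero]
  have : Algebra.FormallyUnramified ℂ (MPoly n ⧸ E) := by
    refine ⟨⟨fun a b => ?_⟩⟩
    have h0 : ∀ w : Ω[MPoly n ⧸ E⁄ℂ], w = 0 := by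
      intro w
      have hw : w ∈ Submodule.span (MPoly n ⧸ E)
          (Set.range (KaehlerDifferential.D ℂ (MPoly n ⧸ E))) := by
        rw [KaehlerDifferential.span_range_derivation]; trivial
      have hle : Submodule.span (MPoly n ⧸ E)
          (Set.range (KaehlerDifferential.D ℂ (MPoly n ⧸ E))) ≤ ⊥ := by
        rw [Submodule.span_le]
        rintro _ ⟨s, rfl⟩
        obtain ⟨a, rfl⟩ := Ideal.Quotient.mk_surjective s
        exact hD a
      exact (Submodule.mem_bot _).mp (hle hw)
    rw [h0 a, h0 b]
  have : IsReduced (MPoly n ⧸ E) := Algebra.FormallyUnramified.isReduced_of_field ℂ _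
  exact (Ideal.isRadical_iff_quotient_reduced E).mpr this

variable {n : ℕ} {I : Ideal (MPoly n)} {Ω : Type} [Field Ω] [Algebra ℂ Ω]
  [Algebra (BB n (MPoly n ⧸ I)) Ω] [IsScalarTower ℂ (BB n (MPoly n ⧸ I)) Ω]
  [I.IsPrime] [IsFractionRing (BB n (MPoly n ⧸ I)) Ω] {u0 : Fin 3 × Fin n → ℂ}

lemma exists_Phi (hN : NData (xI I) u0) (z : Ω) :
    ∃ (q : PP n) (F : TT n), aeval (uw Ω (xI I)) q ≠ 0 ∧
      aeval (uw Ω (xI I)) q * z = Phi I Ω F := by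
  have hz : z ∈ Submodule.span (KK Ω (xI I)) (Set.range (kap n (MPoly n ⧸ I) Ω)) := by
    rw [span_kap hN]; trivial
  induction hz using Submodule.span_induction with
  | mem z hz =>
    obtain ⟨a, rfl⟩ := hz
    obtain ⟨b, rfl⟩ := Ideal.Quotient.mk_surjective a
    exact ⟨1, MvPolynomial.map C b, by simp, by rw [Phi_map, map_one, one_mul]⟩
  | zero => exact ⟨1, 0, by simp, by simp⟩
  | add y z _ _ hy hz =>
    obtain ⟨q, F, hq, hF⟩ := hy
    obtain ⟨q', F', hq', hF'⟩ := hz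
    refine ⟨q * q', C q' * F + C q * F', by rw [map_mul]; exact mul_ne_zero hq hq', ?_⟩
    rw [map_add, map_mul, map_mul, map_mul, Phi_C, Phi_C, ← hF, ← hF']; ring
  | smul k z _ hz =>
    obtain ⟨q, F, hq, hF⟩ := hz
    obtain ⟨p', q', hq', hp'⟩ := KK_ratio (Ω := Ω) (xI I) k.2
    refine ⟨q * q', C p' * F, by rw [map_mul]; exact mul_ne_zero hq hq', ?_⟩
    rw [map_mul, map_mul, Phi_C, ← hF, ← hp', IntermediateField.smul_def, smul_eq_mul]; ring

lemma exists_simple_root (Ω : Type) [Field Ω] [Algebra ℂ Ω]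
    [Algebra (BB n (MPoly n ⧸ I)) Ω] [IsScalarTower ℂ (BB n (MPoly n ⧸ I)) Ω]
    [IsFractionRing (BB n (MPoly n ⧸ I)) Ω] (hN : NData (xI I) u0) (j : Fin n) :
    ∃ g : PP n, g ≠ 0 ∧ ∀ u ω, eval (Sum.elim u ω) g ≠ 0 →
      ∃ (f : Polynomial ℂ) (b : MPoly n), Polynomial.aeval (X j : MPoly n) f ∈ eE I u ω ∧
        b * Polynomial.aeval (X j : MPoly n) (Polynomial.derivative f) - 1 ∈ eE I u ω := by
  have hfd : FiniteDimensional (KK Ω (xI I)) Ω := KK_finite hN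
  set z : Ω := kap n (MPoly n ⧸ I) Ω (xI I j) with hz
  set m := minpoly (KK Ω (xI I)) z with hm
  have hintg : IsIntegral (KK Ω (xI I)) z := (KK_alg hN).isAlgebraic z |>.isIntegral
  have hsep : Polynomial.aeval z (Polynomial.derivative m) ≠ 0 :=
    (minpoly.irreducible hintg).separable.aeval_derivative_ne_zero (minpoly.aeval _ _)
  obtain ⟨q, c, hq, hc⟩ := common_denom (Ω := Ω) (xI I)
    (fun t : Fin (m.natDegree + 1) => (m.coeff t : Ω)) (fun t => (m.coeff t).2)
  set f : Polynomial (PP n) := ∑ t : Fin (m.natDegree + 1), Polynomial.monomial t (c t) with hf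
  set io : PP n →+* Ω := (aeval (uw Ω (xI I)) : PP n →ₐ[ℂ] Ω).toRingHom with hio
  have hioa : ∀ p, io p = aeval (uw Ω (xI I)) p := fun _ => rfl
  have hfm : f.map io = Polynomial.C (io q) * m.map (algebraMap (KK Ω (xI I)) Ω) := by
    conv_rhs => rw [Polynomial.as_sum_range m, Finset.sum_range]
    simp only [hf, Polynomial.map_sum, Polynomial.map_monomial, Finset.mul_sum,
      Polynomial.C_mul_monomial]
    refine Finset.sum_congr rfl fun t _ => ?_
    rw [hioa, hioa, ← hc t]; rfl
  have hPhi : ∀ p : Polynomial (PP n),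
      Phi I Ω (p.eval₂ C (X j)) = (p.map io).eval z := by
    intro p
    rw [Polynomial.hom_eval₂, Phi_X, Polynomial.eval_map]
    congr 1
    exact RingHom.ext fun a => Phi_C a
  have hsp : ∀ (u : Fin 3 × Fin n → ℂ) (ω : Fin 3 → ℂ) (p : Polynomial (PP n)),
      sp n u ω (p.eval₂ C (X j))
        = Polynomial.aeval (X j : MPoly n) (p.map (eval (Sum.elim u ω))) := by
    intro u ω p
    rw [Polynomial.hom_eval₂, sp_X, Polynomial.aeval_def, Polynomial.eval₂_map]
    congr 1
    exact RingHom.ext fun a => sp_C u ω a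
  have h1 : Phi I Ω (f.eval₂ C (X j)) = 0 := by
    rw [hPhi, hfm, Polynomial.eval_mul, Polynomial.eval_map_algebraMap, hm, minpoly.aeval,
      mul_zero]
  have h2 : Phi I Ω (f.derivative.eval₂ C (X j)) ≠ 0 := by
    rw [hPhi, ← Polynomial.derivative_map, hfm, Polynomial.derivative_C_mul, Polynomial.eval_mul,
      Polynomial.derivative_map, Polynomial.eval_map_algebraMap, Polynomial.eval_C]
    exact mul_ne_zero hq hsep
  obtain ⟨q', F, hq', hF⟩ := exists_Phi hN (Phi I Ω (f.derivative.eval₂ C (X j)))⁻¹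
  refine ⟨q', by rintro rfl; simp at hq', fun u ω hg => ?_⟩
  refine ⟨f.map (eval (Sum.elim u ω)), C (eval (Sum.elim u ω) q')⁻¹ * sp n u ω F, ?_, ?_⟩
  · rw [← hsp]; exact sp_mem h1 u ω
  · have h3 : Phi I Ω (F * f.derivative.eval₂ C (X j) - C q') = 0 := by
      rw [map_sub, map_mul, ← hF, Phi_C, mul_assoc, inv_mul_cancel₀ h2, mul_one, sub_self]
    have h4 := Ideal.mul_mem_left _ (C (eval (Sum.elim u ω) q')⁻¹) (sp_mem h3 u ω)
    rw [map_sub, map_mul, hsp, sp_C, mul_sub, ← C_mul, inv_mul_cancel₀ hg, C_1, ← mul_assoc] at h4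
    rw [Polynomial.derivative_map]
    exact h4

/-- The general affine linear section of the cone is reduced. -/
theorem exists_radical (Ω : Type) [Field Ω] [Algebra ℂ Ω]
    [Algebra (BB n (MPoly n ⧸ I)) Ω] [IsScalarTower ℂ (BB n (MPoly n ⧸ I)) Ω]
    [IsFractionRing (BB n (MPoly n ⧸ I)) Ω] (hN : NData (xI I) u0) :
    ∃ g : PP n, g ≠ 0 ∧ ∀ u ω, eval (Sum.elim u ω) g ≠ 0 → (eE I u ω).IsRadical := by
  choose g hg h using exists_simple_root Ω hN
  refine ⟨∏ j, g j, Finset.prod_ne_zero_iff.mpr fun j _ => hg j, fun u ω hne => ?_⟩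
  rw [map_prod] at hne
  exact radical_of_simple_roots _ fun j =>
    h j u ω (Finset.prod_ne_zero_iff.mp hne j (Finset.mem_univ j))

end Unram
end RaoGenus

namespace RaoGenus

open MvPolynomial

/-! ### Choosing general linear forms -/

section Gen

variable {n : ℕ}

lemma exists_eval_ne {σ : Type} {p : MvPolynomial σ ℂ} (hp : p ≠ 0) : ∃ c, eval c p ≠ 0 := by
  by_contra! h
  exact hp (MvPolynomial.funext fun c => by rw [h c, map_zero])

lemma avoid_sat' {I : Ideal (MPoly n)} (hm : ¬ mId n ≤ I) (J : Ideal (MPoly n)) :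
    ∃ Q : MPoly n, Q ≠ 0 ∧ ∀ c : Fin n → ℂ, eval c Q ≠ 0 →
      lin c ≠ 0 ∧ ∀ a, lin c * a ∈ satIdeal J → a ∈ satIdeal J := by
  obtain ⟨Q, hQ, h⟩ := avoid_sat J
  obtain ⟨Q', hQ', h'⟩ := avoid_prime I hm
  refine ⟨Q * Q', mul_ne_zero hQ hQ', fun c hc => ?_⟩
  rw [map_mul] at hc
  refine ⟨fun h0 => h' c (right_ne_zero_of_mul hc) ?_, h c (left_ne_zero_of_mul hc)⟩
  rw [h0]; exact zero_mem _

/-- The coefficients of the linear forms `ω₀N`, `L + ω₁N`, `M + ω₂N`. -/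
def upar {R : Type} [CommRing R] (ω : Fin 3 → R) (a b c : Fin n → R) (p : Fin 3 × Fin n) : R :=
  ![ω 0 * a p.2, c p.2 + ω 1 * a p.2, b p.2 + ω 2 * a p.2] p.1

lemma upar_eval (ω : Fin 3 → ℂ) (a b c : Fin n → MPoly n) (g : PP n) (x : Fin n → ℂ) :
    eval x (bind₁ (Sum.elim (upar (fun i => C (ω i)) a b c) (fun i => C (ω i))) g)
      = eval (Sum.elim (upar ω (fun j => eval x (a j)) (fun j => eval x (b j))
        (fun j => eval x (c j))) ω) g := by
  have h := eval₂Hom_bind₁ (RingHom.id ℂ) x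
    (Sum.elim (upar (fun i => C (ω i)) a b c) (fun i => C (ω i))) g
  change eval₂Hom (RingHom.id ℂ) x _ = eval₂Hom (RingHom.id ℂ) _ g
  rw [h]
  congr 2
  funext q
  rcases q with ⟨i, j⟩ | i
  · fin_cases i <;> simp [upar]
  · simp

lemma eE_upar (I : Ideal (MPoly n)) {ω : Fin 3 → ℂ} (hω : ω 0 ≠ 0) (a b c : Fin n → ℂ) :
    eE I (upar ω a b c) ω = I ⊔ Ideal.span {lin c} ⊔ Ideal.span {lin b}
      ⊔ Ideal.span {lin a - 1} := by
  have e0 : lin (fun j => upar ω a b c (0, j)) = C (ω 0) * lin a := by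
    rw [← lin_smul]; rfl
  have e1 : lin (fun j => upar ω a b c (1, j)) = lin c + C (ω 1) * lin a := by
    rw [← lin_smul, ← lin_add]; rfl
  have e2 : lin (fun j => upar ω a b c (2, j)) = lin b + C (ω 2) * lin a := by
    rw [← lin_smul, ← lin_add]; rfl
  apply le_antisymm
  · refine sup_le (le_sup_left.trans (le_sup_left.trans le_sup_left)) ?_
    have ha : lin a - 1 ∈ I ⊔ Ideal.span {lin c} ⊔ Ideal.span {lin b} ⊔ Ideal.span {lin a - 1} :=
      Ideal.mem_sup_right (Ideal.mem_span_singleton_self _)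
    have hb : lin b ∈ I ⊔ Ideal.span {lin c} ⊔ Ideal.span {lin b} ⊔ Ideal.span {lin a - 1} :=
      Ideal.mem_sup_left (Ideal.mem_sup_right (Ideal.mem_span_singleton_self _))
    have hc : lin c ∈ I ⊔ Ideal.span {lin c} ⊔ Ideal.span {lin b} ⊔ Ideal.span {lin a - 1} :=
      Ideal.mem_sup_left (Ideal.mem_sup_left (Ideal.mem_sup_right
        (Ideal.mem_span_singleton_self _)))
    rw [Ideal.span_le]
    rintro _ ⟨i, rfl⟩
    fin_cases i
    · change lin (fun j => upar ω a b c (0, j)) - C (ω 0)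
        ∈ I ⊔ Ideal.span {lin c} ⊔ Ideal.span {lin b} ⊔ Ideal.span {lin a - 1}
      rw [e0]
      convert Ideal.mul_mem_left _ (C (ω 0)) ha using 1; ring
    · change lin (fun j => upar ω a b c (1, j)) - C (ω 1)
        ∈ I ⊔ Ideal.span {lin c} ⊔ Ideal.span {lin b} ⊔ Ideal.span {lin a - 1}
      rw [e1]
      convert add_mem hc (Ideal.mul_mem_left _ (C (ω 1)) ha) using 1; ring
    · change lin (fun j => upar ω a b c (2, j)) - C (ω 2)
        ∈ I ⊔ Ideal.span {lin c} ⊔ Ideal.span {lin b} ⊔ Ideal.span {lin a - 1}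
      rw [e2]
      convert add_mem hb (Ideal.mul_mem_left _ (C (ω 2)) ha) using 1; ring
  · have hi : ∀ i : Fin 3, lin (fun j => upar ω a b c (i, j)) - C (ω i)
        ∈ eE I (upar ω a b c) ω := fun i =>
      Ideal.mem_sup_right (Ideal.subset_span ⟨i, rfl⟩)
    have h0 := hi 0
    have h1 := hi 1
    have h2 := hi 2
    rw [e0] at h0
    rw [e1] at h1
    rw [e2] at h2
    have ha : lin a - 1 ∈ eE I (upar ω a b c) ω := by
      have h3 := Ideal.mul_mem_left _ (C (ω 0)⁻¹) h0
      rw [mul_sub, ← mul_assoc, ← C_mul, inv_mul_cancel₀ hω, C_1, one_mul] at h3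
      exact h3
    refine sup_le (sup_le (sup_le le_sup_left ?_) ?_) ?_ <;>
      rw [Ideal.span_singleton_le_iff_mem]
    · convert sub_mem h1 (Ideal.mul_mem_left _ (C (ω 1)) ha) using 1; ring
    · convert sub_mem h2 (Ideal.mul_mem_left _ (C (ω 2)) ha) using 1; ring
    · exact ha

/-- Three successive nonzerodivisors cut the cone down to its vertex. -/
lemma fin_of_chain {I : Ideal (MPoly n)} (hI : IsHomogIdeal I) {s π pa : ℤ}
    (hinv : SurfInv I s π pa) {a b c : Fin n → ℂ} (ha0 : lin a ≠ 0) (hb0 : lin b ≠ 0)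
    (ha : ∀ f, lin a * f ∈ satIdeal I → f ∈ satIdeal I)
    (hb : ∀ f, lin b * f ∈ satIdeal (I ⊔ Ideal.span {lin a}) →
      f ∈ satIdeal (I ⊔ Ideal.span {lin a})) :
    (∃ T : ℕ, ∀ t ≥ T, (hN (I ⊔ Ideal.span {lin a} ⊔ Ideal.span {lin b}) t : ℤ) = s) ∧
    (lin c ≠ 0 → (∀ f, lin c * f ∈ satIdeal (I ⊔ Ideal.span {lin a} ⊔ Ideal.span {lin b}) →
      f ∈ satIdeal (I ⊔ Ideal.span {lin a} ⊔ Ideal.span {lin b})) →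
      ∃ k, mId n ^ k ≤ I ⊔ Ideal.span (Set.range ![lin c, lin b, lin a])) := by
  obtain ⟨T, hT⟩ := hN_sect_linear hI hinv (lin_homog a) ha0 ha
  have h1 := IsHomogIdeal.sup_span hI (lin_homog a)
  obtain ⟨T', hT'⟩ := hN_sect_const h1 (c := 1 - π) (T := T)
    (fun t ht => by rw [hT t ht]; ring) (lin_homog b) hb0 hb
  refine ⟨⟨T', hT'⟩, fun hc0 hc => ?_⟩
  obtain ⟨k, hk⟩ := pow_le_of_const (IsHomogIdeal.sup_span h1 (lin_homog b)) hT' (lin_homog c) hc0 hc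
  refine ⟨k, hk.trans (le_of_eq ?_)⟩
  rw [range_three]
  ac_rfl

/-- For every nonzero `g` there are `M`, `N` such that a general `L` meets all the requirements of
finiteness and torsion-freeness, while `(L, M, N)` comes from parameters with `g ≠ 0`. -/
theorem gen_forms {I : Ideal (MPoly n)} (hI : IsSurface I) {s π pa : ℤ}
    (hinv : SurfInv I s π pa) {g : PP n} (hg : g ≠ 0) :
    ∃ (b a : Fin n → ℂ) (Q : MPoly n), Q ≠ 0 ∧ ∀ c : Fin n → ℂ, eval c Q ≠ 0 →
      (∃ k, mId n ^ k ≤ I ⊔ Ideal.span (Set.range ![lin c, lin b, lin a])) ∧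
      TorsFree (sect I (lin c)) ![lin b, lin a] ∧
      (∃ T : ℕ, ∀ t ≥ T, (hN (I ⊔ Ideal.span {lin c} ⊔ Ideal.span {lin b}) t : ℤ) = s) ∧
      ∃ u ω, eval (Sum.elim u ω) g ≠ 0 ∧
        eE I u ω = I ⊔ Ideal.span {lin c} ⊔ Ideal.span {lin b} ⊔ Ideal.span {lin a - 1} := by
  have hm := not_le_of_krull hI
  obtain ⟨p, hp⟩ := exists_eval_ne (mul_ne_zero hg (X_ne_zero (Sum.inr 0) : (X (Sum.inr 0) : PP n) ≠ 0))
  rw [map_mul, eval_X] at hp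
  obtain ⟨ω, hω⟩ : ∃ ω : Fin 3 → ℂ, ω = fun i => p (Sum.inr i) := ⟨_, rfl⟩
  have hω0 : ω 0 ≠ 0 := by rw [hω]; exact right_ne_zero_of_mul hp
  obtain ⟨a', ha'⟩ : ∃ a' : Fin n → ℂ, a' = fun j => (ω 0)⁻¹ * p (Sum.inl (0, j)) := ⟨_, rfl⟩
  obtain ⟨b', hb'⟩ : ∃ b' : Fin n → ℂ, b' = fun j => p (Sum.inl (2, j)) - ω 2 * a' j := ⟨_, rfl⟩
  obtain ⟨c', hc'⟩ : ∃ c' : Fin n → ℂ, c' = fun j => p (Sum.inl (1, j)) - ω 1 * a' j := ⟨_, rfl⟩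
  have hpe : Sum.elim (upar ω a' b' c') ω = p := by
    funext q
    rcases q with ⟨i, j⟩ | i
    · fin_cases i
      · simp [upar, ha', hω0]
      · simp [upar, hc']
      · simp [upar, hb']
    · simp [hω]
  have hg' : eval (Sum.elim (upar ω a' b' c') ω) g ≠ 0 := by
    rw [hpe]; exact left_ne_zero_of_mul hp
  -- choice of `N`
  obtain ⟨Q1, hQ1, h1⟩ := avoid_sat' hm I
  have hG1 : bind₁ (Sum.elim (upar (fun i => C (ω i)) X (fun j => C (b' j)) (fun j => C (c' j)))
      (fun i => C (ω i))) g ≠ (0 : MPoly n) := by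
    intro h0
    have := upar_eval ω X (fun j => C (b' j)) (fun j => C (c' j)) g a'
    rw [h0, map_zero] at this
    simp only [eval_X, eval_C] at this
    exact hg' this.symm
  obtain ⟨a, ha⟩ := exists_eval_ne (mul_ne_zero hQ1 hG1)
  rw [map_mul, upar_eval] at ha
  obtain ⟨ha0, ha1⟩ := h1 a (left_ne_zero_of_mul ha)
  have hga := right_ne_zero_of_mul ha
  simp only [eval_X, eval_C] at hga
  -- choice of `M`
  obtain ⟨Q2, hQ2, h2⟩ := avoid_sat' hm (I ⊔ Ideal.span {lin a})
  have hG2 : bind₁ (Sum.elim (upar (fun i => C (ω i)) (fun j => C (a j)) X (fun j => C (c' j)))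
      (fun i => C (ω i))) g ≠ (0 : MPoly n) := by
    intro h0
    have := upar_eval ω (fun j => C (a j)) X (fun j => C (c' j)) g b'
    rw [h0, map_zero] at this
    simp only [eval_X, eval_C] at this
    exact hga this.symm
  obtain ⟨b, hb⟩ := exists_eval_ne (mul_ne_zero (mul_ne_zero hQ1 hQ2) hG2)
  rw [map_mul, map_mul, upar_eval] at hb
  obtain ⟨hb0, hb1⟩ := h1 b (left_ne_zero_of_mul (left_ne_zero_of_mul hb))
  obtain ⟨_, hb2⟩ := h2 b (right_ne_zero_of_mul (left_ne_zero_of_mul hb))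
  have hgb := right_ne_zero_of_mul hb
  simp only [eval_X, eval_C] at hgb
  -- an auxiliary third form
  obtain ⟨Q3, hQ3, h3⟩ := avoid_sat' hm (I ⊔ Ideal.span {lin a} ⊔ Ideal.span {lin b})
  obtain ⟨y, hy⟩ := exists_eval_ne hQ3
  obtain ⟨hy0, hy1⟩ := h3 y hy
  obtain ⟨k, hk⟩ := (fin_of_chain hI.1 hinv (c := y) ha0 hb0 ha1 hb2).2 hy0 hy1
  have hhom : ∀ i, (![lin y, lin b, lin a] i).IsHomogeneous 1 := by
    intro i
    fin_cases i <;> exact lin_homog _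
  obtain ⟨Y⟩ := exists_lattice hI.1 hhom hk (torsFree_of_finite hI hhom hk)
  -- the conditions on `L`
  obtain ⟨Q4, hQ4, h4⟩ := avoid_sat' hm (I ⊔ Ideal.span {aeval ![lin y, lin b, lin a] Y.π})
  obtain ⟨Q5, hQ5, h5⟩ := avoid_sat' hm (I ⊔ Ideal.span {lin b})
  have hG3 : bind₁ (Sum.elim (upar (fun i => C (ω i)) (fun j => C (a j)) (fun j => C (b j)) X)
      (fun i => C (ω i))) g ≠ (0 : MPoly n) := by
    intro h0
    have := upar_eval ω (fun j => C (a j)) (fun j => C (b j)) X g c'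
    rw [h0, map_zero] at this
    simp only [eval_X, eval_C] at this
    exact hgb this.symm
  refine ⟨b, a, _, mul_ne_zero (mul_ne_zero (mul_ne_zero hQ3 hQ4) hQ5) hG3, fun c hc => ?_⟩
  rw [map_mul, map_mul, map_mul, upar_eval] at hc
  have hgc := right_ne_zero_of_mul hc
  simp only [eval_X, eval_C] at hgc
  have hc := left_ne_zero_of_mul hc
  obtain ⟨hc0, hc3⟩ := h3 c (left_ne_zero_of_mul (left_ne_zero_of_mul hc))
  obtain ⟨_, hc4⟩ := h4 c (right_ne_zero_of_mul (left_ne_zero_of_mul hc))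
  obtain ⟨_, hc5⟩ := h5 c (right_ne_zero_of_mul hc)
  obtain ⟨k', hk'⟩ := (fin_of_chain hI.1 hinv (c := c) ha0 hb0 ha1 hb2).2 hc0 hc3
  refine ⟨⟨k', hk'⟩, ?_, ?_, upar ω a b c, ω, hgc, eE_upar I hω0 a b c⟩
  · exact torsFree_sect hI (lin_homog b) (lin_homog a) (lin_homog c) rfl
      (fun p hp => alg_indep_of_finite hI hhom hk hp) Y hk' hc4
  · obtain ⟨T, hT⟩ := (fin_of_chain hI.1 hinv (c := c) hb0 hc0 hb1 hc5).1
    refine ⟨T, fun t ht => ?_⟩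
    rw [← hT t ht, sup_right_comm]

/-- Finite projections exist. -/
theorem exists_NData {I : Ideal (MPoly n)} (hI : IsSurface I) {s π pa : ℤ}
    (hinv : SurfInv I s π pa) : ∃ u, NData (xI I) u := by
  obtain ⟨b, a, Q, hQ, h⟩ := gen_forms hI hinv (g := 1) one_ne_zero
  obtain ⟨c, hc⟩ := exists_eval_ne hQ
  obtain ⟨⟨k, hk⟩, -⟩ := h c hc
  have hhom : ∀ i, (![lin c, lin b, lin a] i).IsHomogeneous 1 := by
    intro i
    fin_cases i <;> exact lin_homog _
  have hy : ∀ i, yform (xI I) (fun p => ![c, b, a] p.1 p.2) i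
      = Ideal.Quotient.mk I (![lin c, lin b, lin a] i) := by
    intro i
    have h1 : ![lin c, lin b, lin a] i = lin (![c, b, a] i) := by
      fin_cases i <;> rfl
    rw [h1, yform, lin, map_sum]
    refine Finset.sum_congr rfl fun j _ => ?_
    rw [Algebra.smul_def, map_mul]
    rfl
  have hae : (aeval (yform (xI I) (fun p => ![c, b, a] p.1 p.2)) : MPoly 3 →ₐ[ℂ] _)
      = (Ideal.Quotient.mkₐ ℂ I).comp (aeval ![lin c, lin b, lin a]) := by
    apply MvPolynomial.algHom_ext
    intro i
    rw [aeval_X, AlgHom.comp_apply, aeval_X, hy]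
    rfl
  refine ⟨fun p => ![c, b, a] p.1 p.2, ?_, ?_, ?_⟩
  · rw [eq_top_iff]
    rintro f -
    obtain ⟨f, rfl⟩ := Ideal.Quotient.mk_surjective f
    induction f using MvPolynomial.induction_on with
    | C z => exact Subalgebra.algebraMap_mem _ z
    | add f g hf hg => rw [map_add]; exact add_mem hf hg
    | mul_X f j hf => rw [map_mul]; exact mul_mem hf (Algebra.subset_adjoin ⟨j, rfl⟩)
  · rw [algebraicIndependent_iff]
    intro p hp
    rw [hae] at hp
    exact alg_indep_of_finite hI hhom hk (Ideal.Quotient.eq_zero_iff_mem.mp hp)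
  · have h1 := isIntegral_of_finite hI.1 hhom hk
    rw [hae]
    exact h1

end Gen
end RaoGenus

namespace RaoGenus

open MvPolynomial

/-! ### Degree and span of the general zero-dimensional section -/

section Final

variable {n : ℕ}

/-- Dehomogenisation at `N = 1` loses nothing in large degree. -/
lemma exists_homogenise (Q : Ideal (MPoly n)) {N : MPoly n} (hN : N.IsHomogeneous 1) (b : MPoly n)
    {t : ℕ} (ht : b.totalDegree ≤ t) :
    ∃ b' : MPoly n, b'.IsHomogeneous t ∧ b' - b ∈ Q ⊔ Ideal.span {N - 1} := by
  refine ⟨∑ i ∈ Finset.range (b.totalDegree + 1), N ^ (t - i) * homogeneousComponent i b, ?_, ?_⟩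
  · refine IsHomogeneous.sum _ _ _ fun i hi => ?_
    have h1 := (hN.pow (t - i)).mul (homogeneousComponent_isHomogeneous i b)
    have h2 : 1 * (t - i) + i = t := by
      have := Finset.mem_range.mp hi
      omega
    rwa [h2] at h1
  · have h1 : ∑ i ∈ Finset.range (b.totalDegree + 1), N ^ (t - i) * homogeneousComponent i b - b
        = ∑ i ∈ Finset.range (b.totalDegree + 1),
          (N ^ (t - i) * homogeneousComponent i b - homogeneousComponent i b) := by
      rw [Finset.sum_sub_distrib, sum_homogeneousComponent]
    rw [h1]
    exact sum_mem fun i _ => pow_mul_sub_mem Q N _ _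

lemma mk_smul (E : Ideal (MPoly n)) (z : ℂ) (f : MPoly n) :
    Ideal.Quotient.mk E (C z) * Ideal.Quotient.mk E f = z • Ideal.Quotient.mk E f := by
  rw [← map_mul, ← smul_eq_C_mul]
  rfl

lemma card_le_hN {Q : Ideal (MPoly n)} {N : MPoly n} (hN' : N.IsHomogeneous 1) {ι : Type}
    [Fintype ι] (β : ι → MPoly n)
    (hli : ∀ e : ι → ℂ, ∑ k, C (e k) * β k ∈ Q ⊔ Ideal.span {N - 1} → e = 0) :
    ∃ T : ℕ, ∀ t ≥ T, Fintype.card ι ≤ hN Q t := by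
  refine ⟨Finset.univ.sup fun k => (β k).totalDegree, fun t ht => ?_⟩
  choose b hb hb' using fun k => exists_homogenise Q hN' (β k)
    ((Finset.le_sup (f := fun k => (β k).totalDegree) (Finset.mem_univ k)).trans ht)
  have hmem : ∀ k, Ideal.Quotient.mk Q (b k) ∈ degQ Q t := fun k =>
    Submodule.mem_map.mpr ⟨b k, hb k, rfl⟩
  have hlin : LinearIndependent ℂ (fun k => (⟨_, hmem k⟩ : degQ Q t)) := by
    rw [Fintype.linearIndependent_iff]
    intro e he
    have h1 : ∑ k, C (e k) * b k ∈ Q := by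
      rw [← Ideal.Quotient.eq_zero_iff_mem, map_sum]
      have h2 := congrArg Subtype.val he
      rw [AddSubmonoidClass.coe_finset_sum] at h2
      refine Eq.trans (Finset.sum_congr rfl fun k _ => ?_) h2
      rw [map_mul, SetLike.val_smul]
      exact mk_smul _ _ _
    have h3 : ∑ k, C (e k) * β k ∈ Q ⊔ Ideal.span {N - 1} := by
      have h4 : ∑ k, C (e k) * β k = ∑ k, C (e k) * b k - ∑ k, C (e k) * (b k - β k) := by
        rw [← Finset.sum_sub_distrib]
        exact Finset.sum_congr rfl fun k _ => by ring
      rw [h4]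
      exact sub_mem (Ideal.mem_sup_left h1) (sum_mem fun k _ => Ideal.mul_mem_left _ _ (hb' k))
    exact fun k => congrFun (hli e h3) k
  exact hlin.fintype_card_le_finrank

lemma eval_lin (c : Fin n → ℂ) (j : Fin n) : eval (Pi.single j 1) (lin c) = c j := by
  simp only [lin, map_sum, map_mul, eval_C, eval_X]
  rw [Finset.sum_eq_single j]
  · simp
  · intro i _ hi; simp [hi]
  · simp

lemma lin_inj {c d : Fin n → ℂ} (h : lin c = lin d) : c = d := by
  funext j
  rw [← eval_lin c j, h, eval_lin]

/-- The zero-dimensional section of a good configuration spans: a linear form vanishing on it is a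
combination of `L` and `M`. -/
lemma lin_mem_of_good {I : Ideal (MPoly n)} {a b c : Fin n → ℂ}
    (h : Good I (lin c) (lin b) (lin a)) (hnd : Nondeg I) {d : Fin n → ℂ}
    (hd : lin d ∈ I ⊔ Ideal.span {lin c} ⊔ Ideal.span {lin b} ⊔ Ideal.span {lin a - 1}) :
    d ∈ Submodule.span ℂ (Set.range ![c, b]) := by
  have hQ1 := IsHomogIdeal.sup_span h.surf.1 h.hL
  have hQ2 := IsHomogIdeal.sup_span hQ1 h.hM
  obtain ⟨k, hk⟩ := pow_mul_mem_of_mem_sup_sub_one hQ2 h.hN (lin_homog d) hd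
  have hk' : lin a ^ (k + 1) * lin d ∈ I ⊔ Ideal.span {lin c} ⊔ Ideal.span {lin b} := by
    rw [pow_succ', mul_assoc]; exact Ideal.mul_mem_left _ _ hk
  have hom : (lin a ^ (k + 1) * lin d).IsHomogeneous (1 + (k + 1)) := by
    have := (h.hN.pow (k + 1)).mul (lin_homog d)
    have e : 1 * (k + 1) + 1 = 1 + (k + 1) := by ring
    rwa [e] at this
  obtain ⟨f, hf, hm⟩ := exists_homog_of_mem_sup hQ1 h.hM hom hk'
  have hmJ := le_sect hm
  obtain ⟨ρ, hρ⟩ := h.zero hf (b' := lin b ^ k * lin d) (by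
    have := Ideal.mul_mem_left _ (-(lin b ^ k)) hmJ
    convert this using 1; ring)
  have h1 : lin a ^ (k + 1) * (lin d - C ρ * lin b) ∈ sect I (lin c) := by
    have := add_mem hmJ (Ideal.mul_mem_left _ (lin b) hρ)
    convert this using 1; ring
  obtain ⟨ρ', hρ'⟩ := h.linear hnd (by
    rw [← lin_smul]
    exact (lin_homog d).sub (lin_homog _)) (h.pow_N h1)
  have h2 : d = ρ' • c + ρ • b := by
    apply lin_inj
    rw [lin_add, lin_smul, lin_smul, ← hρ']; ring
  rw [h2]
  exact add_mem (Submodule.smul_mem _ _ (Submodule.subset_span ⟨0, rfl⟩))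
    (Submodule.smul_mem _ _ (Submodule.subset_span ⟨1, rfl⟩))

lemma le_card_of_good {I : Ideal (MPoly n)} {a b c : Fin n → ℂ}
    (h : Good I (lin c) (lin b) (lin a)) (hnd : Nondeg I) {κ : Type} [Fintype κ]
    (β : κ → MPoly n) (hs : ∀ j : Fin n, ∃ e : κ → ℂ, X j - ∑ k, C (e k) * β k ∈
      I ⊔ Ideal.span {lin c} ⊔ Ideal.span {lin b} ⊔ Ideal.span {lin a - 1}) :
    n ≤ Fintype.card κ + 2 := by
  obtain ⟨E, hE⟩ : ∃ E, E = I ⊔ Ideal.span {lin c} ⊔ Ideal.span {lin b} ⊔ Ideal.span {lin a - 1} :=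
    ⟨_, rfl⟩
  rw [← hE] at hs
  let T : (Fin n → ℂ) →ₗ[ℂ] MPoly n ⧸ E :=
    { toFun := fun d => Ideal.Quotient.mk E (lin d)
      map_add' := fun d e => by rw [lin_add, map_add]
      map_smul' := fun z d => by
        rw [lin_smul, map_mul, RingHom.id_apply]; exact mk_smul _ _ _ }
  have hT : ∀ d, T d = Ideal.Quotient.mk E (lin d) := fun _ => rfl
  have h1 := LinearMap.finrank_range_add_finrank_ker T
  rw [Module.finrank_fin_fun] at h1
  have h2 : Module.finrank ℂ (LinearMap.ker T) ≤ 2 := by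
    have hle : LinearMap.ker T ≤ Submodule.span ℂ (Set.range ![c, b]) := by
      intro d hd
      apply lin_mem_of_good h hnd
      rw [LinearMap.mem_ker, hT, Ideal.Quotient.eq_zero_iff_mem, hE] at hd
      exact hd
    calc _ ≤ Module.finrank ℂ (Submodule.span ℂ (Set.range ![c, b])) :=
          Submodule.finrank_mono hle
      _ ≤ Fintype.card (Fin 2) := finrank_range_le_card _
      _ = 2 := by simp
  have h3 : Module.finrank ℂ (LinearMap.range T) ≤ Fintype.card κ := by
    have hle : LinearMap.range T ≤
        Submodule.span ℂ (Set.range fun k => Ideal.Quotient.mk E (β k)) := by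
      rw [LinearMap.range_eq_map, ← (Pi.basisFun ℂ (Fin n)).span_eq, Submodule.map_span,
        Submodule.span_le]
      rintro _ ⟨_, ⟨j, rfl⟩, rfl⟩
      rw [Pi.basisFun_apply, hT, lin_single]
      obtain ⟨e, he⟩ := hs j
      rw [Ideal.Quotient.eq.mpr he, map_sum]
      refine sum_mem fun k _ => ?_
      rw [map_mul]
      rw [mk_smul]
      exact Submodule.smul_mem _ _ (Submodule.subset_span ⟨k, rfl⟩)
    have : FiniteDimensional ℂ
        (Submodule.span ℂ (Set.range fun k => Ideal.Quotient.mk E (β k))) :=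
      FiniteDimensional.span_of_finite ℂ (Set.finite_range _)
    exact (Submodule.finrank_mono hle).trans (finrank_range_le_card _)
  omega

variable {I : Ideal (MPoly n)} {s π pa : ℤ}

/-- The conclusions of `gen_forms` in terms of `Good`. -/
lemma good_of_gen (hI : IsSurface I) (hinv : SurfInv I s π pa) {g3 g : PP n} (hg3 : g3 ≠ 0)
    (hrad : ∀ u ω, eval (Sum.elim u ω) g3 ≠ 0 → (eE I u ω).IsRadical) (hg : g ≠ 0) :
    ∃ (b a : Fin n → ℂ) (Q : MPoly n), Q ≠ 0 ∧ ∀ c : Fin n → ℂ, eval c Q ≠ 0 →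
      Good I (lin c) (lin b) (lin a) ∧
      (∃ T : ℕ, ∀ t ≥ T, (hN (I ⊔ Ideal.span {lin c} ⊔ Ideal.span {lin b}) t : ℤ) = s) ∧
      ∃ u ω, eval (Sum.elim u ω) g ≠ 0 ∧
        eE I u ω = I ⊔ Ideal.span {lin c} ⊔ Ideal.span {lin b} ⊔ Ideal.span {lin a - 1} := by
  obtain ⟨b, a, Q, hQ, h⟩ := gen_forms hI hinv (mul_ne_zero hg3 hg)
  refine ⟨b, a, Q, hQ, fun c hc => ?_⟩
  obtain ⟨h1, h2, h3, u, ω, hgu, hE⟩ := h c hc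
  rw [map_mul] at hgu
  refine ⟨⟨hI, lin_homog _, lin_homog _, lin_homog _, h1, h2, ?_⟩, h3, u, ω,
    right_ne_zero_of_mul hgu, hE⟩
  rw [← hE]
  exact hrad u ω (left_ne_zero_of_mul hgu)

variable (Ω : Type) [Field Ω] [Algebra ℂ Ω]
  [Algebra (BB n (MPoly n ⧸ I)) Ω] [IsScalarTower ℂ (BB n (MPoly n ⧸ I)) Ω]
  [I.IsPrime] [IsFractionRing (BB n (MPoly n ⧸ I)) Ω] {u0 : Fin 3 × Fin n → ℂ}

lemma finrank_le_degree (hI : IsSurface I) (hinv : SurfInv I s π pa) (hN : NData (xI I) u0) :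
    (Module.finrank (KK Ω (xI I)) Ω : ℤ) ≤ s := by
  have hfd : FiniteDimensional (KK Ω (xI I)) Ω := KK_finite hN
  obtain ⟨κ, β, -, hsp, hli⟩ := exists_linearIndependent' (KK Ω (xI I))
    (fun a : MPoly n => kp I Ω a)
  have hfin : Finite κ := hli.finite
  cases nonempty_fintype κ
  have htop : Submodule.span (KK Ω (xI I)) (Set.range fun k => kp I Ω (β k)) = ⊤ := by
    refine Eq.trans hsp ?_
    rw [← span_kap (Ω := Ω) hN]
    congr 1
    ext z
    constructor
    · rintro ⟨a, rfl⟩; exact ⟨_, rfl⟩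
    · rintro ⟨a, rfl⟩
      obtain ⟨a, rfl⟩ := Ideal.Quotient.mk_surjective a
      exact ⟨a, rfl⟩
  obtain ⟨g, hg, hT⟩ := exists_table htop
  obtain ⟨b, a, Q, hQ, h⟩ := gen_forms hI hinv hg
  obtain ⟨c, hc⟩ := exists_eval_ne hQ
  obtain ⟨-, -, ⟨T, hTs⟩, u, ω, hgu, hE⟩ := h c hc
  obtain ⟨T', hT'⟩ := card_le_hN (lin_homog a) β (Q := I ⊔ Ideal.span {lin c} ⊔ Ideal.span {lin b})
    (fun e he => by
      rw [← hE] at he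
      exact table_indep hN hli hT hgu he)
  have h1 := hTs (max T T') (le_max_left _ _)
  have h2 := hT' (max T T') (le_max_right _ _)
  have h3 : Module.finrank (KK Ω (xI I)) Ω = Fintype.card κ := by
    rw [← finrank_top, ← htop]
    exact finrank_span_eq_card hli
  rw [h3, ← h1]
  exact_mod_cast h2

lemma le_finrank_span (hI : IsSurface I) (hnd : Nondeg I) (hinv : SurfInv I s π pa)
    (hN : NData (xI I) u0) : n ≤ Module.finrank (KK Ω (xI I))
      (Submodule.span (KK Ω (xI I)) (Set.range fun j => kp I Ω (X j))) + 2 := by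
  have hfd : FiniteDimensional (KK Ω (xI I)) Ω := KK_finite hN
  obtain ⟨κ, idx, -, hsp, hli⟩ := exists_linearIndependent' (KK Ω (xI I))
    (fun j : Fin n => kp I Ω (X j))
  have hfin : Finite κ := hli.finite
  cases nonempty_fintype κ
  obtain ⟨g, c', hg, hc'⟩ := common_span (Ω := Ω) (xI I) (fun k => kp I Ω (X (idx k)))
    (fun j : Fin n => kp I Ω (X j)) (fun j => by
      change _ ∈ Submodule.span _ (Set.range ((fun j : Fin n => kp I Ω (X j)) ∘ idx))
      rw [hsp]; exact Submodule.subset_span ⟨j, rfl⟩)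
  obtain ⟨g3, hg3, hrad⟩ := exists_radical Ω hN
  obtain ⟨b, a, Q, hQ, h⟩ := good_of_gen hI hinv hg3 hrad (g := g) (by rintro rfl; simp at hg)
  obtain ⟨c, hc⟩ := exists_eval_ne hQ
  obtain ⟨hgood, -, u, ω, hgu, hE⟩ := h c hc
  have h1 := le_card_of_good hgood hnd (fun k => X (idx k)) (fun j => by
    rw [← hE]
    exact sp_spans hgu (hc' j))
  rw [← hsp, finrank_span_eq_card hli]
  exact h1

lemma quad_span (hI : IsSurface I) (hnd : Nondeg I) (hinv : SurfInv I s π pa)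
    (hs : s ≤ 2 * (n : ℤ) - 6) (hN : NData (xI I) u0) :
    Submodule.span (KK Ω (xI I)) (Set.range fun p : Fin n × Fin n => kp I Ω (X p.1 * X p.2))
      = ⊤ := by
  have hfd : FiniteDimensional (KK Ω (xI I)) Ω := KK_finite hN
  have h1 := finrank_le_degree Ω hI hinv hN
  have h2 := le_finrank_span Ω hI hnd hinv hN
  have h3 : Module.finrank (KK Ω (xI I)) Ω + 1 ≤ 2 * Module.finrank (KK Ω (xI I))
      (Submodule.span (KK Ω (xI I)) (Set.range fun j => kp I Ω (X j))) := by omega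
  have h4 := sq_eq_top (primitive hN) (W := Submodule.span (KK Ω (xI I))
    (Set.range fun j => kp I Ω (X j))) (by
      intro h0
      rw [h0, finrank_bot] at h3
      omega) h3
  rw [Submodule.span_mul_span] at h4
  rw [← h4]
  congr 1
  ext z
  rw [Set.mem_mul]
  constructor
  · rintro ⟨p, rfl⟩
    exact ⟨_, ⟨p.1, rfl⟩, _, ⟨p.2, rfl⟩, (map_mul _ _ _).symm⟩
  · rintro ⟨_, ⟨i, rfl⟩, _, ⟨j, rfl⟩, rfl⟩
    exact ⟨(i, j), map_mul _ _ _⟩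

/-- For a general hyperplane `L` there are `M`, `N` such that the section is good and imposes
independent conditions on quadrics. -/
theorem good_quad {n : ℕ} {I : Ideal (MPoly n)} {s π pa : ℤ} (Ω : Type) [Field Ω] [Algebra ℂ Ω]
    [Algebra (BB n (MPoly n ⧸ I)) Ω] [IsScalarTower ℂ (BB n (MPoly n ⧸ I)) Ω] [I.IsPrime]
    [IsFractionRing (BB n (MPoly n ⧸ I)) Ω] {u0 : Fin 3 × Fin n → ℂ} (hI : IsSurface I) (hnd : Nondeg I) (hinv : SurfInv I s π pa)
    (hs : s ≤ 2 * (n : ℤ) - 6) (hN : NData (xI I) u0) :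
    ∃ (M N : MPoly n) (Q : MPoly n), Q ≠ 0 ∧ ∀ c : Fin n → ℂ, eval c Q ≠ 0 →
      Good I (lin c) M N ∧ Quad I (lin c) M N := by
  obtain ⟨g, hg, hT⟩ := exists_table (Ω := Ω) (quad_span Ω hI hnd hinv hs hN)
  obtain ⟨g3, hg3, hrad⟩ := exists_radical Ω hN
  obtain ⟨b, a, Q, hQ, h⟩ := good_of_gen hI hinv hg3 hrad hg
  refine ⟨lin b, lin a, Q, hQ, fun c hc => ?_⟩
  obtain ⟨hgood, -, u, ω, hgu, hE⟩ := h c hc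
  refine ⟨hgood, fun f => ?_⟩
  obtain ⟨e, he⟩ := table_spans hT hgu f
  refine ⟨_, ?_, by rw [← hE]; exact he⟩
  refine IsHomogeneous.sum _ _ _ fun p _ => ?_
  have h1 := (isHomogeneous_C (Fin n) (e p)).mul
    ((isHomogeneous_X ℂ p.1).mul (isHomogeneous_X ℂ p.2))
  simpa using h1

end Final

end RaoGenus

/-- Lemma 3.4, second formula.  If moreover `r-1 ≤ s ≤ 2r-4` then
`p_a(S) = -dim_ℂ M(Σ) + ∑_{i≥1} μ_i`, where `M(Σ)` is the Hartshorne–Rao module of the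
general hyperplane section `Σ` of `S` and `μ_i = Δh_S(i) - h_Σ(i)`. -/
theorem statement_13 (r : ℕ) (s π pa : ℤ)
    (hs1 : (r : ℤ) - 1 ≤ s) (hs2 : s ≤ 2 * (r : ℤ) - 4)
    (IS : Ideal (MPoly (r + 1)))
    (hsurf : IsSurface IS) (hnd : Nondeg IS) (hsinv : SurfInv IS s π pa) :
    GenericForms (r + 1) 1 fun L =>
      pa = -(raoDim (sect IS (L 0)) : ℤ)
        + (∑ᶠ i ∈ Set.Ici (1 : ℤ),
              ((hilbZ IS i - hilbZ IS (i - 1)) - hilbZ (sect IS (L 0)) i)) := by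
  have hp : IS.IsPrime := hsurf.2.1
  obtain ⟨u0, hN⟩ := RaoGenus.exists_NData hsurf hsinv
  obtain ⟨M, N, Q, hQ, h⟩ := RaoGenus.good_quad
    (FractionRing (RaoGenus.BB (r + 1) (MPoly (r + 1) ⧸ IS))) hsurf hnd hsinv
    (by push_cast; linarith) hN
  refine ⟨MvPolynomial.rename (fun j => ((0 : Fin 1), j)) Q, ?_, fun c hc => ?_⟩
  · intro h0
    refine hQ (MvPolynomial.rename_injective _ (Prod.mk_right_injective (0 : Fin 1)) ?_)
    rw [h0, map_zero]
  · rw [MvPolynomial.eval_rename] at hc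
    obtain ⟨hgood, hquad⟩ := h (c 0) hc
    exact RaoGenus.genus_of_good hgood hquad hsinv
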